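/- arXiv:1502.07289 — 3 statements merged into one kernel-verified Lean document; each statement's English description precedes it below -/
import Mathlib

section
/- For any integers k ≥ 3 and 1 ≤ j ≤ k−1, with high probability (probability tending to 1 as n → ∞) the random k-uniform hypergraph process on n vertices satisfies τ_c = τ_i, where τ_c is the first step M at which H^k(n,M) is j-connected and τ_i is the first step M at which H^k(n,M) has no isolated j-set. -/
open Filter Asymptotics

open scoped Classical

noncomputable section

/-- The collection of all `k`-element subsets of the vertex set `Fin n`,
    i.e. all potential edges of a `k`-uniform hypergraph on `n` vertices. -/
def kSets (n k : ℕ) : Finset (Finset (Fin n)) :=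
  Finset.powersetCard k (Finset.univ : Finset (Fin n))

/-- The probability that the binomial random `k`-uniform hypergraph `H^k(n,p)`
    (each `k`-set an edge independently with probability `p`) has property `Q`. -/
def binomProb (n k : ℕ) (p : ℝ) (Q : Finset (Finset (Fin n)) → Prop) : ℝ :=
  ∑ H ∈ (kSets n k).powerset,
    (if Q H then p ^ H.card * (1 - p) ^ ((kSets n k).card - H.card) else 0)

/-- The expectation of a real-valued random variable `X` of `H^k(n,p)`. -/
def binomExp (n k : ℕ) (p : ℝ) (X : Finset (Finset (Fin n)) → ℝ) : ℝ :=
  ∑ H ∈ (kSets n k).powerset,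
    p ^ H.card * (1 - p) ^ ((kSets n k).card - H.card) * X H

/-- The degree of a vertex set `J` in the hypergraph with edge set `H`:
    the number of edges containing `J`. -/
def setDegree {n : ℕ} (H : Finset (Finset (Fin n))) (J : Finset (Fin n)) : ℕ :=
  (H.filter (fun e => J ⊆ e)).card

/-- `J` is isolated in `H`: it is contained in no edge. -/
def IsIsolatedSet {n : ℕ} (H : Finset (Finset (Fin n))) (J : Finset (Fin n)) : Prop :=
  ∀ e ∈ H, ¬ J ⊆ e

/-- Two sets `J1`, `J2` are `j`-connected in the hypergraph with edge set `H`: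
    there is a walk of edges from one to the other in which consecutive edges
    intersect in at least `j` vertices. -/
def JConn {n : ℕ} (j : ℕ) (H : Finset (Finset (Fin n))) (J1 J2 : Finset (Fin n)) : Prop :=
  ∃ e1 ∈ H, ∃ e2 ∈ H, J1 ⊆ e1 ∧ J2 ⊆ e2 ∧
    Relation.ReflTransGen (fun e f => e ∈ H ∧ f ∈ H ∧ j ≤ (e ∩ f).card) e1 e2

/-- The hypergraph with edge set `H` is `j`-connected:
    all `j`-sets lie in a single `j`-component, i.e. are pairwise `j`-connected. -/
def JConnectedHG (n j : ℕ) (H : Finset (Finset (Fin n))) : Prop :=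
  ∀ J1 J2 : Finset (Fin n), J1.card = j → J2.card = j → JConn j H J1 J2

/-- `C` is a `j`-component of `H`: a maximal nonempty set of pairwise `j`-connected `j`-sets. -/
def IsJComponent (n j : ℕ) (H : Finset (Finset (Fin n))) (C : Finset (Finset (Fin n))) : Prop :=
  C.Nonempty ∧ (∀ J ∈ C, J.card = j) ∧ (∀ J1 ∈ C, ∀ J2 ∈ C, JConn j H J1 J2) ∧
    ∀ J : Finset (Fin n), J.card = j → (∃ J' ∈ C, JConn j H J J') → J ∈ C

/-- `D_s`: the number of `j`-sets of degree exactly `s`. -/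
def numDegSets (n j s : ℕ) (H : Finset (Finset (Fin n))) : ℕ :=
  ((Finset.powersetCard j (Finset.univ : Finset (Fin n))).filter
    (fun J => setDegree H J = s)).card

/-- The Poisson probability mass function with mean `lam`. -/
def poissonPMF (lam : ℝ) (i : ℕ) : ℝ := Real.exp (-lam) * lam ^ i / (Nat.factorial i)

/-- Total variation distance between the distribution of `D_s` in `H^k(n,p)`
    and the Poisson distribution with mean `lam`. -/
def dTVpoisson (n k j s : ℕ) (p lam : ℝ) : ℝ :=
  (1 / 2) * ∑' i : ℕ, |binomProb n k p (fun H => numDegSets n j s H = i) - poissonPMF lam i|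

/-- The probability that the uniform random hypergraph `H^k(n,M)` (chosen uniformly among
    all `k`-uniform hypergraphs on `Fin n` with exactly `M` edges) has property `Q`. -/
def uniformProb (n k M : ℕ) (Q : Finset (Finset (Fin n)) → Prop) : ℝ :=
  (((Finset.powersetCard M (kSets n k)).filter Q).card : ℝ) /
    ((Finset.powersetCard M (kSets n k)).card : ℝ)


/-- The hypergraph present after `M` steps of the random hypergraph process,
    where the process is encoded by a uniformly random ordering `σ` of all `k`-sets:
    the edge set consists of the first `M` of the `k`-sets in this ordering. -/
def processH (n k : ℕ) (σ : Fin (kSets n k).card ≃ {E // E ∈ kSets n k}) (M : ℕ) :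
    Finset (Finset (Fin n)) :=
  (Finset.univ.filter (fun i : Fin (kSets n k).card => (i : ℕ) < M)).image fun i => (σ i).1

/-- `τ_c`: the first step of the process at which the hypergraph is `j`-connected. -/
def hitConn (n k j : ℕ) (σ : Fin (kSets n k).card ≃ {E // E ∈ kSets n k}) : ℕ :=
  sInf {M : ℕ | JConnectedHG n j (processH n k σ M)}

/-- `τ_i`: the first step of the process at which no isolated `j`-set remains. -/
def hitIso (n k j : ℕ) (σ : Fin (kSets n k).card ≃ {E // E ∈ kSets n k}) : ℕ :=
  sInf {M : ℕ | ∀ J : Finset (Fin n), J.card = j → ¬ IsIsolatedSet (processH n k σ M) J}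

lemma hg_up (N M c : ℕ) (hc : c ≤ N) :
    ((N - c).choose M : ℝ) ≤ N.choose M * Real.exp (-(c * M / N : ℝ)) := by
  induction c with
  | zero => simp
  | succ c ih =>
    have ih := ih (by omega)
    obtain ⟨y, hy⟩ : ∃ y, N - c = y + 1 := ⟨N - c - 1, by omega⟩
    have h1 : N - (c + 1) = y := by omega
    rw [h1]; rw [hy] at ih
    have hN : (0:ℝ) < N := by exact_mod_cast (by omega : 0 < N)
    have hyN : (y:ℝ) + 1 ≤ N := by exact_mod_cast (by omega : y + 1 ≤ N)
    have key : (y.choose M : ℝ) ≤ (y+1).choose M * (1 - M / N) := by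
      by_cases hM : M ≤ y + 1
      · have := Nat.choose_mul_succ_eq y M
        have h2 : (y.choose M : ℝ) * (y + 1) = (y+1).choose M * (y + 1 - M) := by
          have h3 : ((y + 1 - M : ℕ) : ℝ) = (y:ℝ) + 1 - M := by push_cast [Nat.cast_sub hM]; ring
          rw [← h3]; exact_mod_cast this
        have h4 : (y.choose M : ℝ) = (y+1).choose M * (1 - M / (y + 1)) := by
          field_simp; linarith
        rw [h4]
        gcongr
      · rw [Nat.choose_eq_zero_of_lt (by omega), Nat.choose_eq_zero_of_lt (by omega)]; simp
    have h5 : (1 - M / N : ℝ) ≤ Real.exp (-(M / N)) := by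
      have := Real.add_one_le_exp (-(M / N : ℝ)); linarith
    calc (y.choose M : ℝ) ≤ (y+1).choose M * (1 - M / N) := key
      _ ≤ (y+1).choose M * Real.exp (-(M / N)) := by gcongr
      _ ≤ (N.choose M * Real.exp (-(c * M / N : ℝ))) * Real.exp (-(M / N)) := by gcongr
      _ = _ := by rw [mul_assoc, ← Real.exp_add]; congr 2; push_cast; ring

lemma hg_in (N M m : ℕ) (hm : m ≤ M) (hM : M ≤ N) :
    ((N - m).choose (M - m) : ℝ) ≤ N.choose M * (M / N : ℝ) ^ m := by
  induction m with
  | zero => simp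
  | succ m ih =>
    have ih := ih (by omega)
    obtain ⟨y, hy⟩ : ∃ y, N - m = y + 1 := ⟨N - m - 1, by omega⟩
    obtain ⟨x, hx⟩ : ∃ x, M - m = x + 1 := ⟨M - m - 1, by omega⟩
    have h1 : N - (m + 1) = y := by omega
    have h1' : M - (m + 1) = x := by omega
    rw [h1, h1']; rw [hy, hx] at ih
    have hN : (0:ℝ) < N := by exact_mod_cast (by omega : 0 < N)
    have h2 : ((y:ℝ) + 1) * y.choose x = (y+1).choose (x+1) * (x+1) := by
      exact_mod_cast Nat.add_one_mul_choose_eq y x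
    have h3 : (y.choose x : ℝ) = (y+1).choose (x+1) * ((x+1)/(y+1)) := by
      field_simp; linarith
    have h4 : ((x:ℝ)+1)/(y+1) ≤ M / N := by
      rw [div_le_div_iff₀ (by positivity) hN]
      have e1 : (x:ℝ) + 1 + m = M := by exact_mod_cast (by omega : x + 1 + m = M)
      have e2 : (y:ℝ) + 1 + m = N := by exact_mod_cast (by omega : y + 1 + m = N)
      have e3 : (M:ℝ) ≤ N := by exact_mod_cast hM
      have e4 : (0:ℝ) ≤ m := by positivity
      rw [← e1, ← e2] at *
      nlinarith
    rw [h3, pow_succ, ← mul_assoc]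
    gcongr

lemma hg_low (y M r : ℕ) (h : M + r < y) :
    (y.choose M : ℝ) * Real.exp (-(r * M / (y - r - M) : ℝ)) ≤ ((y - r).choose M : ℝ) := by
  have hpos : (0:ℝ) < (y:ℝ) - r - M := by
    have : (M:ℝ) + r < y := by exact_mod_cast h
    linarith
  set x : ℝ := M / (y - r - M) with hx
  have : ∀ i, i ≤ r → (y.choose M : ℝ) * Real.exp (-(i * x)) ≤ ((y - i).choose M : ℝ) := by
    intro i
    induction i with
    | zero => simp
    | succ i ih =>
      intro hi
      have ih := ih (by omega)
      obtain ⟨z, hz⟩ : ∃ z, y - i = z + 1 := ⟨y - i - 1, by omega⟩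
      have h1 : y - (i + 1) = z := by omega
      rw [h1]; rw [hz] at ih
      have hMz : M ≤ z + 1 := by omega
      have h2 : (z.choose M : ℝ) * (z + 1) = (z+1).choose M * (z + 1 - M) := by
        have h3 : ((z + 1 - M : ℕ) : ℝ) = (z:ℝ) + 1 - M := by push_cast [Nat.cast_sub hMz]; ring
        rw [← h3]; exact_mod_cast Nat.choose_mul_succ_eq z M
      have hzr : (y:ℝ) - r ≤ z := by
        have : (y:ℝ) ≤ z + r := by exact_mod_cast (by omega : y ≤ z + r)
        linarith
      have h4 : Real.exp (-x) ≤ (z + 1 - M) / (z + 1) := by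
        rw [Real.exp_neg]
        have hp : (0:ℝ) < z + 1 - M := by linarith
        rw [inv_le_comm₀ (Real.exp_pos _) (by positivity), inv_div]
        have h6 := Real.add_one_le_exp x
        have h7 : (z + 1 : ℝ) / (z + 1 - M) ≤ x + 1 := by
          have : (z + 1 : ℝ) / (z + 1 - M) = M / (z + 1 - M) + 1 := by field_simp; ring
          rw [this, hx]
          gcongr
          linarith
        linarith
      have h5 : (z.choose M : ℝ) = (z+1).choose M * ((z + 1 - M) / (z + 1)) := by
        field_simp; linarith
      rw [h5]
      calc (y.choose M : ℝ) * Real.exp (-((i+1 : ℕ) * x)) 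
          = (y.choose M : ℝ) * Real.exp (-(i * x)) * Real.exp (-x) := by
            rw [mul_assoc, ← Real.exp_add]; congr 2; push_cast; ring
        _ ≤ _ := by gcongr
  have := this r le_rfl
  rw [mul_div_assoc]
  exact this

lemma hg_lc (x y M r : ℕ) (hxy : x ≤ y) (hr : r ≤ x) :
    (x - r).choose M * y.choose M ≤ x.choose M * (y - r).choose M := by
  induction r with
  | zero => simp
  | succ r ih =>
    have ih := ih (by omega)
    obtain ⟨u, hu⟩ : ∃ u, x - r = u + 1 := ⟨x - r - 1, by omega⟩
    obtain ⟨v, hv⟩ : ∃ v, y - r = v + 1 := ⟨y - r - 1, by omega⟩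
    rw [show x - (r+1) = u by omega, show y - (r+1) = v by omega]
    rw [hu, hv] at ih
    have e1 := Nat.choose_mul_succ_eq u M
    have e2 := Nat.choose_mul_succ_eq v M
    by_cases hM : M ≤ u + 1
    · have huv : u ≤ v := by omega
      obtain ⟨a, ha⟩ : ∃ a, u + 1 = M + a := ⟨u + 1 - M, by omega⟩
      obtain ⟨b, hb⟩ : ∃ b, v + 1 = M + b := ⟨v + 1 - M, by omega⟩
      rw [show u + 1 - M = a by omega] at e1
      rw [show v + 1 - M = b by omega] at e2
      have hab : a * (v+1) ≤ b * (u+1) := by rw [ha, hb]; nlinarith [show a ≤ b by omega]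
      have : (u+1) * (v+1) * (u.choose M * y.choose M) ≤ (u+1)*(v+1) * (x.choose M * v.choose M) := by
        calc (u+1) * (v+1) * (u.choose M * y.choose M) 
            = (u.choose M * (u+1)) * (v+1) * y.choose M := by ring
          _ = ((u+1).choose M * y.choose M) * (a * (v+1)) := by rw [e1]; ring
          _ ≤ (x.choose M * (v+1).choose M) * (b * (u+1)) := by gcongr
          _ = x.choose M * ((v+1).choose M * b) * (u+1) := by ring
          _ = _ := by rw [← e2]; ring
      exact Nat.le_of_mul_le_mul_left this (by positivity)
    · rw [Nat.choose_eq_zero_of_lt (show u < M by omega)]; simp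

def CutConn {α : Type*} (nbr : α → Finset α) (Q A : Finset α) : Prop :=
  ∀ B ⊆ A, B.Nonempty → (∃ b ∈ B, b ∈ Q) ∨ ∃ a ∈ A, a ∉ B ∧ ∃ b ∈ B, b ∈ nbr a

def RootConn {α : Type*} (nbr : α → Finset α) (e : α) (A : Finset α) : Prop :=
  ∀ B ⊆ A, B.Nonempty → e ∉ B → ∃ a ∈ A, a ∉ B ∧ ∃ b ∈ B, b ∈ nbr a

lemma pow_bound (D : ℕ) (hD : 1 ≤ D) : (1 + 1 / (D:ℝ)) ^ D ≤ 3 := by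
  have h : (0:ℝ) < D := by exact_mod_cast hD
  have h1 : (1 + 1 / (D:ℝ)) ≤ Real.exp (1 / D) := by
    have := Real.add_one_le_exp (1 / (D:ℝ)); linarith
  calc (1 + 1 / (D:ℝ)) ^ D ≤ (Real.exp (1 / D)) ^ D := by gcongr
    _ = Real.exp 1 := by rw [← Real.exp_nat_mul]; congr 1; field_simp
    _ ≤ 3 := by have := Real.exp_one_lt_d9; linarith

lemma fam_count {α : Type*} (V : Finset α) (nbr : α → Finset α) (D : ℕ) (hD : 1 ≤ D)
    (hn : ∀ a ∈ V, (nbr a).card ≤ D) (m : ℕ) : ∀ Q : Finset α,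
    (((V.powersetCard m).filter (CutConn nbr Q)).card : ℝ) ≤
      (1 + 1 / (D:ℝ)) ^ Q.card * (3 * D) ^ m := by
  have hDpos : (0:ℝ) < D := by exact_mod_cast hD
  have ha1 : (1:ℝ) ≤ 1 + 1 / (D:ℝ) := by
    have : (0:ℝ) ≤ 1 / (D:ℝ) := by positivity
    linarith
  induction m with
  | zero =>
    intro Q
    calc (((V.powersetCard 0).filter (CutConn nbr Q)).card : ℝ) ≤ ((V.powersetCard 0).card : ℝ) := by
          exact_mod_cast Finset.card_filter_le _ _
      _ = 1 := by simp
      _ ≤ _ := by simpa using one_le_pow₀ ha1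
  | succ m ihm =>
    intro Q
    induction Q using Finset.induction_on with
    | empty =>
      have : (V.powersetCard (m+1)).filter (CutConn nbr ∅) = ∅ := by
        apply Finset.filter_eq_empty_iff.2
        intro A hA hc
        rw [Finset.mem_powersetCard] at hA
        have hne : A.Nonempty := Finset.card_pos.1 (by omega)
        rcases hc A le_rfl hne with ⟨b, _, hb⟩ | ⟨a, ha, hna, _⟩
        · simp at hb
        · exact hna ha
      rw [this]; simp only [Finset.card_empty, Nat.cast_zero]; positivity
    | insert u Q hu ihQ =>
      by_cases huV : u ∈ V
      · have hsub : (((V.powersetCard (m+1)).filter (CutConn nbr (insert u Q))).card : ℝ) ≤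
            (((V.powersetCard (m+1)).filter (CutConn nbr Q)).card : ℝ) +
            (((V.powersetCard m).filter (CutConn nbr (Q ∪ nbr u))).card : ℝ) := by
          have h1 : (V.powersetCard (m+1)).filter (CutConn nbr (insert u Q)) ⊆
              (V.powersetCard (m+1)).filter (CutConn nbr Q) ∪
              ((V.powersetCard m).filter (CutConn nbr (Q ∪ nbr u))).image (insert u) := by
            intro A hA
            rw [Finset.mem_filter, Finset.mem_powersetCard] at hA
            obtain ⟨⟨hAV, hAc⟩, hcc⟩ := hA
            rw [Finset.mem_union]
            by_cases huA : u ∈ A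
            · right
              rw [Finset.mem_image]
              refine ⟨A.erase u, ?_, Finset.insert_erase huA⟩
              rw [Finset.mem_filter, Finset.mem_powersetCard]
              refine ⟨⟨(Finset.erase_subset _ _).trans hAV, by rw [Finset.card_erase_of_mem huA, hAc]; rfl⟩, ?_⟩
              intro B hB hBn
              have huB : u ∉ B := fun h => by simpa using hB h
              rcases hcc B (hB.trans (Finset.erase_subset _ _)) hBn with ⟨b, hb, hbQ⟩ | ⟨a, ha, hna, b, hb, hab⟩
              · left
                refine ⟨b, hb, ?_⟩
                rw [Finset.mem_insert] at hbQ
                rcases hbQ with rfl | h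
                · exact absurd hb huB
                · exact Finset.mem_union_left _ h
              · by_cases hau : a = u
                · subst hau
                  exact Or.inl ⟨b, hb, Finset.mem_union_right _ hab⟩
                · exact Or.inr ⟨a, Finset.mem_erase.2 ⟨hau, ha⟩, hna, b, hb, hab⟩
            · left
              rw [Finset.mem_filter, Finset.mem_powersetCard]
              refine ⟨⟨hAV, hAc⟩, ?_⟩
              intro B hB hBn
              rcases hcc B hB hBn with ⟨b, hb, hbQ⟩ | h
              · left
                refine ⟨b, hb, ?_⟩
                rw [Finset.mem_insert] at hbQ
                rcases hbQ with rfl | h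
                · exact absurd (hB hb) huA
                · exact h
              · exact Or.inr h
          have h2 := (Finset.card_le_card h1).trans (Finset.card_union_le _ _)
          have h3 : (((V.powersetCard m).filter (CutConn nbr (Q ∪ nbr u))).image (insert u)).card ≤ _ := 
            Finset.card_image_le
          exact_mod_cast h2.trans (by omega)
        have hb2 := ihm (Q ∪ nbr u)
        have hcard : (Q ∪ nbr u).card ≤ Q.card + D := (Finset.card_union_le _ _).trans (by have := hn u huV; omega)
        have hb3 : (1 + 1 / (D:ℝ)) ^ (Q ∪ nbr u).card ≤ (1 + 1 / (D:ℝ)) ^ Q.card * 3 := by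
          calc (1 + 1 / (D:ℝ)) ^ (Q ∪ nbr u).card ≤ (1 + 1 / (D:ℝ)) ^ (Q.card + D) := pow_le_pow_right₀ ha1 hcard
            _ = (1 + 1 / (D:ℝ)) ^ Q.card * (1 + 1 / (D:ℝ)) ^ D := pow_add _ _ _
            _ ≤ _ := by gcongr; exact pow_bound D hD
        rw [Finset.card_insert_of_notMem hu]
        calc _ ≤ _ := hsub
          _ ≤ (1 + 1 / (D:ℝ)) ^ Q.card * (3 * D) ^ (m+1) + (1 + 1 / (D:ℝ)) ^ Q.card * 3 * (3 * D) ^ m := by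
            refine add_le_add ihQ (hb2.trans ?_)
            gcongr
          _ = _ := by
            have hinv : (1 / (D:ℝ)) * (3 * D) = 3 := by field_simp
            generalize (1 / (D:ℝ)) = w at *
            linear_combination (-((1 + w) ^ Q.card * (3 * (D:ℝ)) ^ m)) * hinv
      · have hsub : (V.powersetCard (m+1)).filter (CutConn nbr (insert u Q)) ⊆
            (V.powersetCard (m+1)).filter (CutConn nbr Q) := by
          intro A hA
          rw [Finset.mem_filter, Finset.mem_powersetCard] at *
          obtain ⟨⟨hAV, hAc⟩, hcc⟩ := hA
          refine ⟨⟨hAV, hAc⟩, ?_⟩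
          intro B hB hBn
          rcases hcc B hB hBn with ⟨b, hb, hbQ⟩ | h
          · left
            refine ⟨b, hb, ?_⟩
            rw [Finset.mem_insert] at hbQ
            rcases hbQ with rfl | h
            · exact absurd (hAV (hB hb)) huV
            · exact h
          · exact Or.inr h
        calc _ ≤ (((V.powersetCard (m+1)).filter (CutConn nbr Q)).card : ℝ) := by
              exact_mod_cast Finset.card_le_card hsub
          _ ≤ _ := ihQ
          _ ≤ _ := by
            gcongr
            exact Finset.subset_insert _ _

lemma root_count {α : Type*} (V : Finset α) (nbr : α → Finset α) (D : ℕ) (hD : 1 ≤ D)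
    (hn : ∀ a ∈ V, (nbr a).card ≤ D) (m : ℕ) (e : α) (he : e ∈ V) :
    (((V.powersetCard (m+1)).filter (fun T => e ∈ T ∧ RootConn nbr e T)).card : ℝ) ≤
      3 * (3 * D) ^ m := by
  have h1 : (V.powersetCard (m+1)).filter (fun T => e ∈ T ∧ RootConn nbr e T) ⊆
      ((V.powersetCard m).filter (CutConn nbr (nbr e))).image (insert e) := by
    intro A hA
    rw [Finset.mem_filter, Finset.mem_powersetCard] at hA
    obtain ⟨⟨hAV, hAc⟩, heA, hr⟩ := hA
    rw [Finset.mem_image]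
    refine ⟨A.erase e, ?_, Finset.insert_erase heA⟩
    rw [Finset.mem_filter, Finset.mem_powersetCard]
    refine ⟨⟨(Finset.erase_subset _ _).trans hAV, by rw [Finset.card_erase_of_mem heA, hAc]; rfl⟩, ?_⟩
    intro B hB hBn
    have huB : e ∉ B := fun h => by simpa using hB h
    obtain ⟨a, ha, hna, b, hb, hab⟩ := hr B (hB.trans (Finset.erase_subset _ _)) hBn huB
    by_cases hau : a = e
    · subst hau
      exact Or.inl ⟨b, hb, hab⟩
    · exact Or.inr ⟨a, Finset.mem_erase.2 ⟨hau, ha⟩, hna, b, hb, hab⟩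
  have h2 := (Finset.card_le_card h1).trans Finset.card_image_le
  have h3 := fam_count V nbr D hD hn m (nbr e)
  have ha1 : (1:ℝ) ≤ 1 + 1 / (D:ℝ) := by
    have : (0:ℝ) ≤ 1 / (D:ℝ) := by positivity
    linarith
  calc _ ≤ (((V.powersetCard m).filter (CutConn nbr (nbr e))).card : ℝ) := by exact_mod_cast h2
    _ ≤ _ := h3
    _ ≤ _ := by
      gcongr
      exact (pow_le_pow_right₀ ha1 (hn e he)).trans (pow_bound D hD)

/-- all `j`-sets contained in some edge of `T` -/
def shad {n : ℕ} (j : ℕ) (T : Finset (Finset (Fin n))) : Finset (Finset (Fin n)) :=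
  (kSets n j).filter (fun J => ∃ e ∈ T, J ⊆ e)

/-- `k`-sets crossing the family `S` of `j`-sets -/
def crossing {n : ℕ} (k j : ℕ) (S : Finset (Finset (Fin n))) : Finset (Finset (Fin n)) :=
  (kSets n k).filter (fun E => (∃ J ∈ S, J ⊆ E) ∧ ∃ J ∈ kSets n j, J ∉ S ∧ J ⊆ E)

def nbrs {n : ℕ} (k j : ℕ) (a : Finset (Fin n)) : Finset (Finset (Fin n)) :=
  (kSets n k).filter (fun f => j ≤ (a ∩ f).card)

def NoIso (n j : ℕ) (H : Finset (Finset (Fin n))) : Prop :=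
  ∀ J : Finset (Fin n), J.card = j → ¬ IsIsolatedSet H J

lemma mem_kSets {n k : ℕ} {E : Finset (Fin n)} : E ∈ kSets n k ↔ E.card = k := by
  simp [kSets, Finset.mem_powersetCard]

lemma shad_mono {n j : ℕ} {T T' : Finset (Finset (Fin n))} (h : T ⊆ T') : shad j T ⊆ shad j T' := by
  intro J hJ
  simp only [shad, Finset.mem_filter] at *
  obtain ⟨h1, e, he, h2⟩ := hJ
  exact ⟨h1, e, h he, h2⟩

lemma exists_common {n j : ℕ} {e f : Finset (Fin n)} (h : j ≤ (e ∩ f).card) :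
    ∃ J ∈ kSets n j, J ⊆ e ∧ J ⊆ f := by
  obtain ⟨J, hJ, hc⟩ := Finset.exists_subset_card_eq h
  exact ⟨J, mem_kSets.2 hc, hJ.trans Finset.inter_subset_left, hJ.trans Finset.inter_subset_right⟩

lemma le_inter_of {n j : ℕ} {e f J : Finset (Fin n)} (hJ : J ∈ kSets n j) (h1 : J ⊆ e) (h2 : J ⊆ f) :
    j ≤ (e ∩ f).card := by
  rw [← mem_kSets.1 hJ]
  exact Finset.card_le_card (Finset.subset_inter h1 h2)

/-- skeleton extraction from a component -/
lemma skeleton {n k j : ℕ} (hjk : j ≤ k) (H : Finset (Finset (Fin n))) (hH : H ⊆ kSets n k)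
    (e : Finset (Fin n)) (he : e ∈ H) (C : Finset (Finset (Fin n)))
    (hC : C = H.filter (fun f => Relation.ReflTransGen
      (fun e f => e ∈ H ∧ f ∈ H ∧ j ≤ (e ∩ f).card) e f)) :
    ∃ T ⊆ H, e ∈ T ∧ RootConn (nbrs k j) e T ∧ T.card ≤ (shad j T).card ∧ shad j T = shad j C := by
  have heC : e ∈ C := by rw [hC]; simp [he]; exact Relation.ReflTransGen.refl
  have hCH : C ⊆ H := by rw [hC]; exact Finset.filter_subset _ _
  let P := C.powerset.filter (fun T => e ∈ T ∧ RootConn (nbrs k j) e T ∧ T.card ≤ (shad j T).card)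
  have hne : P.Nonempty := by
    refine ⟨{e}, ?_⟩
    simp only [P, Finset.mem_filter, Finset.mem_powerset, Finset.singleton_subset_iff]
    refine ⟨heC, by simp, ?_, ?_⟩
    · intro B hB hBn heB
      obtain ⟨b, hb⟩ := hBn
      have := hB hb
      rw [Finset.mem_singleton] at this
      exact absurd (this ▸ hb) heB
    · rw [Finset.card_singleton]
      apply Finset.card_pos.2
      obtain ⟨J, hJ, h1, _⟩ := exists_common (j := j) (e := e) (f := e)
        (by rw [Finset.inter_self, mem_kSets.1 (hH he)]; exact hjk)
      exact ⟨J, by simp only [shad, Finset.mem_filter]; exact ⟨hJ, e, by simp, h1⟩⟩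
  obtain ⟨T, hT, hmax⟩ := Finset.exists_max_image P Finset.card hne
  simp only [P, Finset.mem_filter, Finset.mem_powerset] at hT hmax
  obtain ⟨hTC, heT, hroot, hcard⟩ := hT
  refine ⟨T, hTC.trans hCH, heT, hroot, hcard, ?_⟩
  apply Finset.Subset.antisymm (shad_mono hTC)
  have key : ∀ f, Relation.ReflTransGen
      (fun e f => e ∈ H ∧ f ∈ H ∧ j ≤ (e ∩ f).card) e f → shad j {f} ⊆ shad j T := by
    intro f hf
    induction hf with
    | refl => exact shad_mono (by simpa using heT)
    | @tail g' g hg' hstep ih =>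
      by_contra hcon
      obtain ⟨hg'H, hgH, hcap⟩ := hstep
      obtain ⟨J, hJ, hJg', hJg⟩ := exists_common hcap
      have hJT : J ∈ shad j T := ih (by simp only [shad, Finset.mem_filter]; exact ⟨hJ, g', by simp, hJg'⟩)
      simp only [shad, Finset.mem_filter] at hJT
      obtain ⟨_, t, htT, hJt⟩ := hJT
      have hgT : g ∉ T := fun h => hcon (shad_mono (by simpa using h))
      have hgC : g ∈ C := by
        rw [hC, Finset.mem_filter]; exact ⟨hgH, hg'.tail ⟨hg'H, hgH, hcap⟩⟩
      have := hmax (insert g T) ⟨Finset.insert_subset hgC hTC, Finset.mem_insert_of_mem heT, ?_, ?_⟩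
      · rw [Finset.card_insert_of_notMem hgT] at this; omega
      · intro B hB hBn heB
        by_cases hBe : (B.erase g).Nonempty
        · obtain ⟨a, ha, hna, b, hb, hab⟩ := hroot (B.erase g) (by
            intro x hx
            rw [Finset.mem_erase] at hx
            have := hB hx.2
            rw [Finset.mem_insert] at this
            tauto) hBe (fun h => heB (Finset.mem_of_mem_erase h))
          refine ⟨a, Finset.mem_insert_of_mem ha, fun h => hna (Finset.mem_erase.2 ⟨?_, h⟩), b,
            Finset.mem_of_mem_erase hb, hab⟩
          rintro rfl; exact hgT ha
        · rw [Finset.not_nonempty_iff_eq_empty, Finset.erase_eq_empty_iff] at hBe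
          have hBg : B = {g} := by
            rcases hBe with h | h
            · exact absurd h hBn.ne_empty
            · exact h
          subst hBg
          refine ⟨t, Finset.mem_insert_of_mem htT, ?_, g, by simp, ?_⟩
          · rw [Finset.mem_singleton]; rintro rfl; exact hgT htT
          · simp only [nbrs, Finset.mem_filter]
            exact ⟨hH hgH, le_inter_of hJ hJt hJg⟩
      · rw [Finset.card_insert_of_notMem hgT]
        have : shad j T ⊂ shad j (insert g T) := by
          refine (Finset.ssubset_iff_of_subset (shad_mono (Finset.subset_insert _ _))).2 ?_
          rw [Finset.not_subset] at hcon
          obtain ⟨x, hx, hxT⟩ := hcon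
          exact ⟨x, shad_mono (by simp) hx, hxT⟩
        have := Finset.card_lt_card this
        omega
  intro J hJ
  simp only [shad, Finset.mem_filter] at hJ
  obtain ⟨h1, f, hf, h2⟩ := hJ
  rw [hC, Finset.mem_filter] at hf
  apply key f hf.2
  simp only [shad, Finset.mem_filter]
  exact ⟨h1, f, by simp, h2⟩

lemma shad_crossing {n k j : ℕ} (H : Finset (Finset (Fin n))) 
    (e : Finset (Fin n)) (C : Finset (Finset (Fin n)))
    (hC : C = H.filter (fun f => Relation.ReflTransGen
      (fun e f => e ∈ H ∧ f ∈ H ∧ j ≤ (e ∩ f).card) e f)) :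
    Disjoint (crossing k j (shad j C)) H := by
  rw [Finset.disjoint_left]
  intro E hE hEH
  simp only [crossing, Finset.mem_filter] at hE
  obtain ⟨_, ⟨J, hJ, hJE⟩, J', hJ', hJ'n, hJ'E⟩ := hE
  simp only [shad, Finset.mem_filter] at hJ
  obtain ⟨hJk, f, hf, hJf⟩ := hJ
  rw [hC, Finset.mem_filter] at hf
  apply hJ'n
  simp only [shad, Finset.mem_filter]
  refine ⟨hJ', E, ?_, hJ'E⟩
  rw [hC, Finset.mem_filter]
  exact ⟨hEH, hf.2.tail ⟨hf.1, hEH, le_inter_of hJk hJf hJE⟩⟩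

lemma structure_lemma {n k j : ℕ} (hjk : j < k) (H : Finset (Finset (Fin n)))
    (hH : H ⊆ kSets n k) (hI : NoIso n j H) (hnc : ¬ JConnectedHG n j H) :
    ∃ e ∈ kSets n k, ∃ T ⊆ H, e ∈ T ∧ RootConn (nbrs k j) e T ∧ T.card ≤ (shad j T).card ∧
      2 * (shad j T).card ≤ (kSets n j).card ∧ k.choose j ≤ (shad j T).card ∧
      Disjoint (crossing k j (shad j T)) H := by
  simp only [JConnectedHG] at hnc
  push Not at hnc
  obtain ⟨J1, J2, h1, h2, hnj⟩ := hnc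
  have hI1 := hI J1 h1
  have hI2 := hI J2 h2
  simp only [IsIsolatedSet] at hI1 hI2
  push Not at hI1 hI2
  obtain ⟨e1, he1, hs1⟩ := hI1
  obtain ⟨e2, he2, hs2⟩ := hI2
  let R := fun e f : Finset (Fin n) => e ∈ H ∧ f ∈ H ∧ j ≤ (e ∩ f).card
  have hsymm : Std.Symm R := by
    refine ⟨fun a b h => ?_⟩
    exact ⟨h.2.1, h.1, by rw [Finset.inter_comm]; exact h.2.2⟩
  have hnr : ¬ Relation.ReflTransGen R e1 e2 := fun h => hnj ⟨e1, he1, e2, he2, hs1, hs2, h⟩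
  let C := fun e => H.filter (fun f => Relation.ReflTransGen R e f)
  have hdisj : Disjoint (shad j (C e1)) (shad j (C e2)) := by
    rw [Finset.disjoint_left]
    intro J hJ1 hJ2
    simp only [shad, Finset.mem_filter, C] at hJ1 hJ2
    obtain ⟨hJk, f1, ⟨hf1H, hf1⟩, hJf1⟩ := hJ1
    obtain ⟨_, f2, ⟨hf2H, hf2⟩, hJf2⟩ := hJ2
    apply hnr
    have hstep : R f1 f2 := ⟨hf1H, hf2H, le_inter_of hJk hJf1 hJf2⟩
    exact (hf1.tail hstep).trans ((Relation.ReflTransGen.stdSymm (r := R)).symm _ _ hf2)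
  have hsum : (shad j (C e1)).card + (shad j (C e2)).card ≤ (kSets n j).card := by
    rw [← Finset.card_union_of_disjoint hdisj]
    apply Finset.card_le_card
    apply Finset.union_subset <;> exact Finset.filter_subset _ _
  obtain ⟨e, he, hhalf⟩ : ∃ e ∈ H, 2 * (shad j (C e)).card ≤ (kSets n j).card := by
    by_cases h : (shad j (C e1)).card ≤ (shad j (C e2)).card
    · exact ⟨e1, he1, by omega⟩
    · exact ⟨e2, he2, by omega⟩
  obtain ⟨T, hTH, heT, hroot, hcard, hsh⟩ := skeleton (le_of_lt hjk) H hH e he (C e) rfl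
  refine ⟨e, hH he, T, hTH, heT, hroot, hcard, by rw [hsh]; exact hhalf, ?_, ?_⟩
  · have hek := mem_kSets.1 (hH he)
    have : e.powersetCard j ⊆ shad j T := by
      intro J hJ
      rw [Finset.mem_powersetCard] at hJ
      simp only [shad, Finset.mem_filter]
      exact ⟨mem_kSets.2 hJ.2, e, heT, hJ.1⟩
    have := Finset.card_le_card this
    rwa [Finset.card_powersetCard, hek] at this
  · rw [hsh]
    exact shad_crossing H e (C e) rfl

lemma card_kSets (n k : ℕ) : (kSets n k).card = n.choose k := by simp [kSets]

def up {n : ℕ} (k : ℕ) (W : Finset (Fin n)) : Finset (Finset (Fin n)) :=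
  (kSets n k).filter (fun E => W ⊆ E)

lemma mem_up {n k : ℕ} {W E : Finset (Fin n)} : E ∈ up k W ↔ E.card = k ∧ W ⊆ E := by
  simp [up, mem_kSets]

lemma card_up {n k : ℕ} (W : Finset (Fin n)) (h : W.card ≤ k) :
    (up k W).card = (n - W.card).choose (k - W.card) := by
  have : (n - W.card) = (Finset.univ \ W).card := by
    rw [Finset.card_univ_sdiff]; simp
  rw [this, ← Finset.card_powersetCard]
  refine Finset.card_nbij' (fun E => E \ W) (fun E => E ∪ W) ?_ ?_ ?_ ?_
  · intro E hE
    simp only [Finset.mem_coe, mem_up, Finset.mem_powersetCard] at *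
    refine ⟨Finset.sdiff_subset_sdiff (Finset.subset_univ _) le_rfl, ?_⟩
    rw [Finset.card_sdiff_of_subset hE.2, hE.1]
  · intro E hE
    simp only [Finset.mem_coe, mem_up, Finset.mem_powersetCard] at *
    have hd : Disjoint E W := Finset.disjoint_of_subset_left hE.1 Finset.sdiff_disjoint
    refine ⟨?_, Finset.subset_union_right⟩
    rw [Finset.card_union_of_disjoint hd, hE.2]; omega
  · intro E hE
    simp only [Finset.mem_coe, mem_up] at *
    exact Finset.sdiff_union_of_subset hE.2
  · intro E hE
    simp only [Finset.mem_coe, Finset.mem_powersetCard] at *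
    have hd : Disjoint E W := Finset.disjoint_of_subset_left hE.1 Finset.sdiff_disjoint
    exact Finset.union_sdiff_cancel_right hd

lemma up_empty {n k : ℕ} (W : Finset (Fin n)) (h : k < W.card) : up k W = ∅ := by
  apply Finset.eq_empty_of_forall_notMem
  intro E hE
  rw [mem_up] at hE
  have := Finset.card_le_card hE.2
  omega

lemma card_up_le {n k j : ℕ} (hjk : j < k) (W : Finset (Fin n)) (h : j + 1 ≤ W.card) :
    (up k W).card ≤ (n - (j+1)).choose (k - (j+1)) := by
  obtain ⟨W', hW', hc⟩ := Finset.exists_subset_card_eq h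
  rw [← hc, ← card_up W' (by omega)]
  apply Finset.card_le_card
  intro E hE
  rw [mem_up] at *
  exact ⟨hE.1, hW'.trans hE.2⟩

lemma card_up_le_pow {n k : ℕ} (W : Finset (Fin n)) (h : W.card ≤ k) :
    (up k W).card ≤ n ^ (k - W.card) := by
  rw [card_up W h]
  exact (Nat.choose_le_pow _ _).trans (Nat.pow_le_pow_left (Nat.sub_le _ _) _)

lemma nbrs_card {n k j : ℕ} (hjk : j < k) (a : Finset (Fin n)) (ha : a ∈ kSets n k) :
    (nbrs k j a).card ≤ k.choose j * (n - j).choose (k - j) := by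
  have : nbrs k j a ⊆ (a.powersetCard j).biUnion (fun J => up k J) := by
    intro f hf
    simp only [nbrs, Finset.mem_filter] at hf
    obtain ⟨J, hJ, h1, h2⟩ := exists_common hf.2
    rw [Finset.mem_biUnion]
    exact ⟨J, Finset.mem_powersetCard.2 ⟨h1, mem_kSets.1 hJ⟩, mem_up.2 ⟨mem_kSets.1 hf.1, h2⟩⟩
  refine (Finset.card_le_card this).trans ?_
  have hac : k.choose j = (a.powersetCard j).card := by rw [Finset.card_powersetCard, mem_kSets.1 ha]
  rw [hac]
  refine Finset.card_biUnion_le_card_mul _ _ _ ?_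
  intro J hJ
  have := (Finset.mem_powersetCard.1 hJ).2
  rw [card_up J (by omega), this]

lemma card_union_of_ne {n j : ℕ} {J J' : Finset (Fin n)} (hJ : J.card = j) (hJ' : J'.card = j) (h : J ≠ J') :
    j + 1 ≤ (J ∪ J').card := by
  by_contra hcon
  apply h
  have h1 : J = J ∪ J' := Finset.eq_of_subset_of_card_le Finset.subset_union_left (by omega)
  have h2 : J' = J ∪ J' := Finset.eq_of_subset_of_card_le Finset.subset_union_right (by omega)
  rw [h1]; exact h2.symm

lemma cross_small {n k j : ℕ} (hj : 1 ≤ j) (hjk : j < k) (S : Finset (Finset (Fin n)))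
    (hS : S ⊆ kSets n j) :
    S.card * (n - j).choose (k - j) ≤ (crossing k j S).card +
      S.card * (S.card * (n - (j+1)).choose (k - (j+1))) := by
  let G := fun J : Finset (Fin n) => up k J \ (S.erase J).biUnion (fun J' => up k (J ∪ J'))
  have hG : ∀ J ∈ S, (n - j).choose (k - j) ≤ (G J).card + S.card * (n - (j+1)).choose (k - (j+1)) := by
    intro J hJ
    have hJc := mem_kSets.1 (hS hJ)
    have h1 : ((S.erase J).biUnion (fun J' => up k (J ∪ J'))).card ≤ S.card * (n - (j+1)).choose (k - (j+1)) := by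
      refine (Finset.card_biUnion_le_card_mul _ _ ((n - (j+1)).choose (k - (j+1))) ?_).trans ?_
      · intro J' hJ'
        rw [Finset.mem_erase] at hJ'
        exact card_up_le hjk _ (card_union_of_ne hJc (mem_kSets.1 (hS hJ'.2)) (Ne.symm hJ'.1))
      · gcongr
        exact Finset.erase_subset _ _
    have h2 := Finset.le_card_sdiff ((S.erase J).biUnion (fun J' => up k (J ∪ J'))) (up k J)
    rw [card_up J (by omega), hJc] at h2
    simp only [G]
    omega
  have hdisj : (S : Set (Finset (Fin n))).PairwiseDisjoint G := by
    intro J hJ J' hJ' hne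
    simp only [Function.onFun]
    rw [Finset.disjoint_left]
    intro E hE hE'
    simp only [G, Finset.mem_sdiff, Finset.mem_biUnion, mem_up] at hE hE'
    apply hE.2
    exact ⟨J', Finset.mem_erase.2 ⟨Ne.symm hne, hJ'⟩, hE.1.1, Finset.union_subset hE.1.2 hE'.1.2⟩
  have hsub : S.biUnion G ⊆ crossing k j S := by
    intro E hE
    rw [Finset.mem_biUnion] at hE
    obtain ⟨J, hJ, hE⟩ := hE
    have hJc := mem_kSets.1 (hS hJ)
    simp only [G, Finset.mem_sdiff, Finset.mem_biUnion, mem_up] at hE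
    simp only [crossing, Finset.mem_filter]
    refine ⟨mem_kSets.2 hE.1.1, ⟨J, hJ, hE.1.2⟩, ?_⟩
    have : ∃ J' ∈ E.powersetCard j, J' ≠ J := by
      by_contra hcon
      push Not at hcon
      have h1 : E.powersetCard j ⊆ {J} := fun x hx => by rw [Finset.mem_singleton]; exact hcon x hx
      have h2 := Finset.card_le_card h1
      rw [Finset.card_powersetCard, hE.1.1, Finset.card_singleton] at h2
      have h3 : k.choose j ≥ k := by
        have h4 : 0 < k.choose j := Nat.choose_pos hjk.le
        have := Nat.add_one_le_iff.2 h4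
        have : k.choose j = 1 := by omega
        rw [Nat.choose_eq_one_iff] at this
        omega
      omega
    obtain ⟨J', hJ', hne⟩ := this
    rw [Finset.mem_powersetCard] at hJ'
    refine ⟨J', mem_kSets.2 hJ'.2, ?_, hJ'.1⟩
    intro hJ'S
    exact hE.2 ⟨J', Finset.mem_erase.2 ⟨hne, hJ'S⟩, hE.1.1, Finset.union_subset hE.1.2 hJ'.1⟩
  have h5 := Finset.card_le_card hsub
  rw [Finset.card_biUnion hdisj] at h5
  calc S.card * (n - j).choose (k - j) = ∑ J ∈ S, (n - j).choose (k - j) := by simp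
    _ ≤ ∑ J ∈ S, ((G J).card + S.card * (n - (j+1)).choose (k - (j+1))) := Finset.sum_le_sum hG
    _ = ∑ J ∈ S, (G J).card + S.card * (S.card * (n - (j+1)).choose (k - (j+1))) := by
      rw [Finset.sum_add_distrib]; simp
    _ ≤ _ := by omega

lemma exchange {n j : ℕ} (S : Finset (Finset (Fin n))) (J' : Finset (Fin n)) (hJ' : J'.card = j)
    (hJ'S : J' ∉ S) : ∀ (t : ℕ) (J : Finset (Fin n)), J.card = j → J ∈ S → (J' \ J).card = t →
    ∃ A ∈ crossing (j+1) j S, A ⊆ J ∪ J' := by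
  intro t
  induction t with
  | zero =>
    intro J hJ hJS h0
    rw [Finset.card_eq_zero, Finset.sdiff_eq_empty_iff_subset] at h0
    have := Finset.eq_of_subset_of_card_le h0 (by omega)
    rw [this] at hJ'S
    exact absurd hJS hJ'S
  | succ t ih =>
    intro J hJ hJS ht
    obtain ⟨x, hx⟩ : (J' \ J).Nonempty := Finset.card_pos.1 (by omega)
    have hcomm : (J \ J').card = (J' \ J).card := Finset.card_sdiff_comm (by omega)
    obtain ⟨y, hy⟩ : (J \ J').Nonempty := Finset.card_pos.1 (by omega)
    rw [Finset.mem_sdiff] at hx hy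
    have hxe : x ∉ J.erase y := fun h => hx.2 (Finset.mem_of_mem_erase h)
    have hJ1c : (insert x (J.erase y)).card = j := by
      rw [Finset.card_insert_of_notMem hxe, Finset.card_erase_of_mem hy.1]
      have : 0 < J.card := Finset.card_pos.2 ⟨y, hy.1⟩
      omega
    by_cases hJ1 : insert x (J.erase y) ∈ S
    · obtain ⟨A, hA, hAs⟩ := ih _ hJ1c hJ1 (by
        have : J' \ insert x (J.erase y) = (J' \ J).erase x := by
          ext z
          simp only [Finset.mem_sdiff, Finset.mem_insert, Finset.mem_erase]
          constructor
          · rintro ⟨h1, h2⟩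
            push Not at h2
            refine ⟨h2.1, h1, fun hz => ?_⟩
            exact h2.2 (fun h => hy.2 (h ▸ h1)) hz
          · rintro ⟨h1, h2, h3⟩
            refine ⟨h2, ?_⟩
            push Not
            exact ⟨h1, fun _ => h3⟩
        rw [this, Finset.card_erase_of_mem (Finset.mem_sdiff.2 hx)]; omega)
      refine ⟨A, hA, hAs.trans ?_⟩
      apply Finset.union_subset _ Finset.subset_union_right
      apply Finset.insert_subset (Finset.mem_union_right _ hx.1)
      exact (Finset.erase_subset _ _).trans Finset.subset_union_left
    · refine ⟨insert x J, ?_, Finset.insert_subset (Finset.mem_union_right _ hx.1) Finset.subset_union_left⟩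
      simp only [crossing, Finset.mem_filter]
      refine ⟨mem_kSets.2 (by rw [Finset.card_insert_of_notMem hx.2, hJ]), ⟨J, hJS, Finset.subset_insert _ _⟩,
        _, mem_kSets.2 hJ1c, hJ1, ?_⟩
      exact Finset.insert_subset_insert _ (Finset.erase_subset _ _)

lemma pair_count {n j : ℕ} (A : Finset (Fin n)) (hA : A.card = j + 1) :
    ((kSets n j ×ˢ kSets n j).filter (fun p => A ⊆ p.1 ∪ p.2)).card ≤ 2 ^ (j+1) * n ^ (j-1) := by
  have hsub : (kSets n j ×ˢ kSets n j).filter (fun p => A ⊆ p.1 ∪ p.2) ⊆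
      A.powerset.biUnion (fun a => up j a ×ˢ up j (A \ a)) := by
    intro p hp
    simp only [Finset.mem_filter, Finset.mem_product, mem_kSets] at hp
    simp only [Finset.mem_biUnion, Finset.mem_product, mem_up, Finset.mem_powerset]
    refine ⟨A ∩ p.1, Finset.inter_subset_left, ⟨hp.1.1, Finset.inter_subset_right⟩, hp.1.2, ?_⟩
    intro x hx
    simp only [Finset.mem_sdiff, Finset.mem_inter] at hx
    have := hp.2 hx.1
    rw [Finset.mem_union] at this
    tauto
  refine (Finset.card_le_card hsub).trans ?_
  rw [← hA, ← Finset.card_powerset]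
  refine Finset.card_biUnion_le_card_mul _ _ _ ?_
  intro a ha
  rw [Finset.mem_powerset] at ha
  have hac := Finset.card_le_card ha
  have hsd := Finset.card_sdiff_of_subset ha
  rw [Finset.card_product]
  by_cases h1 : a.card ≤ j
  · by_cases h2 : 1 ≤ a.card
    · calc (up j a).card * (up j (A \ a)).card ≤ n ^ (j - a.card) * n ^ (j - (A \ a).card) := by
            gcongr
            · exact card_up_le_pow a h1
            · exact card_up_le_pow _ (by omega)
        _ = n ^ (j - 1) := by rw [← pow_add]; congr 1; omega
    · rw [up_empty (A \ a) (by omega)]; simp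
  · rw [up_empty a (by omega)]; simp

lemma expand1 {n j : ℕ} (S : Finset (Finset (Fin n))) (hS : S ⊆ kSets n j) :
    S.card * ((kSets n j).card - S.card) ≤ (crossing (j+1) j S).card * (2 ^ (j+1) * n ^ (j-1)) := by
  rw [← Finset.card_sdiff_of_subset hS, ← Finset.card_product]
  have hsub : S ×ˢ (kSets n j \ S) ⊆ (crossing (j+1) j S).biUnion
      (fun A => (kSets n j ×ˢ kSets n j).filter (fun p => A ⊆ p.1 ∪ p.2)) := by
    intro p hp
    simp only [Finset.mem_product, Finset.mem_sdiff] at hp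
    obtain ⟨A, hA, hAs⟩ := exchange S p.2 (mem_kSets.1 hp.2.1) hp.2.2 _ p.1 (mem_kSets.1 (hS hp.1)) hp.1 rfl
    rw [Finset.mem_biUnion]
    refine ⟨A, hA, ?_⟩
    simp only [Finset.mem_filter, Finset.mem_product]
    exact ⟨⟨hS hp.1, hp.2.1⟩, hAs⟩
  refine (Finset.card_le_card hsub).trans (Finset.card_biUnion_le_card_mul _ _ _ ?_)
  intro A hA
  simp only [crossing, Finset.mem_filter] at hA
  exact pair_count A (mem_kSets.1 hA.1)

lemma expand2 {n k j : ℕ} (hjk : j < k) (S : Finset (Finset (Fin n))) :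
    (crossing (j+1) j S).card * (n - (j+1)).choose (k - (j+1)) ≤
      (crossing k j S).card * k.choose (j+1) := by
  refine Finset.card_mul_le_card_mul (fun A E => A ⊆ E) ?_ ?_
  · intro A hA
    simp only [crossing, Finset.mem_filter] at hA
    obtain ⟨hAk, ⟨J, hJ, hJA⟩, J', hJ', hJ'S, hJ'A⟩ := hA
    have hAc := mem_kSets.1 hAk
    rw [← hAc, ← card_up A (by omega)]
    apply Finset.card_le_card
    intro E hE
    rw [mem_up] at hE
    simp only [Finset.bipartiteAbove, crossing, Finset.mem_filter]
    exact ⟨⟨mem_kSets.2 hE.1, ⟨J, hJ, hJA.trans hE.2⟩, J', hJ', hJ'S, hJ'A.trans hE.2⟩, hE.2⟩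
  · intro E hE
    simp only [crossing, Finset.mem_filter] at hE
    rw [← mem_kSets.1 hE.1, ← Finset.card_powersetCard]
    apply Finset.card_le_card
    intro A hA
    simp only [Finset.bipartiteBelow, crossing, Finset.mem_filter] at hA
    exact Finset.mem_powersetCard.2 ⟨hA.2, mem_kSets.1 hA.1.1⟩

lemma dd_rel (n k j : ℕ) (hjk : j < k) (hn : k ≤ n) :
    (n - j) * (n - (j+1)).choose (k - (j+1)) = (n - j).choose (k - j) * (k - j) := by
  obtain ⟨x, hx⟩ : ∃ x, n - j = x + 1 := ⟨n - j - 1, by omega⟩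
  obtain ⟨y, hy⟩ : ∃ y, k - j = y + 1 := ⟨k - j - 1, by omega⟩
  rw [hx, hy, show n - (j+1) = x by omega, show k - (j+1) = y by omega]
  exact Nat.add_one_mul_choose_eq x y

lemma nd_rel (n k j : ℕ) (hjk : j < k) :
    n.choose k * k.choose j = n.choose j * (n - j).choose (k - j) :=
  Nat.choose_mul hjk.le

lemma choose_lower (n j : ℕ) (hn : 2 * j ≤ n) : (n:ℝ) ^ j ≤ 2 ^ j * j.factorial * n.choose j := by
  have h1 : ((n + 1 - j : ℕ) ^ j : ℝ) ≤ j.factorial * n.choose j := by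
    exact_mod_cast Nat.pow_sub_le_descFactorial n j |>.trans (Nat.descFactorial_eq_factorial_mul_choose n j).le
  have h2 : (n:ℝ) ≤ 2 * (n + 1 - j : ℕ) := by
    have : n ≤ 2 * (n + 1 - j) := by omega
    exact_mod_cast this
  calc (n:ℝ) ^ j ≤ (2 * (n + 1 - j : ℕ)) ^ j := by gcongr
    _ = 2 ^ j * ((n + 1 - j : ℕ) ^ j : ℝ) := by rw [mul_pow]
    _ ≤ 2 ^ j * (j.factorial * n.choose j) := by gcongr
    _ = _ := by ring

lemma cross_expand (k j : ℕ) (hj : 1 ≤ j) (hjk : j < k) : ∃ c : ℝ, 0 < c ∧ c ≤ 1 ∧ ∀ n : ℕ, 2 * k ≤ n →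
    ∀ S : Finset (Finset (Fin n)), S ⊆ kSets n j → 2 * S.card ≤ (kSets n j).card →
    c * S.card * (n - j).choose (k - j) ≤ (crossing k j S).card := by
  set K : ℝ := 2 * (2 ^ j * j.factorial) * (2 ^ (j+1) * k.choose (j+1)) with hK
  have hK0 : (1:ℝ) ≤ K := by
    have h1 : 1 ≤ k.choose (j+1) := Nat.choose_pos (by omega)
    have h2 : 1 ≤ j.factorial := Nat.factorial_pos j
    have : 1 ≤ 2 * (2 ^ j * j.factorial) * (2 ^ (j+1) * k.choose (j+1)) :=
      Nat.one_le_iff_ne_zero.2 (by positivity)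
    rw [hK]; exact_mod_cast this
  refine ⟨1 / K, by positivity, by rw [div_le_one (by positivity)]; exact hK0, ?_⟩
  intro n hn S hS hhalf
  have e1 := expand1 S hS
  have e2 := expand2 hjk S
  have e3 := dd_rel n k j hjk (by omega)
  have e4 := choose_lower n j (by omega)
  rw [card_kSets] at e1 hhalf
  set s := S.card
  set d := (n - j).choose (k - j)
  set d' := (n - (j+1)).choose (k - (j+1))
  set X := (crossing k j S).card
  set Y := (crossing (j+1) j S).card
  set Nj := n.choose j
  have f1 : s * Nj ≤ 2 * (Y * (2 ^ (j+1) * n ^ (j-1))) := by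
    have : s * Nj ≤ 2 * (s * (Nj - s)) := by
      have : Nj ≤ 2 * (Nj - s) := by omega
      calc s * Nj ≤ s * (2 * (Nj - s)) := by gcongr
        _ = _ := by ring
    omega
  have f2 : d ≤ n * d' := by
    calc d ≤ d * (k - j) := Nat.le_mul_of_pos_right _ (by omega)
      _ = (n - j) * d' := e3.symm
      _ ≤ n * d' := by gcongr; omega
  have hnpos : 0 < n := by omega
  have f3 : s * Nj * d ≤ 2 * (2 ^ (j+1) * n ^ j) * (X * k.choose (j+1)) := by
    calc s * Nj * d ≤ 2 * (Y * (2 ^ (j+1) * n ^ (j-1))) * (n * d') := by gcongr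
      _ = 2 * (2 ^ (j+1) * (n ^ (j-1) * n)) * (Y * d') := by ring
      _ = 2 * (2 ^ (j+1) * n ^ j) * (Y * d') := by rw [← pow_succ, show j - 1 + 1 = j by omega]
      _ ≤ _ := by gcongr
  have f3' : (s * Nj * d : ℝ) ≤ 2 * (2 ^ (j+1) * n ^ j) * (X * k.choose (j+1)) := by exact_mod_cast f3
  have hNj : (0:ℝ) < Nj := by exact_mod_cast Nat.choose_pos (by omega)
  have f4 : (Nj:ℝ) * (s * d) ≤ Nj * (K * X) := by
    calc (Nj:ℝ) * (s * d) = s * Nj * d := by ring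
      _ ≤ 2 * (2 ^ (j+1) * n ^ j) * (X * k.choose (j+1)) := f3'
      _ ≤ 2 * (2 ^ (j+1) * (2 ^ j * j.factorial * Nj)) * (X * k.choose (j+1)) := by gcongr
      _ = Nj * (K * X) := by rw [hK]; ring
  have f5 := le_of_mul_le_mul_left f4 hNj
  rw [div_mul_eq_mul_div, div_mul_eq_mul_div, div_le_iff₀ (by positivity)]
  linarith

abbrev Om (n k : ℕ) := Fin (kSets n k).card ≃ {E // E ∈ kSets n k}

lemma process_mem {n k : ℕ} (σ : Om n k) {M : ℕ} (hM : M ≤ (kSets n k).card) :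
    processH n k σ M ∈ Finset.powersetCard M (kSets n k) := by
  rw [Finset.mem_powersetCard]
  constructor
  · intro E hE
    simp only [processH, Finset.mem_image] at hE
    obtain ⟨i, _, rfl⟩ := hE
    exact (σ i).2
  · rw [processH, Finset.card_image_of_injective]
    · rw [Fin.card_filter_val_lt]; omega
    · intro a b h
      exact σ.injective (Subtype.ext h)

lemma process_mono {n k : ℕ} (σ : Om n k) {M M' : ℕ} (h : M ≤ M') :
    processH n k σ M ⊆ processH n k σ M' := by
  intro E hE
  simp only [processH, Finset.mem_image, Finset.mem_filter] at *
  obtain ⟨i, hi, rfl⟩ := hE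
  exact ⟨i, ⟨hi.1, by omega⟩, rfl⟩

lemma process_sat {n k : ℕ} (σ : Om n k) {M : ℕ} (h : (kSets n k).card ≤ M) :
    processH n k σ M = processH n k σ (kSets n k).card := by
  apply Finset.Subset.antisymm _ (process_mono σ h)
  intro E hE
  simp only [processH, Finset.mem_image, Finset.mem_filter] at *
  obtain ⟨i, hi, rfl⟩ := hE
  exact ⟨i, ⟨hi.1, i.2⟩, rfl⟩

lemma fiber_eq {n k M : ℕ} (A A' : Finset (Finset (Fin n)))
    (hA : A ∈ Finset.powersetCard M (kSets n k)) (hA' : A' ∈ Finset.powersetCard M (kSets n k)) :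
    (Finset.univ.filter (fun σ : Om n k => processH n k σ M = A)).card ≤
    (Finset.univ.filter (fun σ : Om n k => processH n k σ M = A')).card := by
  rw [Finset.mem_powersetCard] at hA hA'
  have hc : ∀ B : Finset (Finset (Fin n)), B ⊆ kSets n k →
      Fintype.card {x : {E // E ∈ kSets n k} // x.1 ∈ B} = B.card := by
    intro B hB
    rw [Fintype.card_subtype]
    rw [← Finset.card_image_of_injective (f := Subtype.val) _ Subtype.val_injective]
    congr 1
    ext E
    simp only [Finset.mem_image, Finset.mem_filter, Finset.mem_univ, true_and]
    constructor
    · rintro ⟨x, hx, rfl⟩; exact hx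
    · intro h; exact ⟨⟨E, hB h⟩, h, rfl⟩
  have e : {x : {E // E ∈ kSets n k} // x.1 ∈ A} ≃ {x : {E // E ∈ kSets n k} // x.1 ∈ A'} :=
    Fintype.equivOfCardEq (by rw [hc A hA.1, hc A' hA'.1, hA.2, hA'.2])
  let π : Equiv.Perm {E // E ∈ kSets n k} := e.extendSubtype
  have h1 : ∀ x : {E // E ∈ kSets n k}, x.1 ∈ A → (π x).1 ∈ A' := fun x hx =>
    e.extendSubtype_mem x hx
  have h2 : ∀ x : {E // E ∈ kSets n k}, ¬ x.1 ∈ A → ¬ (π x).1 ∈ A' := fun x hx =>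
    e.extendSubtype_not_mem x hx
  refine Finset.card_le_card_of_injOn (fun σ => σ.trans π) ?_ ?_
  · intro σ hσ
    simp only [Finset.coe_filter, Finset.mem_univ, true_and, Set.mem_ofPred_eq] at *
    have hA'' : ∀ x : {E // E ∈ kSets n k}, x.1 ∈ A ↔ ∃ i : Fin (kSets n k).card, (i:ℕ) < M ∧ σ i = x := by
      intro x
      rw [← hσ]
      simp only [processH, Finset.mem_image, Finset.mem_filter, Finset.mem_univ, true_and]
      constructor
      · rintro ⟨i, hi, h⟩; exact ⟨i, hi, Subtype.ext h⟩
      · rintro ⟨i, hi, h⟩; exact ⟨i, hi, by rw [h]⟩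
    ext E
    simp only [processH, Finset.mem_image, Finset.mem_filter, Finset.mem_univ, true_and, Equiv.trans_apply]
    constructor
    · rintro ⟨i, hi, rfl⟩
      exact h1 _ ((hA'' _).2 ⟨i, hi, rfl⟩)
    · intro hE
      let x : {E // E ∈ kSets n k} := π.symm ⟨E, hA'.1 hE⟩
      have hx : x.1 ∈ A := by
        by_contra hcon
        apply h2 x hcon
        simpa [x] using hE
      obtain ⟨i, hi, h⟩ := (hA'' x).1 hx
      exact ⟨i, hi, by rw [h]; simp [x]⟩
  · intro σ _ τ _ h
    simp only at h
    ext i : 1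
    have := congrArg (fun f => f i) h
    simpa using this

/-- probability in the process -/
def pr (n k : ℕ) (P : Om n k → Prop) : ℝ :=
  ((Finset.univ.filter P).card : ℝ) / (Fintype.card (Om n k) : ℝ)

lemma card_Om_pos (n k : ℕ) : 0 < Fintype.card (Om n k) := by
  apply Fintype.card_pos_iff.2
  exact ⟨(Finset.equivFin _).symm⟩

lemma uniformProb_eq (n k M : ℕ) (Q : Finset (Finset (Fin n)) → Prop) [DecidablePred Q] :
    uniformProb n k M Q = (((Finset.powersetCard M (kSets n k)).filter Q).card : ℝ) /
      ((Finset.powersetCard M (kSets n k)).card : ℝ) := by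
  rw [uniformProb]; congr!

lemma pr_process {n k M : ℕ} (hM : M ≤ (kSets n k).card) (Q : Finset (Finset (Fin n)) → Prop) :
    pr n k (fun σ => Q (processH n k σ M)) = uniformProb n k M Q := by
  set pc := Finset.powersetCard M (kSets n k) with hpc
  have hne : pc.Nonempty := by
    rw [hpc, Finset.powersetCard_nonempty]; exact hM
  obtain ⟨A0, hA0⟩ := hne
  set f := (Finset.univ.filter (fun σ : Om n k => processH n k σ M = A0)).card with hf
  have hfib : ∀ A ∈ pc, (Finset.univ.filter (fun σ : Om n k => processH n k σ M = A)).card = f :=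
    fun A hA => le_antisymm (fiber_eq A A0 hA hA0) (fiber_eq A0 A hA0 hA)
  have h1 : Fintype.card (Om n k) = pc.card * f := by
    rw [← Finset.card_univ, Finset.card_eq_sum_card_fiberwise (t := pc) (f := fun σ => processH n k σ M)
      (fun σ _ => process_mem σ hM), Finset.sum_congr rfl hfib]
    simp
  have h2 : (Finset.univ.filter (fun σ : Om n k => Q (processH n k σ M))).card = (pc.filter Q).card * f := by
    rw [Finset.card_eq_sum_card_fiberwise (t := pc.filter Q) (f := fun σ => processH n k σ M)]
    · rw [Finset.sum_congr rfl (g := fun _ => f)]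
      · simp
      · intro A hA
        rw [Finset.mem_filter] at hA
        rw [← hfib A hA.1, Finset.filter_filter]
        congr 1
        apply Finset.filter_congr
        intro σ _
        constructor
        · exact fun h => h.2
        · exact fun h => ⟨h ▸ hA.2, h⟩
    · intro σ hσ
      simp only [Finset.coe_filter, Finset.mem_univ, true_and, Set.mem_ofPred_eq] at *
      exact ⟨process_mem σ hM, hσ⟩
  have hpos := card_Om_pos n k
  rw [h1] at hpos
  have hfpos : 0 < f := Nat.pos_of_mul_pos_left hpos
  rw [pr, uniformProb, h1, h2]
  push_cast
  rw [mul_div_mul_right]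
  exact_mod_cast hfpos.ne'

lemma cnt_le {α : Type*} (V T F : Finset α) (M : ℕ) (hT : T ⊆ V) (hF : F ⊆ V) (hd : Disjoint T F)  :
    ((V.powersetCard M).filter (fun H => T ⊆ H ∧ Disjoint F H)).card ≤
      (V.card - T.card - F.card).choose (M - T.card) := by
  have h1 : V.card - T.card - F.card = (V \ (T ∪ F)).card := by
    rw [Finset.card_sdiff_of_subset (Finset.union_subset hT hF), Finset.card_union_of_disjoint hd]; omega
  rw [h1, ← Finset.card_powersetCard]
  refine Finset.card_le_card_of_injOn (fun H => H \ T) ?_ ?_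
  · intro H hH
    simp only [Finset.coe_filter, Finset.mem_powersetCard, Set.mem_ofPred_eq, Finset.mem_coe] at *
    refine ⟨?_, by rw [Finset.card_sdiff_of_subset hH.2.1, hH.1.2]⟩
    intro x hx
    simp only [Finset.mem_sdiff, Finset.mem_union] at *
    refine ⟨hH.1.1 hx.1, ?_⟩
    rintro (h | h)
    · exact hx.2 h
    · exact Finset.disjoint_left.1 hH.2.2 h hx.1
  · intro H hH H' hH' h
    simp only [Finset.coe_filter, Finset.mem_powersetCard, Set.mem_ofPred_eq] at *
    rw [← Finset.sdiff_union_of_subset hH.2.1, ← Finset.sdiff_union_of_subset hH'.2.1, h]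

lemma cnt_eq {α : Type*} (V F : Finset α) (M : ℕ) (hF : F ⊆ V) :
    ((V.powersetCard M).filter (fun H => Disjoint F H)).card = (V.card - F.card).choose M := by
  rw [← Finset.card_sdiff_of_subset hF, ← Finset.card_powersetCard]
  congr 1
  ext H
  simp only [Finset.mem_filter, Finset.mem_powersetCard, Finset.subset_sdiff]
  constructor
  · rintro ⟨⟨a, b⟩, c⟩; exact ⟨⟨a, c.symm⟩, b⟩
  · rintro ⟨⟨a, c⟩, b⟩; exact ⟨⟨a, b⟩, c.symm⟩

lemma up_prob {n k M : ℕ} (hM : M ≤ (kSets n k).card) (T F : Finset (Finset (Fin n)))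
    (hT : T ⊆ kSets n k) (hF : F ⊆ kSets n k) (hd : Disjoint T F) (hTM : T.card ≤ M) :
    uniformProb n k M (fun H => T ⊆ H ∧ Disjoint F H) ≤
      ((M:ℝ) / (kSets n k).card) ^ T.card *
        Real.exp (-((F.card : ℝ) * ((M:ℝ) - T.card) / (kSets n k).card)) := by
  have hcnt := cnt_le (kSets n k) T F M hT hF hd
  have hsum : T.card + F.card ≤ (kSets n k).card := by
    rw [← Finset.card_union_of_disjoint hd]
    exact Finset.card_le_card (Finset.union_subset hT hF)
  rw [uniformProb_eq, Finset.card_powersetCard]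
  set N := (kSets n k).card
  have hpos : (0:ℝ) < N.choose M := by exact_mod_cast Nat.choose_pos hM
  rw [div_le_iff₀ hpos]
  have b1 := hg_up (N - T.card) (M - T.card) F.card (by omega)
  have b2 := hg_in N M T.card hTM hM
  have b3 : Real.exp (-((F.card : ℝ) * (M - T.card : ℕ) / (N - T.card : ℕ))) ≤
      Real.exp (-((F.card : ℝ) * ((M:ℝ) - T.card) / N)) := by
    apply Real.exp_le_exp.2
    rw [neg_le_neg_iff]
    rw [← Nat.cast_sub hTM]
    by_cases h0 : N - T.card = 0
    · have : M - T.card = 0 := by omega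
      rw [this]; simp
    · have : (0:ℝ) < (N - T.card : ℕ) := by exact_mod_cast Nat.pos_of_ne_zero h0
      gcongr
      omega
  calc _ ≤ (((N - T.card - F.card).choose (M - T.card) : ℕ) : ℝ) := by
        refine le_trans (le_of_eq ?_) (Nat.cast_le.2 hcnt)
        congr!
    _ ≤ _ := b1
    _ ≤ (N.choose M * (M / N : ℝ) ^ T.card) * Real.exp (-((F.card : ℝ) * ((M:ℝ) - T.card) / N)) := by
      gcongr
    _ = _ := by ring

def validT (n k j : ℕ) (T : Finset (Finset (Fin n))) : Prop :=
  T.card ≤ (shad j T).card ∧ 2 * (shad j T).card ≤ (kSets n j).card ∧ k.choose j ≤ (shad j T).card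

lemma union_bound {n k j M : ℕ} (hjk : j < k) (hn : k ≤ n) (w : ℕ → ℝ) (hw0 : ∀ m, 0 ≤ w m)
    (hw : ∀ T ⊆ kSets n k, validT n k j T →
      uniformProb n k M (fun H => T ⊆ H ∧ Disjoint (crossing k j (shad j T)) H) ≤ w T.card) :
    uniformProb n k M (fun H => NoIso n j H ∧ ¬ JConnectedHG n j H) ≤
      ∑ m ∈ Finset.range (n.choose j), 
        ((kSets n k).card : ℝ) * (3 * (3 * ((k.choose j * (n - j).choose (k - j) : ℕ) : ℝ)) ^ m) * w (m+1) := by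
  set V := kSets n k with hV
  set pc := Finset.powersetCard M V with hpc
  set ev := fun T => pc.filter (fun H => T ⊆ H ∧ Disjoint (crossing k j (shad j T)) H) with hev
  set fam := fun (m : ℕ) (e : Finset (Fin n)) => (V.powersetCard (m+1)).filter
    (fun T => e ∈ T ∧ RootConn (nbrs k j) e T) with hfam
  have hsub : pc.filter (fun H => NoIso n j H ∧ ¬ JConnectedHG n j H) ⊆
      (Finset.range (n.choose j)).biUnion (fun m => V.biUnion (fun e =>
        ((fam m e).filter (validT n k j)).biUnion ev)) := by
    intro H hH
    rw [Finset.mem_filter] at hH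
    obtain ⟨hHpc, hI, hc⟩ := hH
    have hHV := (Finset.mem_powersetCard.1 hHpc).1
    obtain ⟨e, he, T, hTH, heT, hroot, hcard, hhalf, hb, hdis⟩ := structure_lemma hjk H hHV hI hc
    have hTpos : 0 < T.card := Finset.card_pos.2 ⟨e, heT⟩
    rw [card_kSets] at hhalf
    simp only [Finset.mem_biUnion, Finset.mem_range]
    refine ⟨T.card - 1, by omega, e, he, T, ?_, ?_⟩
    · simp only [hfam, Finset.mem_filter, Finset.mem_powersetCard]
      refine ⟨⟨⟨hTH.trans hHV, by omega⟩, heT, hroot⟩, hcard, by rw [card_kSets]; exact hhalf, hb⟩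
    · simp only [hev, Finset.mem_filter]
      exact ⟨hHpc, hTH, hdis⟩
  have hevw : ∀ T ⊆ V, validT n k j T → ((ev T).card : ℝ) ≤ w T.card * pc.card := by
    intro T hT hv
    have h := hw T hT hv
    rw [uniformProb_eq] at h
    by_cases h0 : pc.card = 0
    · have : (ev T).card ≤ pc.card := Finset.card_filter_le _ _
      have h3 : (ev T).card = 0 := by omega
      rw [h0, h3]; simp
    · rwa [div_le_iff₀ (by exact_mod_cast Nat.pos_of_ne_zero h0)] at h
  have hD : 1 ≤ k.choose j * (n - j).choose (k - j) :=
    Nat.mul_pos (Nat.choose_pos hjk.le) (Nat.choose_pos (by omega))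
  have hfinal : ((pc.filter (fun H => NoIso n j H ∧ ¬ JConnectedHG n j H)).card : ℝ) ≤
      ∑ m ∈ Finset.range (n.choose j), 
        ((V.card : ℝ) * (3 * (3 * ((k.choose j * (n - j).choose (k - j) : ℕ) : ℝ)) ^ m) * w (m+1)) * pc.card := by
    have h1 := (Finset.card_le_card hsub).trans Finset.card_biUnion_le
    refine (Nat.cast_le.2 h1).trans ?_
    rw [Nat.cast_sum]
    apply Finset.sum_le_sum
    intro m _
    refine (Nat.cast_le.2 Finset.card_biUnion_le).trans ?_
    rw [Nat.cast_sum]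
    calc _ ≤ ∑ e ∈ V, (3 * (3 * ((k.choose j * (n - j).choose (k - j) : ℕ) : ℝ)) ^ m) * (w (m+1) * pc.card) := by
          apply Finset.sum_le_sum
          intro e he
          refine (Nat.cast_le.2 Finset.card_biUnion_le).trans ?_
          rw [Nat.cast_sum]
          calc _ ≤ ∑ T ∈ (fam m e).filter (validT n k j), w (m+1) * pc.card := by
                apply Finset.sum_le_sum
                intro T hT
                simp only [hfam, Finset.mem_filter, Finset.mem_powersetCard] at hT
                rw [← hT.1.1.2]
                exact hevw T hT.1.1.1 hT.2
            _ = (((fam m e).filter (validT n k j)).card : ℝ) * (w (m+1) * pc.card) := by simp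
            _ ≤ ((fam m e).card : ℝ) * (w (m+1) * pc.card) := by
                have := hw0 (m+1)
                gcongr
                exact Finset.filter_subset _ _
            _ ≤ _ := by
                have := hw0 (m+1)
                gcongr
                have hrc := root_count V (nbrs k j) _ hD (fun a ha => nbrs_card hjk a ha) m e he
                refine le_trans (le_of_eq ?_) hrc
                simp only [hfam]
                congr!
      _ = _ := by simp; ring
  rw [← Finset.sum_mul] at hfinal
  rw [uniformProb_eq]
  apply div_le_of_le_mul₀ (by positivity) _ hfinal
  apply Finset.sum_nonneg
  intro m _
  have := hw0 (m+1)
  positivity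

lemma dp_le_d {n k j : ℕ} (hjk : j < k) (hn : k ≤ n) :
    (n - (j+1)).choose (k - (j+1)) ≤ (n - j).choose (k - j) := by
  have h := dd_rel n k j hjk hn
  have : (n - j) * (n - (j+1)).choose (k - (j+1)) ≤ (n - j) * (n - j).choose (k - j) := by
    rw [h, mul_comm]; gcongr
  exact Nat.le_of_mul_le_mul_left this (by omega)

def isoCount {n : ℕ} (k j : ℕ) (H : Finset (Finset (Fin n))) : ℕ :=
  ((kSets n j).filter (fun J => Disjoint (up k J) H)).card

lemma isoCount_zero {n k j : ℕ} {H : Finset (Finset (Fin n))} (hH : H ⊆ kSets n k) (h : NoIso n j H) :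
    isoCount k j H = 0 := by
  rw [isoCount, Finset.card_eq_zero, Finset.filter_eq_empty_iff]
  intro J hJ hd
  apply h J (mem_kSets.1 hJ)
  intro e he hJe
  exact Finset.disjoint_left.1 hd (mem_up.2 ⟨mem_kSets.1 (hH he), hJe⟩) he

lemma up_sub {n k : ℕ} (W : Finset (Fin n)) : up k W ⊆ kSets n k := Finset.filter_subset _ _

lemma second_moment {n k j M : ℕ} (hjk : j < k) (hn : k ≤ n)
    (d d' N Nj : ℕ) (hd : d = (n - j).choose (k - j)) (hd' : d' = (n - (j+1)).choose (k - (j+1)))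
    (hN : N = (kSets n k).card) (hNj : Nj = (kSets n j).card) 
    (h2d : 2 * d ≤ N) (hMd : M + d < N) :
    uniformProb n k M (NoIso n j) ≤
      Real.exp ((d:ℝ) * M / (N - d - M)) / Nj + Real.exp ((d':ℝ) * M / (N - d - M)) - 1 := by
  have hdd : d' ≤ d := by rw [hd, hd']; exact dp_le_d hjk hn
  have hNjpos : (0:ℝ) < Nj := by
    rw [hNj, card_kSets]; exact_mod_cast Nat.choose_pos (by omega)
  set pc := Finset.powersetCard M (kSets n k) with hpc
  set A : ℝ := (((N - d).choose M : ℕ) : ℝ) with hA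
  set C : ℝ := ((N.choose M : ℕ) : ℝ) with hC
  set B : ℝ := (((N - (2 * d - d')).choose M : ℕ) : ℝ) with hB
  have hpcC : (pc.card : ℝ) = C := by rw [hpc, Finset.card_powersetCard, ← hN]
  have hApos : 0 < A := by rw [hA]; exact_mod_cast Nat.choose_pos (by omega)
  have hCpos : 0 < C := by rw [hC]; exact_mod_cast Nat.choose_pos (by omega)
  have hup : ∀ J ∈ kSets n j, (up k J).card = d := by
    intro J hJ
    rw [card_up J (by rw [mem_kSets.1 hJ]; omega), mem_kSets.1 hJ, hd]
  have hX : ∀ H, (isoCount k j H : ℝ) = ∑ J ∈ kSets n j, (if Disjoint (up k J) H then (1:ℝ) else 0) := by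
    intro H
    rw [isoCount, Finset.sum_boole]
  have m1 : ∑ H ∈ pc, (isoCount k j H : ℝ) = Nj * A := by
    simp_rw [hX]
    rw [Finset.sum_comm]
    have : ∀ J ∈ kSets n j, ∑ H ∈ pc, (if Disjoint (up k J) H then (1:ℝ) else 0) = A := by
      intro J hJ
      rw [Finset.sum_boole, hA, Nat.cast_inj, ← hup J hJ, hN, ← cnt_eq _ _ _ (up_sub J)]
      congr!
    rw [Finset.sum_congr rfl this]
    simp [hNj]
  have m2 : ∑ H ∈ pc, (isoCount k j H : ℝ) ^ 2 ≤ Nj * A + Nj ^ 2 * B := by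
    simp_rw [hX, sq, Finset.sum_mul_sum]
    rw [Finset.sum_comm]
    have : ∀ J ∈ kSets n j, ∑ H ∈ pc, ∑ J' ∈ kSets n j, ((if Disjoint (up k J) H then (1:ℝ) else 0) * 
        (if Disjoint (up k J') H then (1:ℝ) else 0)) ≤ A + Nj * B := by
      intro J hJ
      rw [Finset.sum_comm]
      have hpair : ∀ J' ∈ kSets n j, ∑ H ∈ pc, ((if Disjoint (up k J) H then (1:ℝ) else 0) * 
        (if Disjoint (up k J') H then (1:ℝ) else 0)) ≤ (if J = J' then A else 0) + B := by
        intro J' hJ'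
        have e1 : ∑ H ∈ pc, ((if Disjoint (up k J) H then (1:ℝ) else 0) * 
            (if Disjoint (up k J') H then (1:ℝ) else 0)) = 
            ((N - (up k J ∪ up k J').card).choose M : ℕ) := by
          rw [hN, ← cnt_eq _ _ _ (Finset.union_subset (up_sub J) (up_sub J')), ← Finset.sum_boole]
          apply Finset.sum_congr rfl
          intro H _
          rw [ite_mul, one_mul, zero_mul]
          by_cases h1 : Disjoint (up k J) H <;> by_cases h2 : Disjoint (up k J') H <;>
            simp [h1, h2]
        rw [e1]
        by_cases hJJ : J = J'
        · subst hJJ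
          rw [if_pos rfl, Finset.union_self, hup J hJ]
          have : (0:ℝ) ≤ B := by positivity
          linarith
        · rw [if_neg hJJ, zero_add, hB, Nat.cast_le]
          apply Nat.choose_le_choose
          have h3 := Finset.card_union_add_card_inter (up k J) (up k J')
          rw [hup J hJ, hup J' hJ'] at h3
          have h4 : (up k J ∩ up k J').card ≤ d' := by
            rw [hd']
            refine le_trans (Finset.card_le_card ?_) (card_up_le hjk (J ∪ J')
              (card_union_of_ne (mem_kSets.1 hJ) (mem_kSets.1 hJ') hJJ))
            intro E hE
            rw [Finset.mem_inter, mem_up, mem_up] at hE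
            exact mem_up.2 ⟨hE.1.1, Finset.union_subset hE.1.2 hE.2.2⟩
          omega
      refine (Finset.sum_le_sum hpair).trans ?_
      rw [Finset.sum_add_distrib, Finset.sum_ite_eq, if_pos hJ]
      simp [hNj]
    refine (Finset.sum_le_sum this).trans (le_of_eq ?_)
    simp [← hNj]; ring
  set μ : ℝ := Nj * A / C with hμ
  have hμpos : 0 < μ := by positivity
  have ch : ((pc.filter (NoIso n j)).card : ℝ) * μ ^ 2 ≤ ∑ H ∈ pc, ((isoCount k j H : ℝ) - μ) ^ 2 := by
    calc ((pc.filter (NoIso n j)).card : ℝ) * μ ^ 2 = ∑ H ∈ pc.filter (NoIso n j), μ ^ 2 := by simp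
      _ = ∑ H ∈ pc.filter (NoIso n j), ((isoCount k j H : ℝ) - μ) ^ 2 := by
        apply Finset.sum_congr rfl
        intro H hH
        rw [Finset.mem_filter] at hH
        rw [isoCount_zero (Finset.mem_powersetCard.1 hH.1).1 hH.2]; simp
      _ ≤ _ := Finset.sum_le_sum_of_subset_of_nonneg (Finset.filter_subset _ _) (fun _ _ _ => by positivity)
  have ex : ∑ H ∈ pc, ((isoCount k j H : ℝ) - μ) ^ 2 = ∑ H ∈ pc, (isoCount k j H : ℝ) ^ 2 - μ ^ 2 * C := by
    have : ∀ H ∈ pc, ((isoCount k j H : ℝ) - μ) ^ 2 = (isoCount k j H : ℝ) ^ 2 - 2 * μ * isoCount k j H + μ ^ 2 := by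
      intro H _; ring
    rw [Finset.sum_congr rfl this, Finset.sum_add_distrib, Finset.sum_sub_distrib, ← Finset.mul_sum, m1]
    simp only [Finset.sum_const, nsmul_eq_mul, hpcC]
    rw [hμ]; field_simp; ring
  have hcast : ((N:ℝ) - d - M) > 0 := by
    have : (M:ℝ) + d < N := by exact_mod_cast hMd
    linarith
  set x : ℝ := Real.exp ((d:ℝ) * M / (N - d - M)) with hx
  set y : ℝ := Real.exp ((d':ℝ) * M / (N - d - M)) with hy
  have b1 : C ≤ A * x := by
    have h := hg_low N M d hMd
    rw [Real.exp_neg, ← hx, ← div_eq_mul_inv, div_le_iff₀ (by positivity)] at h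
    exact h
  have b2 : B * C ≤ A ^ 2 * y := by
    have h := hg_lc (N - d) N M (d - d') (by omega) (by omega)
    rw [show N - d - (d - d') = N - (2 * d - d') by omega, show N - (d - d') = N - d + d' by omega] at h
    have h' : B * C ≤ A * ((N - d + d').choose M : ℕ) := by
      rw [hA, hB, hC]; exact_mod_cast h
    have h2 := hg_low (N - d + d') M d' (by omega)
    rw [show N - d + d' - d' = N - d by omega] at h2
    have e : ((N - d + d' : ℕ) : ℝ) - d' - M = N - d - M := by
      push_cast [Nat.cast_sub (show d ≤ N by omega)]; ring
    rw [e, Real.exp_neg, ← hy, ← div_eq_mul_inv, div_le_iff₀ (by positivity)] at h2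
    calc B * C ≤ _ := h'
      _ ≤ A * (A * y) := by gcongr
      _ = _ := by ring
  have tot : ((pc.filter (NoIso n j)).card : ℝ) * μ ^ 2 ≤ Nj * A + Nj ^ 2 * B - μ ^ 2 * C := by
    linarith
  rw [uniformProb_eq, ← hpc, hpcC]
  have f1 : ((pc.filter (NoIso n j)).card : ℝ) / C ≤ (Nj * A + Nj ^ 2 * B - μ ^ 2 * C) / (μ ^ 2 * C) := by
    rw [div_le_div_iff₀ hCpos (by positivity)]
    nlinarith
  refine (le_of_eq (by congr!)).trans (f1.trans ?_)
  have e2 : (Nj * A + Nj ^ 2 * B - μ ^ 2 * C) / (μ ^ 2 * C) = C / (Nj * A) + B * C / A ^ 2 - 1 := by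
    rw [hμ]; field_simp
  rw [e2]
  have g1 : C / (Nj * A) ≤ x / Nj := by
    rw [div_le_div_iff₀ (by positivity) hNjpos]; nlinarith
  have g2 : B * C / A ^ 2 ≤ y := by
    rw [div_le_iff₀ (by positivity)]; linarith
  linarith

lemma conn_noIso {n j : ℕ} {H : Finset (Finset (Fin n))} (h : JConnectedHG n j H) : NoIso n j H := by
  intro J hJ hI
  obtain ⟨e1, he1, _, _, h1, _⟩ := h J J hJ hJ
  exact hI e1 he1 h1

lemma noIso_mono {n j : ℕ} {H H' : Finset (Finset (Fin n))} (hs : H ⊆ H') (h : NoIso n j H) :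
    NoIso n j H' := by
  intro J hJ hI
  exact h J hJ (fun e he => hI e (hs he))

lemma det_bad {n k j M0 : ℕ} (hM0 : M0 ≤ (kSets n k).card) (σ : Om n k)
    (h : ¬ hitConn n k j σ = hitIso n k j σ) :
    NoIso n j (processH n k σ M0) ∨ ∃ M ∈ Finset.Icc M0 (kSets n k).card,
      NoIso n j (processH n k σ M) ∧ ¬ JConnectedHG n j (processH n k σ M) := by
  by_contra hcon
  push Not at hcon
  obtain ⟨h1, h2⟩ := hcon
  apply h
  have hset : {M : ℕ | JConnectedHG n j (processH n k σ M)} =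
      {M : ℕ | ∀ J : Finset (Fin n), J.card = j → ¬ IsIsolatedSet (processH n k σ M) J} := by
    ext M
    constructor
    · intro hM; exact conn_noIso hM
    · intro hM
      have hM' : NoIso n j (processH n k σ M) := hM
      rcases lt_or_ge M M0 with hlt | hge
      · exact absurd (noIso_mono (process_mono σ hlt.le) hM') h1
      · rcases le_or_gt M (kSets n k).card with hle | hgt
        · exact h2 M (Finset.mem_Icc.2 ⟨hge, hle⟩) hM'
        · rw [process_sat σ hgt.le] at hM'
          have := h2 _ (Finset.mem_Icc.2 ⟨hM0, le_refl _⟩) hM'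
          rw [← process_sat σ hgt.le] at this
          exact this
  rw [hitConn, hitIso, hset]

lemma bad_bound {n k j M0 : ℕ} (hM0 : M0 ≤ (kSets n k).card) :
    1 - pr n k (fun σ => hitConn n k j σ = hitIso n k j σ) ≤
      uniformProb n k M0 (NoIso n j) + ∑ M ∈ Finset.Icc M0 (kSets n k).card,
        uniformProb n k M (fun H => NoIso n j H ∧ ¬ JConnectedHG n j H) := by
  have hpos : (0:ℝ) < Fintype.card (Om n k) := by exact_mod_cast card_Om_pos n k
  rw [← pr_process hM0]
  have : ∀ M ∈ Finset.Icc M0 (kSets n k).card,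
      uniformProb n k M (fun H => NoIso n j H ∧ ¬ JConnectedHG n j H) =
      pr n k (fun σ => NoIso n j (processH n k σ M) ∧ ¬ JConnectedHG n j (processH n k σ M)) := by
    intro M hM
    rw [← pr_process (Finset.mem_Icc.1 hM).2]
  rw [Finset.sum_congr rfl this]
  have key : (Fintype.card (Om n k) : ℝ) ≤
      (Finset.univ.filter (fun σ : Om n k => hitConn n k j σ = hitIso n k j σ)).card +
      ((Finset.univ.filter (fun σ : Om n k => NoIso n j (processH n k σ M0))).card +
       ∑ M ∈ Finset.Icc M0 (kSets n k).card, ((Finset.univ.filter (fun σ : Om n k =>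
        NoIso n j (processH n k σ M) ∧ ¬ JConnectedHG n j (processH n k σ M))).card : ℝ)) := by
    have hsub : (Finset.univ : Finset (Om n k)) ⊆
      (Finset.univ.filter (fun σ : Om n k => hitConn n k j σ = hitIso n k j σ)) ∪
      ((Finset.univ.filter (fun σ : Om n k => NoIso n j (processH n k σ M0))) ∪
       (Finset.Icc M0 (kSets n k).card).biUnion (fun M => Finset.univ.filter (fun σ : Om n k =>
        NoIso n j (processH n k σ M) ∧ ¬ JConnectedHG n j (processH n k σ M)))) := by
      intro σ _
      simp only [Finset.mem_union, Finset.mem_filter, Finset.mem_univ, true_and, Finset.mem_biUnion]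
      by_cases hσ : hitConn n k j σ = hitIso n k j σ
      · exact Or.inl hσ
      · exact Or.inr (det_bad hM0 σ hσ)
    have h1 := Finset.card_le_card hsub
    have h2 := h1.trans ((Finset.card_union_le _ _).trans (Nat.add_le_add_left
      ((Finset.card_union_le _ _).trans (Nat.add_le_add_left Finset.card_biUnion_le _)) _))
    rw [Finset.card_univ] at h2
    exact_mod_cast h2
  unfold pr
  rw [← Finset.sum_div, ← add_div, sub_le_iff_le_add, ← add_div, le_div_iff₀ hpos, one_mul]
  refine key.trans (le_of_eq ?_)
  rw [add_comm]
  congr!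

lemma choose_ge_three {k j : ℕ} (hk : 3 ≤ k) (hj : 1 ≤ j) (hjk : j < k) : 3 ≤ k.choose j := by
  induction k, hk using Nat.le_induction with
  | base => interval_cases j <;> decide
  | succ k hk ih =>
    rcases Nat.lt_or_ge j k with h | h
    · exact (ih h).trans (Nat.choose_le_choose _ (by omega))
    · have : j = k := by omega
      rw [this, Nat.choose_succ_self_right]; omega

lemma cross_final (k j : ℕ) (hk : 3 ≤ k) (hj : 1 ≤ j) (hjk : j < k) :
    ∃ c : ℝ, 0 < c ∧ ∃ n0 : ℕ, ∀ n, n0 ≤ n → ∀ T ⊆ kSets n k, validT n k j T →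
      (29/10 + c * T.card) * ((n - j).choose (k - j) : ℕ) ≤ ((crossing k j (shad j T)).card : ℝ) := by
  obtain ⟨c, hc0, hc1, hc⟩ := cross_expand k j hj hjk
  obtain ⟨K, hK⟩ := exists_nat_ge (3 / c)
  have hK' : 3 ≤ c * K := by rw [div_le_iff₀ hc0] at hK; linarith
  refine ⟨c / 60, by positivity, 2 * k + 60 * (K * K) * k + j, ?_⟩
  intro n hn T hT hv
  obtain ⟨hv1, hv2, hv3⟩ := hv
  have hn2 : 2 * k ≤ n := by nlinarith [Nat.zero_le (60 * (K * K) * k)]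
  set S := shad j T with hS
  have hSs : S ⊆ kSets n j := Finset.filter_subset _ _
  have h1 := hc n hn2 S hSs hv2
  set d : ℕ := (n - j).choose (k - j) with hd
  set F : ℕ := (crossing k j S).card with hF
  have hs3 : 3 ≤ S.card := (choose_ge_three hk hj hjk).trans hv3
  have hdpos : (0:ℝ) ≤ d := by positivity
  have hA : (179/60 : ℝ) * d ≤ F := by
    rcases Nat.lt_or_ge S.card K with hlt | hge
    · have h2 := cross_small hj hjk S hSs
      have h3 := dd_rel n k j hjk (by omega)
      set d' : ℕ := (n - (j+1)).choose (k - (j+1)) with hd'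
      rw [← hd] at h2 h3
      have h4 : 60 * (K * K) * d' ≤ d := by
        have : 60 * (K * K) * k ≤ n - j := by omega
        have h5 : 60 * (K * K) * k * d' ≤ d * k := by
          calc 60 * (K * K) * k * d' ≤ (n - j) * d' := by gcongr
            _ = d * (k - j) := h3
            _ ≤ d * k := by gcongr; omega
        have : k * (60 * (K * K) * d') ≤ k * d := by nlinarith
        exact Nat.le_of_mul_le_mul_left this (by omega)
      have h6 : S.card * (S.card * d') ≤ K * (K * d') := by gcongr
      have h7 : 3 * d ≤ S.card * d := by gcongr
      have : 180 * d ≤ 60 * F + d := by nlinarith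
      have : (180:ℝ) * d ≤ 60 * F + d := by exact_mod_cast this
      linarith
    · have : (K:ℝ) ≤ S.card := by exact_mod_cast hge
      have h8 : (3:ℝ) * d ≤ c * S.card * d := by
        gcongr
        exact hK'.trans (by gcongr)
      linarith
  have hB : c * T.card * d ≤ F := by
    have : (T.card:ℝ) ≤ S.card := by exact_mod_cast hv1
    refine le_trans ?_ h1
    gcongr
  nlinarith

lemma shad_disj {n k j : ℕ} {T : Finset (Finset (Fin n))} : Disjoint T (crossing k j (shad j T)) := by
  rw [Finset.disjoint_left]
  intro E hE hc
  obtain ⟨_, _, J, hJ, hJn, hJE⟩ := Finset.mem_filter.1 hc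
  exact hJn (Finset.mem_filter.2 ⟨hJ, E, hE, hJE⟩)

lemma lam_large (c B : ℝ) (hc : 0 < c) : ∃ l0 : ℝ, 1 ≤ l0 ∧ ∀ l, l0 ≤ l → B * l ≤ Real.exp (c * l) := by
  have h := Real.tendsto_pow_mul_exp_neg_atTop_nhds_zero 1
  have h2 : Tendsto (fun l : ℝ => c * l) atTop atTop := tendsto_id.const_mul_atTop hc
  have h3 := h.comp h2
  have h4 := h3.const_mul (B / c)
  rw [mul_zero] at h4
  have h5 := h4.eventually (ge_mem_nhds (show (0:ℝ) < 1 by norm_num))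
  obtain ⟨l0, hl0⟩ := eventually_atTop.1 h5
  refine ⟨max l0 1, le_max_right _ _, fun l hl => ?_⟩
  have h6 := hl0 l ((le_max_left _ _).trans hl)
  simp only [Function.comp, pow_one] at h6
  have e : B / c * (c * l * Real.exp (-(c*l))) = B * l / Real.exp (c * l) := by
    rw [Real.exp_neg]; field_simp
  rw [e, div_le_one (Real.exp_pos _)] at h6
  exact h6

lemma step_bound (k j : ℕ) (hk : 3 ≤ k) (hj : 1 ≤ j) (hjk : j < k) :
    ∃ l0 : ℝ, 1 ≤ l0 ∧ ∃ n0 : ℕ, ∀ n, n0 ≤ n → ∀ M : ℕ, M ≤ (kSets n k).card →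
      ∀ D : ℝ, D = ((kSets n k).card : ℝ) / ((n - j).choose (k - j) : ℕ) → l0 * D ≤ M →
      uniformProb n k M (fun H => NoIso n j H ∧ ¬ JConnectedHG n j H) ≤
        D * Real.exp (-(5/2 * (M / D))) := by
  obtain ⟨c, hc0, n0, hn0⟩ := cross_final k j hk hj hjk
  set b : ℕ := k.choose j with hb
  have hb3 : 3 ≤ b := choose_ge_three hk hj hjk
  set c' : ℝ := 59/60 * c with hc'
  have hc'0 : 0 < c' := by positivity
  obtain ⟨l1, hl1, hl1'⟩ := lam_large (c'/2) (3 * b) (by positivity)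
  obtain ⟨l2, hl2, hl2'⟩ := lam_large (1/4) 3 (by positivity)
  refine ⟨max (60 * b) (max l1 l2), le_max_of_le_right (le_max_of_le_left hl1), max n0 k, ?_⟩
  intro n hn M hM D hD hl
  have hnk : k ≤ n := (le_max_right _ _).trans hn
  set d : ℕ := (n - j).choose (k - j) with hd
  set N : ℕ := (kSets n k).card with hN
  have hdpos : (0:ℝ) < d := by rw [hd]; exact_mod_cast Nat.choose_pos (by omega)
  have hNpos : (0:ℝ) < N := by rw [hN, card_kSets]; exact_mod_cast Nat.choose_pos (by omega)
  have hDpos : 0 < D := by rw [hD]; positivity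
  set l : ℝ := M / D with hlam
  have hll : max (60 * (b:ℝ)) (max l1 l2) ≤ l := by rw [hlam, le_div_iff₀ hDpos]; exact hl
  have g0 : 60 * (b:ℝ) ≤ l := (le_max_left _ _).trans hll
  have g1 : 3 * b * l ≤ Real.exp (c'/2 * l) := hl1' l ((le_max_left _ _).trans ((le_max_right _ _).trans hll))
  have g2 : 3 * l ≤ Real.exp (1/4 * l) := hl2' l ((le_max_right _ _).trans ((le_max_right _ _).trans hll))
  have hMl : (M:ℝ) = D * l := by rw [hlam]; field_simp
  have hND : (N:ℝ) = D * d := by rw [hD]; field_simp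
  have hl0 : 0 < l := lt_of_lt_of_le (by positivity) g0
  have hNj : ((kSets n j).card : ℝ) = b * D := by
    have h := nd_rel n k j hjk
    rw [← card_kSets n k, ← card_kSets n j, ← hN, ← hb, ← hd] at h
    have h' : (N:ℝ) * b = (kSets n j).card * d := by exact_mod_cast h
    rw [hND] at h'
    have : ((kSets n j).card : ℝ) * d = (b * D) * d := by linarith
    exact mul_right_cancel₀ hdpos.ne' this
  clear_value l c'
  have hNjM : ∀ m : ℕ, m ≤ (kSets n j).card → (60:ℝ) * m ≤ M ∧ m ≤ M := by
    intro m h1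
    have h2 : (m:ℝ) ≤ b * D := by rw [← hNj]; exact_mod_cast h1
    have h3 : 60 * (b:ℝ) * D ≤ l * D := mul_le_mul_of_nonneg_right g0 hDpos.le
    have h4 : (60:ℝ) * m ≤ M := by rw [hMl]; linarith
    refine ⟨h4, ?_⟩
    have : (m:ℝ) ≤ M := by
      have : (0:ℝ) ≤ m := Nat.cast_nonneg m
      linarith
    exact_mod_cast this
  clear hNj hD hlam
  have hub := union_bound (M := M) hjk hnk (fun m => ((M:ℝ) / N) ^ m * Real.exp (-(l * (11/4 + c' * m))))
    (fun m => by positivity) (by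
      intro T hT hv
      have hcr := hn0 n ((le_max_left _ _).trans hn) T hT hv
      obtain ⟨hv1, hv2, hv3⟩ := hv
      obtain ⟨hTNj, hTM⟩ := hNjM T.card (by omega)
      refine (up_prob hM T _ hT (Finset.filter_subset _ _) shad_disj hTM).trans ?_
      have : l * (11/4 + c' * T.card) ≤ ((crossing k j (shad j T)).card : ℝ) * ((M:ℝ) - T.card) / N := by
        rw [le_div_iff₀ hNpos]
        calc l * (11/4 + c' * T.card) * N = ((11/4 + c' * T.card) * d) * M := by rw [hMl, hND]; ring
          _ ≤ ((29/10 + c * T.card) * d) * (59/60 * M) := by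
            have : (11/4 + c' * T.card) ≤ (29/10 + c * T.card) * (59/60) := by
              rw [hc']; linarith
            calc _ ≤ (((29/10 + c * T.card) * (59/60)) * d) * M := by gcongr
              _ = _ := by ring
          _ ≤ _ := by
            gcongr
            linarith
      gcongr
      exact this)
  refine hub.trans ?_
  have hq : Real.exp (-(c'/2 * l)) ≤ 1/2 := by
    rw [Real.exp_neg, one_div]
    gcongr
    have : (3:ℝ) ≤ b := by exact_mod_cast hb3
    nlinarith
  have hterm : ∀ m ∈ Finset.range (n.choose j),
      (N:ℝ) * (3 * (3 * ((b * d : ℕ) : ℝ)) ^ m) * (((M:ℝ) / N) ^ (m+1) *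
        Real.exp (-(l * (11/4 + c' * ((m+1 : ℕ):ℝ))))) ≤
      (3 * M * Real.exp (-(11/4 * l))) * (1/2)^(m+1) := by
    intro m _
    have e1 : (N:ℝ) * (3 * (3 * ((b * d : ℕ) : ℝ)) ^ m) * (((M:ℝ) / N) ^ (m+1) *
        Real.exp (-(l * (11/4 + c' * ((m+1 : ℕ):ℝ))))) =
        (3 * M * Real.exp (-(11/4 * l))) * ((3 * b * l) ^ m * Real.exp (-(c' / 2 * l)) ^ (2 * (m+1))) := by
      have e2 : Real.exp (-(l * (11/4 + c' * ((m+1 : ℕ):ℝ)))) =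
          Real.exp (-(11/4 * l)) * Real.exp (-(c' / 2 * l)) ^ (2 * (m+1)) := by
        rw [← Real.exp_nat_mul, ← Real.exp_add]; congr 1; push_cast; ring
      have e3 : (M:ℝ) / N = l / d := by rw [hMl, hND]; field_simp
      have e4 : (N:ℝ) * (3 * (3 * ((b * d : ℕ) : ℝ)) ^ m) * ((M:ℝ) / N) ^ (m+1) = 3 * M * (3 * b * l) ^ m := by
        rw [e3, hND, hMl]; push_cast; rw [pow_succ, div_pow, mul_pow, mul_pow, mul_pow, mul_pow]
        field_simp
      rw [e2, ← mul_assoc, e4]; ring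
    rw [e1]
    gcongr
    calc (3 * b * l) ^ m * Real.exp (-(c' / 2 * l)) ^ (2 * (m+1))
        ≤ Real.exp (c'/2 * l) ^ m * Real.exp (-(c' / 2 * l)) ^ (2 * (m+1)) := by gcongr
      _ = Real.exp (-(c' / 2 * l)) ^ (m + 2) := by
        rw [← Real.exp_nat_mul, ← Real.exp_nat_mul, ← Real.exp_nat_mul, ← Real.exp_add]
        congr 1; push_cast; ring
      _ ≤ (1/2) ^ (m+2) := by gcongr
      _ ≤ (1/2) ^ (m+1) := by
        apply pow_le_pow_of_le_one <;> norm_num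
  refine (Finset.sum_le_sum hterm).trans ?_
  rw [← Finset.mul_sum]
  have hgeo : ∑ m ∈ Finset.range (n.choose j), (1/2:ℝ)^(m+1) ≤ 1 := by
    have : ∀ x : ℕ, ∑ m ∈ Finset.range x, (1/2:ℝ)^(m+1) = 1 - (1/2)^x := by
      intro x
      induction x with
      | zero => simp
      | succ x ih => rw [Finset.sum_range_succ, ih]; ring
    rw [this]
    have : (0:ℝ) ≤ (1/2)^(n.choose j) := by positivity
    linarith
  calc _ ≤ (3 * M * Real.exp (-(11/4 * l))) * 1 := by gcongr
    _ = D * ((3 * l) * Real.exp (-(11/4 * l))) := by rw [hMl]; ring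
    _ ≤ D * (Real.exp (1/4 * l) * Real.exp (-(11/4 * l))) := by gcongr
    _ = _ := by rw [← Real.exp_add]; congr 2; ring

lemma geo_bound (D : ℝ) (hD : 1 ≤ D) (m N : ℕ) :
    ∑ M ∈ Finset.Icc m N, D * Real.exp (-(5/2 * ((M:ℝ) / D))) ≤
      2 * D ^ 2 * Real.exp (-(5/2 * ((m:ℝ) / D))) := by
  have hD0 : 0 < D := by linarith
  set x : ℝ := 5/2 / D with hx
  have hx0 : 0 < x := by positivity
  set r : ℝ := Real.exp (-x) with hr
  have hr0 : 0 < r := Real.exp_pos _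
  have e : ∀ M : ℕ, Real.exp (-(5/2 * ((M:ℝ) / D))) = r ^ M := by
    intro M
    rw [hr, ← Real.exp_nat_mul, hx]; congr 1; ring
  simp_rw [e]
  rw [← Finset.mul_sum]
  have hr1 : r * (1 + x) ≤ 1 := by
    rw [hr, Real.exp_neg]
    have h1 := Real.add_one_le_exp x
    rw [inv_mul_le_iff₀ (Real.exp_pos _)]; linarith
  have hrlt : r < 1 := by
    rw [hr, Real.exp_lt_one_iff]; linarith
  have hs : ∑ M ∈ Finset.Icc m N, r ^ M ≤ r ^ m / (1 - r) := by
    have : Finset.Icc m N = Finset.Ico m (N+1) := by ext; simp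
    rw [this]
    exact geom_sum_Ico_le_of_lt_one hr0.le hrlt
  have h2 : r ^ m / (1 - r) ≤ 2 * D * r ^ m := by
    rw [div_le_iff₀ (by linarith)]
    have hxD : x * D = 5/2 := by rw [hx]; field_simp
    have : 1 ≤ 2 * D * (1 - r) := by
      have h3 : r * (D + 5/2) ≤ D := by nlinarith
      have h4 : r ≤ D / (D + 5/2) := by rw [le_div_iff₀ (by positivity)]; exact h3
      have h5 : 1 - D / (D + 5/2) = (5/2) / (D + 5/2) := by field_simp; ring
      have h6 : (5/2) / (D + 5/2) ≤ 1 - r := by linarith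
      have h7 : 1 ≤ 2 * D * ((5/2) / (D + 5/2)) := by
        rw [← mul_div_assoc, le_div_iff₀ (by positivity)]; linarith
      refine h7.trans ?_
      gcongr
    have hrm : 0 ≤ r ^ m := by positivity
    nlinarith
  calc D * ∑ M ∈ Finset.Icc m N, r ^ M ≤ D * (2 * D * r ^ m) := by
        gcongr; exact hs.trans h2
    _ = _ := by ring

set_option maxHeartbeats 2000000 in
lemma main_bound (k j : ℕ) (hk : 3 ≤ k) (hj : 1 ≤ j) (hjk : j < k) :
    ∃ l0 : ℝ, 1 ≤ l0 ∧ ∃ n0 : ℕ, ∀ n, n0 ≤ n → ∀ L δ : ℝ, L = Real.log (n.choose j : ℕ) →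
      2 * l0 ≤ L → 200 * (k.choose j : ℕ) ≤ ((n.choose j : ℕ) : ℝ) → 0 ≤ δ → δ ≤ 1/184 →
      k * L ≤ δ * ((n - j : ℕ) : ℝ) →
      1 - pr n k (fun σ => hitConn n k j σ = hitIso n k j σ) ≤
        Real.exp (-(L/20)) + (Real.exp δ - 1) + 2 * Real.exp (-(L/4)) := by
  obtain ⟨l0, hl0, n0, hstep⟩ := step_bound k j hk hj hjk
  refine ⟨l0, hl0, max n0 k, ?_⟩
  intro n hn L δ hL hLl hNjb hδ0 hδ1 hLδ
  have hnk : k ≤ n := (le_max_right _ _).trans hn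
  have hnd := nd_rel n k j hjk
  have hdd := dd_rel n k j hjk hnk
  have hstep' := hstep n ((le_max_left _ _).trans hn)
  have hsm := fun M => second_moment (M := M) hjk hnk _ _ _ _ rfl rfl rfl rfl
  have hbb := fun M0 => bad_bound (n := n) (k := k) (j := j) (M0 := M0)
  have hd'pos : 0 < (n - (j+1)).choose (k - (j+1)) := Nat.choose_pos (by omega)
  have hdposN : 0 < (n - j).choose (k - j) := Nat.choose_pos (by omega)
  have hNposN : 0 < n.choose k := Nat.choose_pos (by omega)
  have hNjposN : 0 < n.choose j := Nat.choose_pos (by omega)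
  have hbpos : 3 ≤ k.choose j := choose_ge_three hk hj hjk
  simp only [card_kSets] at hsm hbb hstep'
  generalize (n - (j+1)).choose (k - (j+1)) = d' at *
  generalize (n - j).choose (k - j) = d at *
  generalize n.choose k = N at *
  generalize n.choose j = Nj at *
  generalize k.choose j = b at *
  have hdpos : (0:ℝ) < d := by exact_mod_cast hdposN
  have hNpos : (0:ℝ) < N := by exact_mod_cast hNposN
  have hNjpos : (0:ℝ) < Nj := by exact_mod_cast hNjposN
  have hb3 : (3:ℝ) ≤ b := by exact_mod_cast hbpos
  obtain ⟨D, hD⟩ : ∃ D : ℝ, D = N / d := ⟨_, rfl⟩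
  have hDpos : 0 < D := by rw [hD]; positivity
  have hND : (N:ℝ) = D * d := by rw [hD]; field_simp
  have hNjD : (Nj:ℝ) = b * D := by
    have h' : (N:ℝ) * b = Nj * d := by exact_mod_cast hnd
    rw [hND] at h'
    have : (Nj : ℝ) * d = (b * D) * d := by linarith
    exact mul_right_cancel₀ hdpos.ne' this
  have hD200 : 200 ≤ D := by
    rw [hNjD] at hNjb
    have : (b:ℝ) * 200 ≤ b * D := by linarith
    exact le_of_mul_le_mul_left this (by linarith)
  have hL2 : 2 ≤ L := by linarith
  have heL : Real.exp L = Nj := by rw [hL, Real.exp_log hNjpos]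
  have hnj : (0:ℝ) < ((n - j : ℕ) : ℝ) := by exact_mod_cast (by omega : 0 < n - j)
  have hkpos : (0:ℝ) < k := by exact_mod_cast (by omega : 0 < k)
  have hdd1 : ((n - j : ℕ) : ℝ) * d' ≤ d * k := by
    have : (n - j) * d' ≤ d * k := by rw [hdd]; gcongr; omega
    exact_mod_cast this
  have hd'1 : (1:ℝ) ≤ d' := by exact_mod_cast hd'pos
  have hd'L : d' * L ≤ δ * d := by
    have h1 : (k * L) * (((n - j : ℕ) : ℝ) * d') ≤ (δ * ((n - j : ℕ) : ℝ)) * (d * k) := by gcongr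
    have h2 : (k * ((n - j : ℕ) : ℝ)) * (d' * L) ≤ (k * ((n - j : ℕ) : ℝ)) * (δ * d) := by linarith
    exact le_of_mul_le_mul_left h2 (by positivity)
  have hLd : 184 * L ≤ d := by nlinarith
  obtain ⟨M0, hM0⟩ : ∃ M0 : ℕ, M0 = ⌈9/10 * D * L⌉₊ := ⟨_, rfl⟩
  have hM0l : 9/10 * D * L ≤ M0 := by rw [hM0]; exact Nat.le_ceil _
  have hM0u : (M0:ℝ) ≤ 92/100 * (D * L) := by
    have h1 : (M0:ℝ) < 9/10 * D * L + 1 := by rw [hM0]; exact Nat.ceil_lt_add_one (by positivity)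
    nlinarith
  have hM0N : 200 * (M0:ℝ) ≤ N := by
    rw [hND]; nlinarith
  have hdN : 200 * (d:ℝ) ≤ N := by
    rw [hND]; nlinarith
  have hM0le : M0 ≤ N := by
    have : (M0:ℝ) ≤ N := by linarith [(Nat.cast_nonneg M0 : (0:ℝ) ≤ M0)]
    exact_mod_cast this
  have h1 := hbb M0 hM0le
  have h2 := hsm M0 (by
      have : (2:ℝ) * d ≤ N := by linarith
      exact_mod_cast this) (by
      have : (M0:ℝ) + d < N := by linarith
      exact_mod_cast this)
  have hden : 99/100 * (N:ℝ) ≤ N - d - M0 := by linarith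
  have hdenpos : 0 < (N:ℝ) - d - M0 := by linarith
  have hx1 : (d:ℝ) * M0 / (N - d - M0) ≤ 95/100 * L := by
    rw [div_le_iff₀ hdenpos]
    calc (d:ℝ) * M0 ≤ d * (92/100 * (D * L)) := by gcongr
      _ = 92/100 * L * N := by rw [hND]; ring
      _ ≤ 95/100 * L * (99/100 * N) := by linarith [mul_pos (show 0 < L by linarith) hNpos]
      _ ≤ _ := by gcongr
  have hx2 : (d':ℝ) * M0 / (N - d - M0) ≤ δ := by
    rw [div_le_iff₀ hdenpos]
    calc (d':ℝ) * M0 ≤ d' * (92/100 * (D * L)) := by gcongr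
      _ = 92/100 * D * (d' * L) := by ring
      _ ≤ 92/100 * D * (δ * d) := by gcongr
      _ = δ * (92/100 * N) := by rw [hND]; ring
      _ ≤ _ := by gcongr; linarith
  have h3 : Real.exp ((d:ℝ) * M0 / (N - d - M0)) / Nj ≤ Real.exp (-(L/20)) := by
    rw [← heL, ← Real.exp_sub]
    gcongr; linarith
  have h4 : Real.exp ((d':ℝ) * M0 / (N - d - M0)) ≤ Real.exp δ := by gcongr
  have h5 : ∑ M ∈ Finset.Icc M0 N, uniformProb n k M (fun H => NoIso n j H ∧ ¬ JConnectedHG n j H) ≤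
      2 * Real.exp (-(L/4)) := by
    calc _ ≤ ∑ M ∈ Finset.Icc M0 N, D * Real.exp (-(5/2 * ((M:ℝ) / D))) := by
          apply Finset.sum_le_sum
          intro M hM
          rw [Finset.mem_Icc] at hM
          apply hstep' M hM.2 D hD
          have : (M0:ℝ) ≤ M := by exact_mod_cast hM.1
          refine le_trans ?_ (hM0l.trans this)
          nlinarith
      _ ≤ 2 * D ^ 2 * Real.exp (-(5/2 * ((M0:ℝ) / D))) := geo_bound D (by linarith) _ _
      _ ≤ 2 * (Real.exp L) ^ 2 * Real.exp (-(5/2 * (9/10 * L))) := by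
        have hDe : D ≤ Real.exp L := by rw [heL, hNjD]; nlinarith
        have : 9/10 * L ≤ M0 / D := by rw [le_div_iff₀ hDpos]; linarith
        gcongr
      _ = 2 * Real.exp (-(L/4)) := by
        rw [mul_assoc, ← Real.exp_nat_mul, ← Real.exp_add]; congr 2; push_cast; ring
  linarith

theorem hitting_time_connectivity' (k j : ℕ) (hk : 3 ≤ k) (hj : 1 ≤ j) (hjk : j ≤ k - 1) :
    Tendsto (fun n : ℕ => pr n k (fun σ => hitConn n k j σ = hitIso n k j σ)) atTop (nhds 1) := by
  obtain ⟨l0, hl0, n0, hmain⟩ := main_bound k j hk hj (by omega)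
  have hcast : Tendsto (fun n : ℕ => (n:ℝ)) atTop atTop := tendsto_natCast_atTop_atTop
  have hNj : Tendsto (fun n : ℕ => ((n.choose j : ℕ) : ℝ)) atTop atTop := by
    have hC : (0:ℝ) < 2 ^ j * (j.factorial : ℝ) := by positivity
    have h1 : Tendsto (fun n : ℕ => (n:ℝ) / (2 ^ j * (j.factorial : ℝ))) atTop atTop :=
      hcast.atTop_div_const hC
    refine tendsto_atTop_mono' _ ?_ h1
    filter_upwards [eventually_ge_atTop (2 * j), eventually_ge_atTop 1] with n hn hn1
    rw [div_le_iff₀ hC]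
    have h2 := choose_lower n j hn
    have h3 : (n:ℝ) ≤ (n:ℝ)^j := le_self_pow₀ (by exact_mod_cast hn1) (by omega)
    linarith
  have hL : Tendsto (fun n : ℕ => Real.log ((n.choose j : ℕ) : ℝ)) atTop atTop :=
    Real.tendsto_log_atTop.comp hNj
  have hδ : Tendsto (fun n : ℕ => (2 * k * j : ℝ) * (Real.log n / n)) atTop (nhds 0) := by
    have h1 : Tendsto (fun x : ℝ => Real.log x / x) atTop (nhds 0) :=
      Real.isLittleO_log_id_atTop.tendsto_div_nhds_zero
    have := (h1.comp hcast).const_mul (2 * k * j : ℝ)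
    rw [mul_zero] at this
    exact this
  have hup : Tendsto (fun n : ℕ => 1 - (Real.exp (-(Real.log ((n.choose j : ℕ) : ℝ)/20)) +
      (Real.exp ((2 * k * j : ℝ) * (Real.log n / n)) - 1) +
      2 * Real.exp (-(Real.log ((n.choose j : ℕ) : ℝ)/4)))) atTop (nhds 1) := by
    have a1 := Real.tendsto_exp_neg_atTop_nhds_zero.comp (hL.atTop_div_const (show (0:ℝ) < 20 by norm_num))
    have a2 := Real.tendsto_exp_neg_atTop_nhds_zero.comp (hL.atTop_div_const (show (0:ℝ) < 4 by norm_num))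
    have a3 := (Real.continuous_exp.tendsto 0).comp hδ
    have := tendsto_const_nhds (x := (1:ℝ)).sub ((a1.add (a3.sub_const 1)).add (a2.const_mul 2))
    simpa [Function.comp_def] using this
  refine tendsto_of_tendsto_of_tendsto_of_le_of_le' hup tendsto_const_nhds ?_ ?_
  · filter_upwards [eventually_ge_atTop n0, eventually_ge_atTop (2 * j), eventually_ge_atTop 1,
      hL.eventually_ge_atTop (2 * l0), hNj.eventually_ge_atTop (200 * (k.choose j : ℕ)),
      hδ.eventually (ge_mem_nhds (show (0:ℝ) < 1/184 by norm_num))] with n h1 h2 h3 h4 h5 h6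
    have hn1 : (1:ℝ) ≤ n := by exact_mod_cast h3
    have hlog : 0 ≤ Real.log n := Real.log_nonneg hn1
    have := hmain n h1 _ ((2 * k * j : ℝ) * (Real.log n / n)) rfl h4 h5 (by positivity) h6 (by
      have h7 : Real.log ((n.choose j : ℕ) : ℝ) ≤ j * Real.log n := by
        rw [← Real.log_pow]
        apply Real.log_le_log
        · exact_mod_cast Nat.choose_pos (by omega)
        · exact_mod_cast Nat.choose_le_pow n j
      have h8 : (n:ℝ) / 2 ≤ ((n - j : ℕ) : ℝ) := by
        rw [Nat.cast_sub (by omega)]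
        have : (2:ℝ) * j ≤ n := by exact_mod_cast h2
        linarith
      calc (k:ℝ) * Real.log ((n.choose j : ℕ) : ℝ) ≤ k * (j * Real.log n) := by gcongr
        _ = (2 * k * j : ℝ) * (Real.log n / n) * (n / 2) := by field_simp
        _ ≤ _ := by gcongr)
    linarith
  · filter_upwards with n
    unfold pr
    apply div_le_one_of_le₀ _ (by positivity)
    exact_mod_cast (Finset.card_le_univ _)

/-- **Theorem 1 (hitting time).** For `k ≥ 3` and `1 ≤ j ≤ k-1`, with high probability the
random `k`-uniform hypergraph process satisfies `τ_c = τ_i`: the proportion of orderings of the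
`k`-sets for which the process becomes `j`-connected exactly when the last isolated `j`-set
disappears tends to `1` as `n → ∞`. -/
theorem hitting_time_connectivity (k j : ℕ) (hk : 3 ≤ k) (hj : 1 ≤ j) (hjk : j ≤ k - 1) :
    Tendsto (fun n : ℕ =>
        (Nat.card {σ : Fin (kSets n k).card ≃ {E // E ∈ kSets n k} //
            hitConn n k j σ = hitIso n k j σ} : ℝ) /
          (Nat.card (Fin (kSets n k).card ≃ {E // E ∈ kSets n k}) : ℝ))
      atTop (nhds 1) := by
  refine (hitting_time_connectivity' k j hk hj hjk).congr ?_
  intro n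
  rw [pr, Nat.card_eq_fintype_card, Nat.card_eq_fintype_card, Fintype.card_subtype]
  congr!

end
end

section
/- Let k ≥ 3 and 1 ≤ j ≤ k−1 be integers, let s ≥ 0 be a fixed integer and c a real constant, and suppose p = (j·log n + s·log log n + c_n)/C(n,k−j) where c_n → c as n → ∞. Let D_s be the number of j-sets of degree exactly s in H^k(n,p). Then D_s converges in distribution to the Poisson distribution with mean j^s·e^{−c}/(j!·s!). -/
open Filter Asymptotics

open scoped Classical

noncomputable section

namespace PC

/-- Expectation of `f` on a `p`-random subset of `S`. -/
def Ex {α : Type} (p : ℝ) (S : Finset α) (f : Finset α → ℝ) : ℝ :=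
  ∑ H ∈ S.powerset, p ^ H.card * (1 - p) ^ (S.card - H.card) * f H

theorem Ex_const {α : Type} (p : ℝ) (S : Finset α) (a : ℝ) : Ex p S (fun _ => a) = a := by
  unfold Ex
  rw [← Finset.sum_mul, Finset.sum_pow_mul_eq_add_pow]
  simp

theorem Ex_congr {α : Type} (p : ℝ) (S : Finset α) (f g : Finset α → ℝ)
    (h : ∀ H, H ⊆ S → f H = g H) : Ex p S f = Ex p S g := by
  unfold Ex
  refine Finset.sum_congr rfl fun H hH => ?_
  rw [h H (Finset.mem_powerset.1 hH)]

theorem Ex_mono {α : Type} (p : ℝ) (h0 : 0 ≤ p) (h1 : p ≤ 1) (S : Finset α) (f g : Finset α → ℝ)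
    (h : ∀ H, H ⊆ S → f H ≤ g H) : Ex p S f ≤ Ex p S g := by
  unfold Ex
  refine Finset.sum_le_sum fun H hH => ?_
  have h2 : 0 ≤ 1 - p := by linarith
  exact mul_le_mul_of_nonneg_left (h H (Finset.mem_powerset.1 hH)) (by positivity)

theorem Ex_sum {α ι : Type} (p : ℝ) (S : Finset α) (T : Finset ι) (f : ι → Finset α → ℝ) :
    Ex p S (fun H => ∑ i ∈ T, f i H) = ∑ i ∈ T, Ex p S (f i) := by
  unfold Ex
  simp_rw [Finset.mul_sum]
  rw [Finset.sum_comm]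

theorem Ex_mul_left {α : Type} (p : ℝ) (S : Finset α) (a : ℝ) (f : Finset α → ℝ) :
    Ex p S (fun H => a * f H) = a * Ex p S f := by
  unfold Ex
  rw [Finset.mul_sum]
  exact Finset.sum_congr rfl fun _ _ => by ring

theorem Ex_mul_right {α : Type} (p : ℝ) (S : Finset α) (a : ℝ) (f : Finset α → ℝ) :
    Ex p S (fun H => f H * a) = Ex p S f * a := by
  unfold Ex
  rw [Finset.sum_mul]
  exact Finset.sum_congr rfl fun _ _ => by ring

theorem Ex_sub {α : Type} (p : ℝ) (S : Finset α) (f g : Finset α → ℝ) :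
    Ex p S (fun H => f H - g H) = Ex p S f - Ex p S g := by
  unfold Ex
  rw [← Finset.sum_sub_distrib]
  exact Finset.sum_congr rfl fun _ _ => by ring

theorem Ex_abs {α : Type} (p : ℝ) (h0 : 0 ≤ p) (h1 : p ≤ 1) (S : Finset α)
    (f : Finset α → ℝ) : |Ex p S f| ≤ Ex p S (fun H => |f H|) := by
  unfold Ex
  refine (Finset.abs_sum_le_sum_abs _ _).trans (le_of_eq ?_)
  refine Finset.sum_congr rfl fun H hH => ?_
  have h2 : 0 ≤ 1 - p := by linarith
  rw [abs_mul, abs_of_nonneg (by positivity)]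

theorem Ex_union {α : Type} [DecidableEq α] (p : ℝ) (A B : Finset α) (hAB : Disjoint A B)
    (f : Finset α → ℝ) :
    Ex p (A ∪ B) f = Ex p A (fun a => Ex p B (fun b => f (a ∪ b))) := by
  unfold Ex
  simp_rw [Finset.mul_sum]
  rw [← Finset.sum_product']
  refine Finset.sum_nbij' (fun H => (H ∩ A, H ∩ B)) (fun x => x.1 ∪ x.2) ?_ ?_ ?_ ?_ ?_
  · intro H hH
    simp only [Finset.mem_product, Finset.mem_powerset]
    exact ⟨Finset.inter_subset_right, Finset.inter_subset_right⟩
  · rintro ⟨a, b⟩ h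
    simp only [Finset.mem_product, Finset.mem_powerset] at h ⊢
    exact Finset.union_subset_union h.1 h.2
  · intro H hH
    simp only [Finset.mem_powerset] at hH
    simp only
    rw [← Finset.inter_union_distrib_left]
    exact Finset.inter_eq_left.2 hH
  · rintro ⟨a, b⟩ h
    simp only [Finset.mem_product, Finset.mem_powerset] at h
    rw [Finset.disjoint_left] at hAB
    ext x
    · simp only [Finset.mem_inter, Finset.mem_union]
      constructor
      · rintro ⟨h1 | h1, h2⟩
        · exact h1
        · exact absurd (h.2 h1) (hAB h2)
      · exact fun h1 => ⟨Or.inl h1, h.1 h1⟩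
    · simp only [Finset.mem_inter, Finset.mem_union]
      constructor
      · rintro ⟨h1 | h1, h2⟩
        · exact absurd h2 (hAB (h.1 h1))
        · exact h1
      · exact fun h1 => ⟨Or.inr h1, h.2 h1⟩
  · intro H hH
    simp only [Finset.mem_powerset] at hH
    have e : H = (H ∩ A) ∪ (H ∩ B) := by
      rw [← Finset.inter_union_distrib_left]
      exact (Finset.inter_eq_left.2 hH).symm
    have hd : Disjoint (H ∩ A) (H ∩ B) :=
      Finset.disjoint_of_subset_left Finset.inter_subset_right
        (Finset.disjoint_of_subset_right Finset.inter_subset_right hAB)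
    have c1 : H.card = (H ∩ A).card + (H ∩ B).card := by
      conv_lhs => rw [e]
      exact Finset.card_union_of_disjoint hd
    have c2 : (H ∩ A).card ≤ A.card := Finset.card_le_card Finset.inter_subset_right
    have c3 : (H ∩ B).card ≤ B.card := Finset.card_le_card Finset.inter_subset_right
    have c4 : (A ∪ B).card - H.card = (A.card - (H ∩ A).card) + (B.card - (H ∩ B).card) := by
      rw [Finset.card_union_of_disjoint hAB]; omega
    simp only
    rw [← e, c4, c1, pow_add, pow_add]
    ring

/-- Binomial point probability. -/
def g (p : ℝ) (N t : ℕ) : ℝ := (N.choose t : ℝ) * p ^ t * (1 - p) ^ (N - t)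

theorem Ex_card {α : Type} (p : ℝ) (S : Finset α) (t : ℕ) :
    Ex p S (fun H => if H.card = t then 1 else 0) = g p S.card t := by
  unfold Ex g
  simp only [mul_ite, mul_one, mul_zero]
  rw [← Finset.sum_filter, ← Finset.powersetCard_eq_filter]
  rw [Finset.sum_congr rfl (g := fun _ => p ^ t * (1 - p) ^ (S.card - t))]
  · rw [Finset.sum_const, Finset.card_powersetCard, nsmul_eq_mul]; ring
  · intro H hH
    rw [(Finset.mem_powersetCard.1 hH).2]

theorem Ex_indep {α ι : Type} [DecidableEq α] [DecidableEq ι] (p : ℝ) (A : ι → Finset α)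
    (f : ι → Finset α → ℝ) (I : Finset ι) :
    ∀ S : Finset α, (∀ i ∈ I, A i ⊆ S) → (∀ i ∈ I, ∀ l ∈ I, i ≠ l → Disjoint (A i) (A l)) →
    Ex p S (fun H => ∏ i ∈ I, f i (H ∩ A i)) = ∏ i ∈ I, Ex p (A i) (f i) := by
  induction I using Finset.induction_on with
  | empty => intro S _ _; simpa using Ex_const p S 1
  | insert i I hi ih =>
    intro S hS hd
    have hSi : S = A i ∪ (S \ A i) :=
      (Finset.union_sdiff_of_subset (hS i (Finset.mem_insert_self _ _))).symm
    rw [Finset.prod_insert hi]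
    rw [hSi, Ex_union p _ _ Finset.disjoint_sdiff]
    rw [← ih (S \ A i), ← Ex_mul_right]
    · refine Ex_congr _ _ _ _ fun a ha => ?_
      rw [← Ex_mul_left]
      refine Ex_congr _ _ _ _ fun b hb => ?_
      rw [Finset.prod_insert hi]
      congr 1
      · congr 1
        rw [Finset.union_inter_distrib_right, Finset.inter_eq_left.2 ha]
        have : b ∩ A i = ∅ := by
          rw [← Finset.disjoint_iff_inter_eq_empty]
          exact Finset.disjoint_of_subset_left hb Finset.sdiff_disjoint
        rw [this, Finset.union_empty]
      · refine Finset.prod_congr rfl fun l hl => ?_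
        congr 1
        rw [Finset.union_inter_distrib_right]
        have : a ∩ A l = ∅ := by
          rw [← Finset.disjoint_iff_inter_eq_empty]
          refine Finset.disjoint_of_subset_left ha (hd i (Finset.mem_insert_self _ _) l
            (Finset.mem_insert_of_mem hl) ?_)
          rintro rfl; exact hi hl
        rw [this, Finset.empty_union]
    · intro l hl
      refine Finset.subset_sdiff.2 ⟨hS l (Finset.mem_insert_of_mem hl), ?_⟩
      refine hd l (Finset.mem_insert_of_mem hl) i (Finset.mem_insert_self _ _) ?_
      rintro rfl; exact hi hl
    · intro l hl m hm hlm
      exact hd l (Finset.mem_insert_of_mem hl) m (Finset.mem_insert_of_mem hm) hlm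

/-- Joint degree event: rewritten by conditioning on the overlap set `O`. -/
theorem Ex_joint {α ι : Type} [DecidableEq α] [DecidableEq ι] (p : ℝ) (E : ι → Finset α)
    (I : Finset ι) (S O : Finset α) (s : ℕ) (hE : ∀ i ∈ I, E i ⊆ S) (hO : O ⊆ S)
    (hd : ∀ i ∈ I, ∀ l ∈ I, i ≠ l → E i ∩ E l ⊆ O) :
    Ex p S (fun H => ∏ i ∈ I, if (H ∩ E i).card = s then (1 : ℝ) else 0) =
    Ex p O (fun o => ∏ i ∈ I, if (o ∩ E i).card ≤ s then
      g p (E i \ O).card (s - (o ∩ E i).card) else 0) := by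
  conv_lhs => rw [← Finset.union_sdiff_of_subset hO]
  rw [Ex_union p _ _ Finset.disjoint_sdiff]
  refine Ex_congr _ _ _ _ fun o ho => ?_
  have h1 := Ex_indep p (fun i => E i \ O)
    (fun i H => if H.card + (o ∩ E i).card = s then (1 : ℝ) else 0) I (S \ O)
    (fun i hi => Finset.sdiff_subset_sdiff (hE i hi) (le_refl _))
    (fun i hi l hl hil => by
      rw [Finset.disjoint_left]
      intro x hx hx'
      simp only [Finset.mem_sdiff] at hx hx'
      exact hx.2 (hd i hi l hl hil (Finset.mem_inter.2 ⟨hx.1, hx'.1⟩)))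
  refine Eq.trans ?_ (h1.trans ?_)
  · refine Ex_congr _ _ _ _ fun b hb => ?_
    refine Finset.prod_congr rfl fun i hi => ?_
    have : ((o ∪ b) ∩ E i).card = (b ∩ (E i \ O)).card + (o ∩ E i).card := by
      rw [← Finset.card_union_of_disjoint]
      · congr 1
        ext x
        have hbx : x ∈ b → x ∉ O := fun h => (Finset.mem_sdiff.1 (hb h)).2
        simp only [Finset.mem_union, Finset.mem_inter, Finset.mem_sdiff]
        tauto
      · rw [Finset.disjoint_left]
        intro x hx hx'
        exact (Finset.mem_sdiff.1 (Finset.mem_inter.1 hx).2).2 (ho (Finset.mem_inter.1 hx').1)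
    rw [this]
  · refine Finset.prod_congr rfl fun i hi => ?_
    split_ifs with h
    · rw [← Ex_card]
      refine Ex_congr _ _ _ _ fun H _ => ?_
      have : H.card + (o ∩ E i).card = s ↔ H.card = s - (o ∩ E i).card := by omega
      simp only [this]
    · refine Eq.trans (Ex_congr _ _ _ (fun _ => 0) fun H _ => ?_) (Ex_const p (E i \ O) 0)
      rw [if_neg (by omega)]

theorem Ex_joint_bounds {α ι : Type} [DecidableEq α] [DecidableEq ι] (p : ℝ) (h0 : 0 ≤ p)
    (h1 : p ≤ 1) (E : ι → Finset α)
    (I : Finset ι) (S O : Finset α) (s : ℕ) (hE : ∀ i ∈ I, E i ⊆ S) (hO : O ⊆ S)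
    (hd : ∀ i ∈ I, ∀ l ∈ I, i ≠ l → E i ∩ E l ⊆ O) (lo hi : ℝ) (hlo : 0 ≤ lo)
    (hlo' : ∀ i ∈ I, lo ≤ g p (E i \ O).card s)
    (hhi : ∀ i ∈ I, ∀ t ≤ s, g p (E i \ O).card t ≤ hi) (hhi0 : 0 ≤ hi) :
    (1 - p) ^ O.card * lo ^ I.card ≤
      Ex p S (fun H => ∏ i ∈ I, if (H ∩ E i).card = s then (1 : ℝ) else 0) ∧
    Ex p S (fun H => ∏ i ∈ I, if (H ∩ E i).card = s then (1 : ℝ) else 0) ≤ hi ^ I.card := by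
  rw [Ex_joint p E I S O s hE hO hd]
  have h2 : 0 ≤ 1 - p := by linarith
  have gnn : ∀ N t, 0 ≤ g p N t := fun N t => by unfold g; positivity
  constructor
  · unfold Ex
    have := Finset.single_le_sum (s := O.powerset)
      (f := fun H => p ^ H.card * (1 - p) ^ (O.card - H.card) *
        ∏ i ∈ I, if (H ∩ E i).card ≤ s then g p (E i \ O).card (s - (H ∩ E i).card) else 0)
      (fun H _ => by
        refine mul_nonneg (by positivity) (Finset.prod_nonneg fun i _ => ?_)
        split_ifs
        · exact gnn _ _
        · exact le_refl _) (Finset.empty_mem_powerset O)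
    refine le_trans ?_ this
    simp only [Finset.card_empty, pow_zero, one_mul, Nat.sub_zero, Finset.empty_inter,
      Nat.zero_le, if_true]
    refine mul_le_mul_of_nonneg_left ?_ (by positivity)
    rw [← Finset.prod_const]
    exact Finset.prod_le_prod (fun _ _ => hlo) hlo'
  · rw [← Ex_const p O (hi ^ I.card)]
    refine Ex_mono p h0 h1 _ _ _ fun o _ => ?_
    rw [← Finset.prod_const]
    refine Finset.prod_le_prod (fun i _ => ?_) (fun i hi' => ?_)
    · split_ifs
      · exact gnn _ _
      · exact le_refl _
    · split_ifs
      · exact hhi i hi' _ (by omega)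
      · exact hhi0

theorem g_step (p : ℝ) (N t : ℕ) (ht : t < N) :
    g p N t * (p * (N - t)) = g p N (t + 1) * ((t + 1) * (1 - p)) := by
  unfold g
  have h := Nat.choose_succ_right_eq N t
  have h' : (N.choose (t + 1) : ℝ) * (t + 1) = N.choose t * (N - t) := by
    rw [← Nat.cast_sub ht.le]; exact_mod_cast h
  have e : N - t = (N - (t + 1)) + 1 := by omega
  rw [e, pow_succ, pow_succ]
  linear_combination (-(p ^ t * p * (1 - p) ^ (N - (t + 1)) * (1 - p))) * h'

theorem g_mono (p : ℝ) (h0 : 0 ≤ p) (h1 : p ≤ 1) (N s : ℕ) (hs : s ≤ N)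
    (h : (s : ℝ) + 1 ≤ p * (N - s)) (t : ℕ) (ht : t ≤ s) : g p N t ≤ g p N s := by
  have h2 : 0 ≤ 1 - p := by linarith
  have gnn : ∀ N t, 0 ≤ g p N t := fun N t => by unfold g; positivity
  have key : ∀ t, t < s → g p N t ≤ g p N (t + 1) := by
    intro t ht
    have e := g_step p N t (by omega)
    have hts : (t : ℝ) + 1 ≤ s := by exact_mod_cast ht
    have a1 : (s : ℝ) + 1 ≤ p * (N - t) := by nlinarith
    have a2 : ((t : ℝ) + 1) * (1 - p) ≤ s + 1 := by nlinarith [Nat.cast_nonneg (α := ℝ) t]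
    have a3 := mul_le_mul_of_nonneg_left a1 (gnn N t)
    have a4 := mul_le_mul_of_nonneg_left a2 (gnn N (t + 1))
    have : (0 : ℝ) < s + 1 := by positivity
    nlinarith
  obtain ⟨d, rfl⟩ := Nat.exists_eq_add_of_le ht
  clear h ht
  have : ∀ d', t + d' ≤ t + d → g p N t ≤ g p N (t + d') := by
    intro d'
    induction d' with
    | zero => intro _; exact le_refl _
    | succ m ih => intro hm; exact (ih (by omega)).trans (key (t + m) (by omega))
  exact this d (le_refl _)

end PC

namespace PC

theorem bonf (D i T : ℕ) :
    |(if D = i then (1 : ℝ) else 0) -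
      ∑ t ∈ Finset.range (T + 1), (-1 : ℝ) ^ t * ((i + t).choose i) * (D.choose (i + t))| ≤
      ((i + T + 1).choose i : ℝ) * (D.choose (i + T + 1)) := by
  have hcm : ∀ t, ((i + t).choose i : ℝ) * (D.choose (i + t)) = D.choose i * (D - i).choose t := by
    intro t
    rcases le_or_gt (i + t) D with h | h
    · have := Nat.choose_mul (n := D) (k := i + t) (s := i) (by omega)
      rw [Nat.add_sub_cancel_left] at this
      rw [mul_comm]
      exact_mod_cast this
    · rw [Nat.choose_eq_zero_of_lt h]
      rcases le_or_gt i D with h' | h'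
      · rw [Nat.choose_eq_zero_of_lt (n := D - i) (k := t) (by omega)]; simp
      · rw [Nat.choose_eq_zero_of_lt h']; simp
  rw [add_assoc, hcm (T + 1)]
  simp_rw [mul_assoc, hcm]
  rcases lt_trichotomy D i with h | h | h
  · rw [if_neg (by omega)]
    simp [Nat.choose_eq_zero_of_lt h]
  · subst h
    rw [if_pos rfl, Finset.sum_range_succ']
    simp
  · rw [if_neg (by omega)]
    obtain ⟨m, hm⟩ : ∃ m, D - i = m + 1 := ⟨D - i - 1, by omega⟩
    rw [hm]
    have e : ∑ t ∈ Finset.range (T + 1), (-1 : ℝ) ^ t * ((D.choose i : ℝ) * ((m + 1).choose t : ℝ))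
        = D.choose i * ((-1) ^ T * m.choose T) := by
      have := @Int.alternating_sum_range_choose_eq_choose m T
      have h2 : (∑ t ∈ Finset.range (T + 1), (-1 : ℝ) ^ t * ((m + 1).choose t : ℝ))
        = (-1) ^ T * m.choose T := by exact_mod_cast this
      rw [← h2, Finset.mul_sum]
      exact Finset.sum_congr rfl fun _ _ => by ring
    rw [e, zero_sub, abs_neg, abs_mul, abs_mul, abs_pow, abs_neg, abs_one, one_pow, one_mul,
      Nat.abs_cast, Nat.abs_cast]
    refine mul_le_mul_of_nonneg_left ?_ (by positivity)
    rw [Nat.choose_succ_succ]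
    push_cast
    have : (0 : ℝ) ≤ m.choose (T + 1) := by positivity
    linarith

theorem tendsto_of_moments (P : ℕ → ℝ) (B : ℕ → ℕ → ℝ) (lam : ℝ) (i : ℕ)
    (hB : ∀ r, Tendsto (fun n => B n r) atTop (nhds (lam ^ r / r.factorial)))
    (hP : ∀ T, ∀ᶠ n in atTop, |P n -
      ∑ t ∈ Finset.range (T + 1), (-1 : ℝ) ^ t * ((i + t).choose i) * (B n (i + t))| ≤
      ((i + T + 1).choose i : ℝ) * (B n (i + T + 1))) :
    Tendsto P atTop (nhds (poissonPMF lam i)) := by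
  have hc : ∀ t, ((i + t).choose i : ℝ) * (lam ^ (i + t) / (i + t).factorial) =
      lam ^ i / i.factorial * (lam ^ t / t.factorial) := by
    intro t
    have : ((i + t).choose i : ℝ) * i.factorial * t.factorial = (i + t).factorial := by
      have h0 := Nat.choose_mul_factorial_mul_factorial (n := i + t) (k := i) (by omega)
      rw [Nat.add_sub_cancel_left] at h0
      exact_mod_cast h0
    have h1 : (i.factorial : ℝ) ≠ 0 := by positivity
    have h2 : (t.factorial : ℝ) ≠ 0 := by positivity
    have h3 : ((i + t).factorial : ℝ) ≠ 0 := by positivity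
    field_simp
    rw [pow_add]
    linear_combination (lam ^ i * lam ^ t) * this
  have hexp : Tendsto (fun T => ∑ t ∈ Finset.range (T + 1), (-1 : ℝ) ^ t * ((i + t).choose i) *
      (lam ^ (i + t) / (i + t).factorial)) atTop (nhds (poissonPMF lam i)) := by
    have h1 : HasSum (fun t : ℕ => (-lam) ^ t / t.factorial) (Real.exp (-lam)) := by
      rw [Real.exp_eq_exp_ℝ]
      exact NormedSpace.expSeries_div_hasSum_exp (-lam)
    have h2 := (h1.mul_left (lam ^ i / i.factorial)).tendsto_sum_nat
    have h3 := h2.comp (tendsto_add_atTop_nat 1)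
    have e : lam ^ i / i.factorial * Real.exp (-lam) = poissonPMF lam i := by
      unfold poissonPMF; ring
    rw [e] at h3
    refine h3.congr fun T => ?_
    simp only [Function.comp]
    refine Finset.sum_congr rfl fun t _ => ?_
    rw [mul_assoc, hc, neg_pow]
    ring
  have herr : Tendsto (fun T => ((i + T + 1).choose i : ℝ) *
      (lam ^ (i + T + 1) / (i + T + 1).factorial)) atTop (nhds 0) := by
    have h1 := (FloorSemiring.tendsto_pow_div_factorial_atTop lam).const_mul
      (lam ^ i / i.factorial)
    rw [mul_zero] at h1
    have h3 := h1.comp (tendsto_add_atTop_nat 1)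
    refine h3.congr fun T => ?_
    simp only [Function.comp]
    rw [add_assoc, hc]
  rw [Metric.tendsto_atTop]
  intro ε hε
  have e1 := (Metric.tendsto_nhds.1 hexp) (ε / 4) (by linarith)
  have e2 := (Metric.tendsto_nhds.1 herr) (ε / 4) (by linarith)
  obtain ⟨T, hT1, hT2⟩ := (e1.and e2).exists
  have l1 : Tendsto (fun n => ∑ t ∈ Finset.range (T + 1), (-1 : ℝ) ^ t * ((i + t).choose i) *
      (B n (i + t))) atTop (nhds (∑ t ∈ Finset.range (T + 1), (-1 : ℝ) ^ t * ((i + t).choose i) *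
      (lam ^ (i + t) / (i + t).factorial))) :=
    tendsto_finsetSum _ fun t _ => (hB (i + t)).const_mul _
  have l2 := (hB (i + T + 1)).const_mul ((i + T + 1).choose i : ℝ)
  have e3 := (Metric.tendsto_nhds.1 l1) (ε / 4) (by linarith)
  have e4 := (Metric.tendsto_nhds.1 l2) (ε / 4) (by linarith)
  obtain ⟨n0, hn0⟩ := ((hP T).and (e3.and e4)).exists_forall_of_atTop
  refine ⟨n0, fun n hn => ?_⟩
  obtain ⟨a1, a2, a3⟩ := hn0 n hn
  rw [Real.dist_eq] at *
  rw [abs_lt] at *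
  rw [abs_le] at a1
  constructor <;> linarith [hT1.1, hT1.2, hT2.1, hT2.2, a2.1, a2.2, a3.1, a3.2, a1.1, a1.2]

theorem card_E (n k : ℕ) (J : Finset (Fin n)) (h : J.card ≤ k) :
    ((kSets n k).filter (fun e => J ⊆ e)).card = (n - J.card).choose (k - J.card) := by
  have := Finset.card_filter_powersetCard_subset J (Finset.univ : Finset (Fin n)) k
    (Finset.subset_univ _) h
  rw [Finset.card_univ, Fintype.card_fin] at this
  exact this

theorem card_codeg (n k j : ℕ) (hjk : j + 1 ≤ k) (a b : Finset (Fin n)) (ha : a.card = j)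
    (hb : b.card = j) (hab : a ≠ b) :
    ((kSets n k).filter (fun e => a ⊆ e ∧ b ⊆ e)).card ≤ (n - (j + 1)).choose (k - (j + 1)) := by
  have : ¬ b ⊆ a := fun h => hab (Finset.eq_of_subset_of_card_le h (by omega)).symm
  obtain ⟨v, hv, hva⟩ := Finset.not_subset.1 this
  have hc : (insert v a).card = j + 1 := by rw [Finset.card_insert_of_notMem hva, ha]
  rw [← hc, ← card_E n k (insert v a) (by omega)]
  refine Finset.card_le_card fun e he => ?_
  rw [Finset.mem_filter] at he ⊢
  exact ⟨he.1, Finset.insert_subset (he.2.2 hv) he.2.1⟩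

theorem g_bounds (p : ℝ) (h0 : 0 ≤ p) (h1 : p ≤ 1) (N N' L s : ℕ) (hN : N' ≤ N)
    (hN' : N - L ≤ N') (hs : L + s ≤ N) (h : (s : ℝ) + 1 ≤ p * (N - L - s)) :
    ((N - L).choose s : ℝ) * p ^ s * (1 - p) ^ (N - s) ≤ g p N' s ∧
    ∀ t ≤ s, g p N' t ≤ (N.choose s : ℝ) * p ^ s * (1 - p) ^ (N - L - s) := by
  have h2 : 0 ≤ 1 - p := by linarith
  have h3 : 1 - p ≤ 1 := by linarith
  constructor
  · unfold g
    have a1 : ((N - L).choose s : ℝ) ≤ N'.choose s := by exact_mod_cast Nat.choose_le_choose s hN'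
    have a2 : (1 - p) ^ (N - s) ≤ (1 - p) ^ (N' - s) := pow_le_pow_of_le_one h2 h3 (by omega)
    gcongr
  · intro t ht
    have a0 : ((N : ℝ) - L) ≤ N' := by
      rw [← Nat.cast_sub (by omega)]; exact_mod_cast hN'
    refine (g_mono p h0 h1 N' s (by omega) (h.trans ?_) t ht).trans ?_
    · exact mul_le_mul_of_nonneg_left (by linarith) h0
    · unfold g
      have a1 : (N'.choose s : ℝ) ≤ N.choose s := by exact_mod_cast Nat.choose_le_choose s hN
      have a2 : (1 - p) ^ (N' - s) ≤ (1 - p) ^ (N - L - s) :=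
        pow_le_pow_of_le_one h2 h3 (by omega)
      gcongr

theorem joint_bounds (n k j s r N M : ℕ) (p : ℝ) (h0 : 0 ≤ p) (h1 : p ≤ 1) (hjk : j + 1 ≤ k)
    (hN : N = (n - j).choose (k - j)) (hM : M = (n - (j + 1)).choose (k - (j + 1)))
    (hs : r * M + s ≤ N) (h : (s : ℝ) + 1 ≤ p * (N - (r * M : ℕ) - s))
    (I : Finset (Finset (Fin n))) (hI : I ∈ Finset.powersetCard r
      (Finset.powersetCard j (Finset.univ : Finset (Fin n)))) :
    (1 - p) ^ (r * (r * M)) * (((N - r * M).choose s : ℝ) * p ^ s * (1 - p) ^ (N - s)) ^ r ≤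
      Ex p (kSets n k) (fun H => if ∀ J ∈ I, setDegree H J = s then (1 : ℝ) else 0) ∧
    Ex p (kSets n k) (fun H => if ∀ J ∈ I, setDegree H J = s then (1 : ℝ) else 0) ≤
      ((N.choose s : ℝ) * p ^ s * (1 - p) ^ (N - r * M - s)) ^ r := by
  have h2 : 0 ≤ 1 - p := by linarith
  have h3 : 1 - p ≤ 1 := by linarith
  rw [Finset.mem_powersetCard] at hI
  obtain ⟨hIs, hIc⟩ := hI
  have hIj : ∀ J ∈ I, J.card = j := fun J hJ => (Finset.mem_powersetCard.1 (hIs hJ)).2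
  set E : Finset (Fin n) → Finset (Finset (Fin n)) :=
    fun J => (kSets n k).filter (fun e => J ⊆ e) with hE
  set O : Finset (Finset (Fin n)) :=
    (kSets n k).filter (fun e => ∃ a ∈ I, ∃ b ∈ I, a ≠ b ∧ a ⊆ e ∧ b ⊆ e) with hO
  have hEO : ∀ a ∈ I, (E a ∩ O).card ≤ r * M := by
    intro a ha
    have hsub : E a ∩ O ⊆ (I.erase a).biUnion
        (fun b => (kSets n k).filter (fun e => a ⊆ e ∧ b ⊆ e)) := by
      intro e he
      simp only [hE, hO, Finset.mem_inter, Finset.mem_filter] at he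
      obtain ⟨⟨hk, hae⟩, -, b, hb, c, hc, hbc, hbe, hce⟩ := he
      simp only [Finset.mem_biUnion, Finset.mem_filter, Finset.mem_erase]
      by_cases hba : b = a
      · exact ⟨c, ⟨by rintro rfl; exact hbc hba, hc⟩, hk, hae, hce⟩
      · exact ⟨b, ⟨hba, hb⟩, hk, hae, hbe⟩
    refine (Finset.card_le_card hsub).trans ?_
    refine (Finset.card_biUnion_le_card_mul _ _ M fun b hb => ?_).trans ?_
    · rw [Finset.mem_erase] at hb
      rw [hM]
      exact card_codeg n k j hjk a b (hIj a ha) (hIj b hb.2) hb.1.symm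
    · exact Nat.mul_le_mul_right _ (by rw [← hIc]; exact Finset.card_erase_le)
  have hOc : O.card ≤ r * (r * M) := by
    have hsub : O ⊆ I.biUnion (fun a => E a ∩ O) := by
      intro e he
      have he' := he
      simp only [hO, Finset.mem_filter] at he'
      obtain ⟨hk, b, hb, c, hc, hbc, hbe, hce⟩ := he'
      simp only [Finset.mem_biUnion, Finset.mem_inter]
      exact ⟨b, hb, by simp only [hE, Finset.mem_filter]; exact ⟨hk, hbe⟩, he⟩
    refine (Finset.card_le_card hsub).trans ?_
    rw [← hIc] at hEO ⊢
    exact Finset.card_biUnion_le_card_mul _ _ _ hEO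
  have hEc : ∀ a ∈ I, (E a).card = N := by
    intro a ha
    have := card_E n k a (by rw [hIj a ha]; omega)
    rw [hIj a ha] at this
    rw [hN]; exact this
  have hgb : ∀ a ∈ I, _ := fun a ha => g_bounds p h0 h1 N (E a \ O).card (r * M) s
    (by rw [← hEc a ha]; exact Finset.card_le_card Finset.sdiff_subset)
    (by
      have := Finset.card_sdiff_add_card_inter (E a) O
      have := hEO a ha
      have := hEc a ha
      omega) hs h
  have key := Ex_joint_bounds p h0 h1 E I (kSets n k) O s (fun a _ => Finset.filter_subset _ _)
    (Finset.filter_subset _ _)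
    (fun a ha b hb hab e he => by
      simp only [hE, Finset.mem_inter, Finset.mem_filter] at he
      simp only [hO, Finset.mem_filter]
      exact ⟨he.1.1, a, ha, b, hb, hab, he.1.2, he.2.2⟩)
    (((N - r * M).choose s : ℝ) * p ^ s * (1 - p) ^ (N - s))
    ((N.choose s : ℝ) * p ^ s * (1 - p) ^ (N - r * M - s)) (by positivity)
    (fun a ha => (hgb a ha).1) (fun a ha => (hgb a ha).2) (by positivity)
  have hcongr : Ex p (kSets n k) (fun H => if ∀ J ∈ I, setDegree H J = s then (1 : ℝ) else 0) =
      Ex p (kSets n k) (fun H => ∏ i ∈ I, if (H ∩ E i).card = s then (1 : ℝ) else 0) := by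
    refine Ex_congr _ _ _ _ fun H hH => ?_
    have hdeg : ∀ J, (H ∩ E J).card = setDegree H J := by
      intro J
      unfold setDegree
      congr 1
      ext e
      simp only [hE, Finset.mem_inter, Finset.mem_filter]
      have := @hH e
      tauto
    simp_rw [hdeg]
    rw [Finset.prod_ite_zero]
    simp
  rw [hcongr]
  rw [hIc] at key
  refine ⟨le_trans ?_ key.1, key.2⟩
  refine mul_le_mul_of_nonneg_right ?_ (by positivity)
  exact pow_le_pow_of_le_one h2 h3 hOc

theorem moment_bounds (n k j s r N M : ℕ) (p : ℝ) (h0 : 0 ≤ p) (h1 : p ≤ 1) (hjk : j + 1 ≤ k)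
    (hN : N = (n - j).choose (k - j)) (hM : M = (n - (j + 1)).choose (k - (j + 1)))
    (hs : r * M + s ≤ N) (h : (s : ℝ) + 1 ≤ p * (N - (r * M : ℕ) - s)) :
    ((n.choose j).choose r : ℝ) * ((1 - p) ^ (r * (r * M)) *
      (((N - r * M).choose s : ℝ) * p ^ s * (1 - p) ^ (N - s)) ^ r) ≤
      Ex p (kSets n k) (fun H => ((numDegSets n j s H).choose r : ℝ)) ∧
    Ex p (kSets n k) (fun H => ((numDegSets n j s H).choose r : ℝ)) ≤
      ((n.choose j).choose r : ℝ) * ((N.choose s : ℝ) * p ^ s * (1 - p) ^ (N - r * M - s)) ^ r := by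
  set PJ := Finset.powersetCard r (Finset.powersetCard j (Finset.univ : Finset (Fin n))) with hPJ
  have hcard : ((n.choose j).choose r : ℝ) = PJ.card := by
    rw [hPJ, Finset.card_powersetCard, Finset.card_powersetCard, Finset.card_univ,
      Fintype.card_fin]
  have hc : Ex p (kSets n k) (fun H => ((numDegSets n j s H).choose r : ℝ)) =
      ∑ I ∈ PJ, Ex p (kSets n k) (fun H => if ∀ J ∈ I, setDegree H J = s then (1 : ℝ) else 0) := by
    rw [← Ex_sum]
    refine Ex_congr _ _ _ _ fun H _ => ?_
    unfold numDegSets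
    rw [← Finset.card_powersetCard, Finset.sum_boole]
    congr 2
    ext I
    simp only [hPJ, Finset.mem_powersetCard, Finset.mem_filter, Finset.subset_iff]
    constructor
    · rintro ⟨a, b⟩
      exact ⟨⟨fun x hx => (a hx).1, b⟩, fun x hx => (a hx).2⟩
    · rintro ⟨⟨a, b⟩, c⟩
      exact ⟨fun x hx => ⟨a hx, c x hx⟩, b⟩
  have hsc : ∀ x : ℝ, (PJ.card : ℝ) * x = ∑ _I ∈ PJ, x := fun x => by
    rw [Finset.sum_const, nsmul_eq_mul]
  rw [hc, hcard, hsc, hsc]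
  exact ⟨Finset.sum_le_sum fun I hI =>
      (joint_bounds n k j s r N M p h0 h1 hjk hN hM hs h I hI).1,
    Finset.sum_le_sum fun I hI => (joint_bounds n k j s r N M p h0 h1 hjk hN hM hs h I hI).2⟩

theorem binomProb_bonf (n k j s i T : ℕ) (p : ℝ) (h0 : 0 ≤ p) (h1 : p ≤ 1) :
    |binomProb n k p (fun H => numDegSets n j s H = i) -
      ∑ t ∈ Finset.range (T + 1), (-1 : ℝ) ^ t * ((i + t).choose i) *
        Ex p (kSets n k) (fun H => ((numDegSets n j s H).choose (i + t) : ℝ))| ≤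
      ((i + T + 1).choose i : ℝ) *
        Ex p (kSets n k) (fun H => ((numDegSets n j s H).choose (i + T + 1) : ℝ)) := by
  have e : binomProb n k p (fun H => numDegSets n j s H = i) =
      Ex p (kSets n k) (fun H => if numDegSets n j s H = i then (1 : ℝ) else 0) := by
    unfold binomProb Ex
    refine Finset.sum_congr rfl fun H _ => ?_
    by_cases hD : numDegSets n j s H = i
    · simp [hD]
    · simp [hD]
  rw [e]
  simp_rw [← Ex_mul_left]
  rw [← Ex_sum, ← Ex_sub]
  refine (Ex_abs p h0 h1 _ _).trans (Ex_mono p h0 h1 _ _ _ fun H _ => ?_)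
  exact bonf _ _ _

end PC

namespace PC

theorem choose_div_pow (u : ℕ → ℕ) (hu : Tendsto u atTop atTop) (s : ℕ) :
    Tendsto (fun n => ((u n).choose s : ℝ) / (u n : ℝ) ^ s) atTop (nhds (1 / s.factorial)) := by
  have h := (isEquivalent_choose s).comp_tendsto hu
  rw [isEquivalent_iff_tendsto_one] at h
  · have h2 := h.mul_const (1 / (s.factorial : ℝ))
    rw [one_mul] at h2
    refine h2.congr' ?_
    filter_upwards [hu.eventually_ge_atTop 1] with n hn
    have : (0 : ℝ) < u n := by exact_mod_cast hn
    have hs : (s.factorial : ℝ) ≠ 0 := by positivity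
    simp only [Pi.div_apply, Function.comp]
    field_simp
  · filter_upwards [hu.eventually_ge_atTop 1] with n hn
    have : (0 : ℝ) < u n := by exact_mod_cast hn
    simp only [Function.comp]
    positivity

theorem one_sub_pow_tendsto (p : ℕ → ℝ) (a : ℕ → ℕ) (hp0 : ∀ᶠ n in atTop, 0 ≤ p n)
    (hp : Tendsto p atTop (nhds 0)) (ha : Tendsto (fun n => p n * a n) atTop (nhds 0)) :
    Tendsto (fun n => (1 - p n) ^ a n) atTop (nhds 1) := by
  have h1 : Tendsto (fun n => 1 - p n * a n) atTop (nhds 1) := by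
    simpa using ha.const_sub 1
  refine tendsto_of_tendsto_of_tendsto_of_le_of_le' h1 tendsto_const_nhds ?_ ?_
  · filter_upwards [hp0, hp.eventually_le_const (show (0 : ℝ) < 1 by norm_num)] with n h h'
    have := one_add_mul_le_pow (a := -p n) (by linarith) (a n)
    rw [← sub_eq_add_neg] at this
    linarith
  · filter_upwards [hp0, hp.eventually_le_const (show (0 : ℝ) < 1 by norm_num)] with n h h'
    exact pow_le_one₀ (by linarith) (by linarith)

theorem moment_limit (m N M : ℕ → ℕ) (p : ℕ → ℝ) (s r : ℕ) (lam : ℝ)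
    (hm : Tendsto m atTop atTop) (hN : Tendsto N atTop atTop)
    (hp0 : ∀ᶠ n in atTop, 0 ≤ p n) (hp : Tendsto p atTop (nhds 0))
    (hpN : Tendsto (fun n => p n * N n) atTop atTop)
    (hpM : Tendsto (fun n => p n * M n) atTop (nhds 0))
    (hMN : Tendsto (fun n => (M n : ℝ) / N n) atTop (nhds 0))
    (hq : Tendsto (fun n => (m n : ℝ) * (((N n).choose s : ℝ) * p n ^ s * (1 - p n) ^ N n)) atTop
      (nhds lam)) :
    (∀ᶠ n in atTop, r * M n + s ≤ N n) ∧
    (∀ᶠ n in atTop, (s : ℝ) + 1 ≤ p n * (N n - (r * M n : ℕ) - s)) ∧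
    Tendsto (fun n => ((m n).choose r : ℝ) * ((1 - p n) ^ (r * (r * M n)) *
      (((N n - r * M n).choose s : ℝ) * p n ^ s * (1 - p n) ^ (N n - s)) ^ r)) atTop
      (nhds (lam ^ r / r.factorial)) ∧
    Tendsto (fun n => ((m n).choose r : ℝ) *
      (((N n).choose s : ℝ) * p n ^ s * (1 - p n) ^ (N n - r * M n - s)) ^ r) atTop
      (nhds (lam ^ r / r.factorial)) := by
  have hNR : Tendsto (fun n => (N n : ℝ)) atTop atTop := tendsto_natCast_atTop_atTop.comp hN
  have hsN : Tendsto (fun n => (s : ℝ) / N n) atTop (nhds 0) := hNR.const_div_atTop _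
  have hle : ∀ᶠ n in atTop, r * M n + s ≤ N n := by
    have h1 : Tendsto (fun n => (r : ℝ) * ((M n : ℝ) / N n) + (s : ℝ) / N n) atTop (nhds 0) := by
      simpa using (hMN.const_mul (r : ℝ)).add hsN
    filter_upwards [h1.eventually_le_const (show (0 : ℝ) < 1 by norm_num),
      hN.eventually_ge_atTop 1] with n h h'
    have hpos : (0 : ℝ) < N n := by exact_mod_cast h'
    have : ((r : ℝ) * M n + s) / N n ≤ 1 := by
      refine le_trans (le_of_eq ?_) h
      ring
    rw [div_le_one hpos] at this
    exact_mod_cast this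
  have hp1 : ∀ᶠ n in atTop, p n ≤ 1 / 2 := hp.eventually_le_const (by norm_num)
  have hNM : Tendsto (fun n => N n - r * M n) atTop atTop := by
    rw [← tendsto_natCast_atTop_iff (R := ℝ)]
    have h1 : Tendsto (fun n => 1 - (r : ℝ) * ((M n : ℝ) / N n)) atTop (nhds 1) := by
      simpa using (hMN.const_mul (r : ℝ)).const_sub 1
    refine (hNR.atTop_mul_pos one_pos h1).congr' ?_
    filter_upwards [hle, hN.eventually_ge_atTop 1] with n h h'
    have hpos : (N n : ℝ) ≠ 0 := by positivity
    rw [Nat.cast_sub (by omega)]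
    push_cast
    field_simp
  have hratio : Tendsto (fun n => ((N n - r * M n).choose s : ℝ) / (N n).choose s) atTop
      (nhds 1) := by
    have a1 := choose_div_pow _ hNM s
    have a2 := choose_div_pow _ hN s
    have a3 : Tendsto (fun n => (1 - (r : ℝ) * ((M n : ℝ) / N n)) ^ s) atTop (nhds 1) := by
      have := ((hMN.const_mul (r : ℝ)).const_sub 1).pow s
      simpa using this
    have hs : (1 / (s.factorial : ℝ)) ≠ 0 := by positivity
    have a4 := (a1.div a2 hs).mul a3
    rw [div_self hs, one_mul] at a4
    refine a4.congr' ?_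
    filter_upwards [hle, hN.eventually_ge_atTop (s + 1), hNM.eventually_ge_atTop 1] with n h h' h3
    have hpos : (N n : ℝ) ≠ 0 := by
      have : 0 < N n := by omega
      positivity
    have hpos' : ((N n - r * M n : ℕ) : ℝ) ≠ 0 := by positivity
    have hch : ((N n).choose s : ℝ) ≠ 0 := by
      have := Nat.choose_pos (n := N n) (k := s) (by omega)
      positivity
    have e : 1 - (r : ℝ) * ((M n : ℝ) / N n) = ((N n - r * M n : ℕ) : ℝ) / N n := by
      rw [Nat.cast_sub (by omega)]
      push_cast
      field_simp
    simp only [Pi.div_apply]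
    rw [e, div_pow]
    field_simp
  have hpM' : ∀ a b : ℕ, Tendsto (fun n => (1 - p n) ^ (a * M n + b)) atTop (nhds 1) := by
    intro a b
    refine one_sub_pow_tendsto p (fun n => a * M n + b) hp0 hp ?_
    have := (hpM.const_mul (a : ℝ)).add (hp.mul_const (b : ℝ))
    simp only [mul_zero, zero_mul, add_zero] at this
    refine this.congr fun n => ?_
    push_cast
    ring
  have hmr := choose_div_pow m hm r
  refine ⟨hle, ?_, ?_, ?_⟩
  · have h1 : Tendsto (fun n => p n * N n + (-((r : ℝ) * (p n * M n)) - p n * s)) atTop atTop := by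
      refine hpN.atTop_add (C := 0) ?_
      simpa using ((hpM.const_mul (r : ℝ)).neg).sub (hp.mul_const (s : ℝ))
    filter_upwards [h1.eventually_ge_atTop ((s : ℝ) + 1)] with n h
    push_cast
    linarith
  · have h1 := (hq.mul hratio).div (hpM' 0 s) one_ne_zero
    have h2 := (hmr.mul ((hpM' (r * r) 0).mul (h1.pow r)))
    have e : 1 / (r.factorial : ℝ) * (1 * (lam * 1 / 1) ^ r) = lam ^ r / r.factorial := by
      simp; ring
    rw [e] at h2
    refine h2.congr' ?_
    filter_upwards [hle, hN.eventually_ge_atTop (s + 1), hm.eventually_ge_atTop 1, hp1] with n k1 k2 k3 k4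
    have hmp : (m n : ℝ) ≠ 0 := by positivity
    have hch : ((N n).choose s : ℝ) ≠ 0 := by
      have := Nat.choose_pos (n := N n) (k := s) (by omega)
      positivity
    have hq1 : (1 - p n) ≠ 0 := by linarith
    have hsplit : (1 - p n) ^ N n = (1 - p n) ^ (N n - s) * (1 - p n) ^ s := by
      rw [← pow_add]; congr 1; omega
    simp only [Pi.div_apply, zero_mul, zero_add, add_zero]
    rw [hsplit, mul_assoc r r]
    have e2 : (m n : ℝ) * (((N n).choose s : ℝ) * p n ^ s * ((1 - p n) ^ (N n - s) * (1 - p n) ^ s)) *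
        (((N n - r * M n).choose s : ℝ) / (N n).choose s) / (1 - p n) ^ s =
        m n * (((N n - r * M n).choose s : ℝ) * p n ^ s * (1 - p n) ^ (N n - s)) := by
      field_simp
    rw [e2, mul_pow]
    field_simp
  · have h1 := hq.div (hpM' r s) one_ne_zero
    have h2 := (hmr.mul (h1.pow r))
    have e : 1 / (r.factorial : ℝ) * ((lam / 1) ^ r) = lam ^ r / r.factorial := by
      simp; ring
    rw [e] at h2
    refine h2.congr' ?_
    filter_upwards [hle, hN.eventually_ge_atTop (s + 1), hm.eventually_ge_atTop 1, hp1] with n k1 k2 k3 k4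
    have hmp : (m n : ℝ) ≠ 0 := by positivity
    have hq1 : (1 - p n) ≠ 0 := by linarith
    have hsplit : (1 - p n) ^ N n = (1 - p n) ^ (N n - r * M n - s) * (1 - p n) ^ (r * M n + s) := by
      rw [← pow_add]; congr 1; omega
    simp only [Pi.div_apply]
    rw [hsplit]
    have e2 : (m n : ℝ) * (((N n).choose s : ℝ) * p n ^ s * ((1 - p n) ^ (N n - r * M n - s) *
        (1 - p n) ^ (r * M n + s))) / (1 - p n) ^ (r * M n + s) =
        m n * (((N n).choose s : ℝ) * p n ^ s * (1 - p n) ^ (N n - r * M n - s)) := by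
      field_simp
    rw [e2, mul_pow]
    field_simp

end PC

namespace PC

theorem params (k j s : ℕ) (hj : 1 ≤ j) (hjk : j + 1 ≤ k)
    (p c : ℕ → ℝ) (c0 : ℝ)
    (hc : Tendsto c atTop (nhds c0))
    (hp : ∀ n : ℕ, p n =
      ((j : ℝ) * Real.log n + (s : ℝ) * Real.log (Real.log n) + c n) /
        (n.choose (k - j) : ℝ)) (N M : ℕ → ℕ)
    (hN : ∀ n, N n = (n - j).choose (k - j)) (hM : ∀ n, M n = (n - (j + 1)).choose (k - (j + 1))) :
    Tendsto (fun n : ℕ => n.choose j) atTop atTop ∧ Tendsto N atTop atTop ∧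
    (∀ᶠ n in atTop, 0 ≤ p n) ∧ Tendsto p atTop (nhds 0) ∧
    Tendsto (fun n => p n * N n) atTop atTop ∧
    Tendsto (fun n => p n * M n) atTop (nhds 0) ∧
    Tendsto (fun n => (M n : ℝ) / N n) atTop (nhds 0) ∧
    Tendsto (fun n : ℕ => ((n.choose j : ℕ) : ℝ) * (((N n).choose s : ℝ) * p n ^ s * (1 - p n) ^ N n))
      atTop (nhds ((j : ℝ) ^ s * Real.exp (-c0) /
          ((Nat.factorial j : ℝ) * (Nat.factorial s : ℝ)))) := by
  obtain ⟨d, hd⟩ : ∃ d, k = j + 1 + d := ⟨k - (j + 1), by omega⟩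
  have hd1 : k - j = d + 1 := by omega
  have hd2 : k - (j + 1) = d := by omega
  rw [hd1] at hN hp
  rw [hd2] at hM
  clear hd hd1 hd2 hjk
  have hj0 : (0 : ℝ) < j := by exact_mod_cast hj
  have hlarge : ∀ n d' : ℕ, d' + 1 ≤ n → n ≤ n.choose (d' + 1) * (d' + 1) := by
    intro n d' h
    obtain ⟨m, rfl⟩ : ∃ m, n = m + 1 := ⟨n - 1, by omega⟩
    rw [← Nat.add_one_mul_choose_eq]
    exact Nat.le_mul_of_pos_right _ (Nat.choose_pos (by omega))
  have hchoose : ∀ d' : ℕ, Tendsto (fun n : ℕ => n.choose (d' + 1)) atTop atTop := by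
    intro d'
    rw [tendsto_atTop]
    intro b
    filter_upwards [eventually_ge_atTop (b * (d' + 1) + d' + 1)] with n hn
    have := hlarge n d' (by nlinarith)
    by_contra hlt
    push Not at hlt
    have : n.choose (d' + 1) * (d' + 1) ≤ b * (d' + 1) := Nat.mul_le_mul_right _ hlt.le
    omega
  -- the numerator
  set y : ℕ → ℝ := fun n => (j : ℝ) * Real.log n + (s : ℝ) * Real.log (Real.log n) + c n with hy
  have hnR : Tendsto (fun n : ℕ => (n : ℝ)) atTop atTop := tendsto_natCast_atTop_atTop
  have hlog : Tendsto (fun n : ℕ => Real.log n) atTop atTop := Real.tendsto_log_atTop.comp hnR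
  have hyl : Tendsto (fun n => y n / Real.log n) atTop (nhds (j : ℝ)) := by
    have h1 : Tendsto (fun n : ℕ => Real.log (Real.log n) / Real.log n) atTop (nhds 0) :=
      (Real.isLittleO_log_id_atTop.tendsto_div_nhds_zero).comp hlog
    have h2 : Tendsto (fun n : ℕ => c n / Real.log n) atTop (nhds 0) := hc.div_atTop hlog
    have h3 := ((h1.const_mul (s : ℝ)).const_add (j : ℝ)).add h2
    simp only [mul_zero, add_zero] at h3
    refine h3.congr' ?_
    filter_upwards [hlog.eventually_gt_atTop 0] with n hn
    simp only [hy]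
    field_simp
  have hyinf : Tendsto y atTop atTop := by
    refine (hlog.atTop_mul_pos hj0 hyl).congr' ?_
    filter_upwards [hlog.eventually_gt_atTop 0] with n hn
    field_simp
  have hl2 : Tendsto (fun n : ℕ => Real.log n ^ 2 / n) atTop (nhds 0) :=
    ((Real.isLittleO_pow_log_id_atTop (n := 2)).tendsto_div_nhds_zero).comp hnR
  have hy2 : Tendsto (fun n => y n ^ 2 / n) atTop (nhds 0) := by
    have h1 := (hyl.pow 2).mul hl2
    rw [mul_zero] at h1
    refine h1.congr' ?_
    filter_upwards [hlog.eventually_gt_atTop 0] with n hn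
    field_simp
  have hy1 : Tendsto (fun n => y n / n) atTop (nhds 0) := by
    have h1 := hy2.div_atTop hyinf
    refine h1.congr' ?_
    filter_upwards [hyinf.eventually_gt_atTop 0] with n hn
    field_simp
  have hB : ∀ᶠ n : ℕ in atTop, (0 : ℝ) < n.choose (d + 1) ∧
      (n : ℝ) ≤ n.choose (d + 1) * (d + 1) := by
    filter_upwards [eventually_ge_atTop (d + 1)] with n hn
    refine ⟨by exact_mod_cast Nat.choose_pos hn, by exact_mod_cast hlarge n d hn⟩
  have hp0 : ∀ᶠ n in atTop, 0 ≤ p n := by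
    filter_upwards [hB, hyinf.eventually_gt_atTop 0] with n h1 h2
    rw [hp]
    exact div_nonneg h2.le h1.1.le
  have hpup : ∀ᶠ n in atTop, p n ≤ (d + 1) * (y n / n) := by
    filter_upwards [hB, hyinf.eventually_gt_atTop 0, eventually_gt_atTop 0] with n h1 h2 h3
    have h3' : (0 : ℝ) < n := by exact_mod_cast h3
    rw [hp, ← mul_div_assoc, div_le_div_iff₀ h1.1 h3']
    have := mul_le_mul_of_nonneg_left h1.2 h2.le
    calc _ ≤ _ := this
      _ = _ := by ring
  have hpt : Tendsto p atTop (nhds 0) := by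
    refine tendsto_of_tendsto_of_tendsto_of_le_of_le' tendsto_const_nhds ?_ hp0 hpup
    simpa using hy1.const_mul ((d : ℝ) + 1)
  -- N versus B
  have hNB : ∀ᶠ n in atTop, y n - p n * N n ≤ ((d + 1) * (j + d + 1)) * (y n / n) ∧
      0 ≤ y n - p n * N n := by
    filter_upwards [hB, hyinf.eventually_gt_atTop 0, eventually_gt_atTop (j + d + 1)]
      with n h1 h2 h3
    have h3' : (0 : ℝ) < n := by
      have : 0 < n := by omega
      exact_mod_cast this
    have hpB : y n = p n * n.choose (d + 1) := by
      rw [hp]; exact (div_mul_cancel₀ _ h1.1.ne').symm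
    have hle : (N n : ℝ) ≤ n.choose (d + 1) := by
      rw [hN]; exact_mod_cast Nat.choose_le_choose _ (by omega)
    have hppos : 0 ≤ p n := by rw [hp]; exact div_nonneg h2.le h1.1.le
    have hf : (0 : ℝ) < (d + 1).factorial := by positivity
    have l1 : ((n - (j + d + 1) : ℕ) : ℝ) ^ (d + 1) ≤ (d + 1).factorial * N n := by
      have := Nat.pow_sub_le_descFactorial (n - j) (d + 1)
      rw [Nat.descFactorial_eq_factorial_mul_choose, ← hN] at this
      have h4 : (n - (j + d + 1)) ^ (d + 1) ≤ (n - j + 1 - (d + 1)) ^ (d + 1) :=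
        Nat.pow_le_pow_left (by omega) _
      exact_mod_cast h4.trans this
    have l2 : ((d + 1).factorial : ℝ) * n.choose (d + 1) ≤ (n : ℝ) ^ (d + 1) := by
      have := Nat.descFactorial_le_pow n (d + 1)
      rw [Nat.descFactorial_eq_factorial_mul_choose] at this
      exact_mod_cast this
    have hb := one_add_mul_le_pow (a := -((j + d + 1 : ℝ) / n)) (by
      have : (j + d + 1 : ℝ) / n ≤ 1 := by
        rw [div_le_one h3']
        exact_mod_cast h3.le
      linarith) (d + 1)
    have l3 : ((n - (j + d + 1) : ℕ) : ℝ) = n * (1 + -((j + d + 1 : ℝ) / n)) := by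
      rw [Nat.cast_sub h3.le]
      push_cast
      field_simp
      ring
    rw [l3, mul_pow] at l1
    -- B (1 - (d+1)(j+d+1)/n) ≤ N
    have l4 : (n.choose (d + 1) : ℝ) * (1 + -((j + d + 1 : ℝ) / n)) ^ (d + 1) ≤ N n := by
      have hnn : 0 ≤ (1 + -((j + d + 1 : ℝ) / n)) ^ (d + 1) := by
        have : (j + d + 1 : ℝ) / n ≤ 1 := by
          rw [div_le_one h3']
          exact_mod_cast h3.le
        exact pow_nonneg (by linarith) _
      have l5 := mul_le_mul_of_nonneg_right l2 hnn
      have l6 := l5.trans l1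
      rw [mul_assoc] at l6
      exact le_of_mul_le_mul_left l6 hf
    have l7 := (mul_le_mul_of_nonneg_left hb h1.1.le).trans l4
    constructor
    · have l8 := mul_le_mul_of_nonneg_left l7 hppos
      rw [← mul_assoc, ← hpB] at l8
      push_cast at l8
      have e : ((d + 1 : ℝ) * (j + d + 1)) * (y n / n) =
        y n * ((d + 1 : ℝ) * ((j + d + 1 : ℝ) / n)) := by ring
      rw [e]
      linarith
    · have := mul_le_mul_of_nonneg_left hle hppos
      rw [hpB]; linarith
  have hyN : Tendsto (fun n => y n - p n * N n) atTop (nhds 0) := by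
    refine tendsto_of_tendsto_of_tendsto_of_le_of_le' tendsto_const_nhds ?_
      (hNB.mono fun n h => h.2) (hNB.mono fun n h => h.1)
    simpa using hy1.const_mul (((d : ℝ) + 1) * (j + d + 1))
  have hNt : Tendsto N atTop atTop := by
    have := (hchoose d).comp (tendsto_sub_atTop_nat j)
    exact this.congr fun n => (hN n).symm
  have hpN : Tendsto (fun n => p n * N n) atTop atTop := by
    have h1 := hyinf.atTop_add hyN.neg
    refine h1.congr fun n => ?_
    ring
  have hMN : Tendsto (fun n => (M n : ℝ) / N n) atTop (nhds 0) := by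
    have h1 : Tendsto (fun n : ℕ => ((d + 1 : ℝ)) / ((n - j : ℕ) : ℝ)) atTop (nhds 0) :=
      (hnR.comp (tendsto_sub_atTop_nat j)).const_div_atTop _
    refine h1.congr' ?_
    filter_upwards [hNt.eventually_gt_atTop 0, eventually_gt_atTop j] with n h1 h2
    have e : (n - j) * M n = N n * (d + 1) := by
      rw [hN, hM]
      have := Nat.add_one_mul_choose_eq (n - (j + 1)) d
      rw [show n - (j + 1) + 1 = n - j by omega] at this
      exact this
    have e' : ((n - j : ℕ) : ℝ) * M n = N n * (d + 1) := by exact_mod_cast e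
    have a1 : (N n : ℝ) ≠ 0 := by positivity
    have a2 : ((n - j : ℕ) : ℝ) ≠ 0 := by
      have : 0 < n - j := by omega
      positivity
    rw [div_eq_div_iff a2 a1]
    linarith
  have hpM : Tendsto (fun n => p n * M n) atTop (nhds 0) := by
    have h1 : Tendsto (fun n : ℕ => ((d + 1 : ℝ)) * ((y n / n) * (n / ((n - j : ℕ) : ℝ)))) atTop
        (nhds 0) := by
      have h2 : Tendsto (fun n : ℕ => (n : ℝ) / ((n - j : ℕ) : ℝ)) atTop (nhds 1) := by
        have h3 : Tendsto (fun n : ℕ => 1 + (j : ℝ) / ((n - j : ℕ) : ℝ)) atTop (nhds (1 + 0)) :=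
          ((hnR.comp (tendsto_sub_atTop_nat j)).const_div_atTop _).const_add 1
        rw [add_zero] at h3
        refine h3.congr' ?_
        filter_upwards [eventually_gt_atTop j] with n h2
        have : (0 : ℝ) < n - j := by
          have : (j : ℝ) < n := by exact_mod_cast h2
          linarith
        rw [Nat.cast_sub h2.le]
        field_simp
        ring
      simpa using (hy1.mul h2).const_mul ((d : ℝ) + 1)
    refine tendsto_of_tendsto_of_tendsto_of_le_of_le' tendsto_const_nhds h1
      (hp0.mono fun n h => by positivity) ?_
    filter_upwards [hNB, hp0, eventually_gt_atTop j] with n h1 h0 h2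
    have e : (n - j) * M n = N n * (d + 1) := by
      rw [hN, hM]
      have := Nat.add_one_mul_choose_eq (n - (j + 1)) d
      rw [show n - (j + 1) + 1 = n - j by omega] at this
      exact this
    have e' : ((n - j : ℕ) : ℝ) * M n = N n * (d + 1) := by exact_mod_cast e
    have a2 : (0 : ℝ) < ((n - j : ℕ) : ℝ) := by
      have : 0 < n - j := by omega
      positivity
    have a3 : (0 : ℝ) < n := by
      have : 0 < n := by omega
      positivity
    have e3 : ((d + 1 : ℝ)) * ((y n / n) * (n / ((n - j : ℕ) : ℝ))) =
        (d + 1) * y n / ((n - j : ℕ) : ℝ) := by field_simp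
    rw [e3, le_div_iff₀ a2]
    have : p n * M n * ((n - j : ℕ) : ℝ) = (d + 1) * (p n * N n) := by
      linear_combination (p n) * e'
    rw [this]
    exact mul_le_mul_of_nonneg_left (by linarith [h1.2]) (by positivity)
  -- N p ^ 2 → 0
  have hNp2 : Tendsto (fun n => N n * p n ^ 2) atTop (nhds 0) := by
    have h1 : Tendsto (fun n => ((d : ℝ) + 1) * (y n ^ 2 / n)) atTop (nhds 0) := by
      simpa using hy2.const_mul ((d : ℝ) + 1)
    refine tendsto_of_tendsto_of_tendsto_of_le_of_le' tendsto_const_nhds h1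
      (Eventually.of_forall fun n => by positivity) ?_
    filter_upwards [hNB, hp0, hpup, hyinf.eventually_gt_atTop 0] with n h1 h0 h2 h3
    calc (N n : ℝ) * p n ^ 2 = (p n * N n) * p n := by ring
      _ ≤ y n * ((d + 1) * (y n / n)) :=
        mul_le_mul (by linarith [h1.2]) h2 h0 h3.le
      _ = _ := by ring
  have hNlog : Tendsto (fun n => N n * Real.log (1 - p n) + y n) atTop (nhds 0) := by
    have h1 : Tendsto (fun n => N n * (Real.log (1 - p n) + p n)) atTop (nhds 0) := by
      have h2 : Tendsto (fun n => 2 * (N n * p n ^ 2)) atTop (nhds 0) := by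
        simpa using hNp2.const_mul 2
      refine squeeze_zero_norm' ?_ h2
      filter_upwards [hp0, hpt.eventually_le_const (show (0 : ℝ) < 1 / 2 by norm_num)]
        with n h3 h4
      have h5 := Real.abs_log_sub_add_sum_range_le (x := p n)
        (by rw [abs_of_nonneg h3]; linarith) 1
      simp only [Finset.sum_range_one, abs_of_nonneg h3] at h5
      norm_num at h5
      rw [Real.norm_eq_abs, abs_mul, Nat.abs_cast]
      have h6 : p n ^ 2 / (1 - p n) ≤ 2 * p n ^ 2 := by
        rw [div_le_iff₀ (by linarith)]
        nlinarith [sq_nonneg (p n)]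
      have h7 : |Real.log (1 - p n) + p n| ≤ 2 * p n ^ 2 := by
        rw [add_comm]; exact h5.trans h6
      calc _ ≤ (N n : ℝ) * (2 * p n ^ 2) := mul_le_mul_of_nonneg_left h7 (by positivity)
        _ = _ := by ring
    have h2 := h1.add hyN
    rw [add_zero] at h2
    refine h2.congr fun n => ?_
    ring
  have hjc : Tendsto (fun n : ℕ => n.choose j) atTop atTop := by
    obtain ⟨j', rfl⟩ : ∃ j', j = j' + 1 := ⟨j - 1, by omega⟩
    exact hchoose j'
  refine ⟨hjc, hNt, hp0, hpt, hpN, hpM, hMN, ?_⟩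
  have t1 := choose_div_pow (fun n => n) tendsto_id j
  have t2 := choose_div_pow N hNt s
  have t3 : Tendsto (fun n => (p n * N n / Real.log n) ^ s) atTop (nhds ((j : ℝ) ^ s)) := by
    have h1 := (hyl.sub (hyN.div_atTop hlog)).pow s
    rw [sub_zero] at h1
    refine h1.congr fun n => ?_
    congr 1
    ring
  have t4 : Tendsto (fun n => Real.exp (N n * Real.log (1 - p n) + y n)) atTop (nhds 1) := by
    have := (Real.continuous_exp.tendsto 0).comp hNlog
    rwa [Real.exp_zero] at this
  have t5 : Tendsto (fun n => Real.exp (-c n)) atTop (nhds (Real.exp (-c0))) :=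
    (Real.continuous_exp.tendsto _).comp hc.neg
  have t6 := (((t1.mul t2).mul t3).mul t4).mul t5
  have e : 1 / (j.factorial : ℝ) * (1 / s.factorial) * (j : ℝ) ^ s * 1 * Real.exp (-c0) =
      (j : ℝ) ^ s * Real.exp (-c0) / ((Nat.factorial j : ℝ) * (Nat.factorial s : ℝ)) := by
    have h1 : (j.factorial : ℝ) ≠ 0 := by positivity
    have h2 : (s.factorial : ℝ) ≠ 0 := by positivity
    field_simp
  rw [e] at t6
  refine t6.congr' ?_
  filter_upwards [hlog.eventually_gt_atTop 0, eventually_gt_atTop 0,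
    hpt.eventually_le_const (show (0 : ℝ) < 1 / 2 by norm_num), hNt.eventually_gt_atTop 0]
    with n h1 h2 h3 h4
  have a1 : (0 : ℝ) < n := by exact_mod_cast h2
  have a2 : (N n : ℝ) ≠ 0 := by positivity
  have q1 : 0 < 1 - p n := by linarith
  have e1 : Real.exp (N n * Real.log (1 - p n) + y n) =
      (1 - p n) ^ N n * ((n : ℝ) ^ j * Real.log n ^ s * Real.exp (c n)) := by
    simp only [hy]
    rw [Real.exp_add, Real.exp_add, Real.exp_add, Real.exp_nat_mul, Real.exp_nat_mul,
      Real.exp_nat_mul, Real.exp_log q1, Real.exp_log a1, Real.exp_log h1]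
  rw [e1, Real.exp_neg, div_pow, mul_pow]
  have a3 := Real.exp_ne_zero (c n)
  field_simp

end PC

/-- **Theorem 2(ii).** For `k ≥ 3`, `1 ≤ j ≤ k-1`, a fixed integer `s ≥ 0`, and
`p = (j log n + s log log n + c_n)/C(n,k-j)` with `c_n → c`, the number `D_s` of `j`-sets of
degree exactly `s` in `H^k(n,p)` converges in distribution to `Po(j^s e^{-c}/(j! s!))`. -/
theorem poisson_convergence (k j s : ℕ) (hk : 3 ≤ k) (hj : 1 ≤ j) (hjk : j ≤ k - 1)
    (p c : ℕ → ℝ) (c0 : ℝ)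
    (hc : Tendsto c atTop (nhds c0))
    (hp : ∀ n : ℕ, p n =
      ((j : ℝ) * Real.log n + (s : ℝ) * Real.log (Real.log n) + c n) /
        (n.choose (k - j) : ℝ)) :
    ∀ i : ℕ,
      Tendsto (fun n : ℕ => binomProb n k (p n) (fun H => numDegSets n j s H = i)) atTop
        (nhds (poissonPMF ((j : ℝ) ^ s * Real.exp (-c0) /
          ((Nat.factorial j : ℝ) * (Nat.factorial s : ℝ))) i)) := by
  intro i
  have hjk' : j + 1 ≤ k := by omega
  obtain ⟨h1, h2, h3, h4, h5, h6, h7, h8⟩ := PC.params k j s hj hjk' p c c0 hc hp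
    (fun n => (n - j).choose (k - j)) (fun n => (n - (j + 1)).choose (k - (j + 1)))
    (fun _ => rfl) (fun _ => rfl)
  have hp1 : ∀ᶠ n in atTop, p n ≤ 1 := h4.eventually_le_const (by norm_num)
  refine PC.tendsto_of_moments _
    (fun n r => PC.Ex (p n) (kSets n k) (fun H => ((numDegSets n j s H).choose r : ℝ))) _ i ?_ ?_
  · intro r
    obtain ⟨a1, a2, a3, a4⟩ := PC.moment_limit _ _ _ p s r _ h1 h2 h3 h4 h5 h6 h7 h8
    refine tendsto_of_tendsto_of_tendsto_of_le_of_le' a3 a4 ?_ ?_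
    · filter_upwards [a1, a2, h3, hp1] with n b1 b2 b3 b4
      exact (PC.moment_bounds n k j s r _ _ (p n) b3 b4 hjk' rfl rfl b1 b2).1
    · filter_upwards [a1, a2, h3, hp1] with n b1 b2 b3 b4
      exact (PC.moment_bounds n k j s r _ _ (p n) b3 b4 hjk' rfl rfl b1 b2).2
  · intro T
    filter_upwards [h3, hp1] with n b3 b4
    exact PC.binomProb_bonf n k j s i T (p n) b3 b4

end
end

section
/- Let k ≥ 3 and 1 ≤ j ≤ k−1 be integers, let s ≥ 0 be a fixed integer, and suppose p = (j·log n + s·log log n + c_n)/C(n,k−j) where c_n = o(log n) and c_n → ∞. Let D_s be the number of j-sets of degree exactly s in H^k(n,p). Then with high probability D_s = 0. -/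
open Filter Asymptotics

open scoped Classical

noncomputable section

lemma sum_deg_weight {α : Type*} [DecidableEq α] (U : Finset α) (q : α → Prop) [DecidablePred q] (s : ℕ) (p : ℝ) :
    ∑ H ∈ U.powerset, (if (H.filter q).card = s then p ^ H.card * (1 - p) ^ (U.card - H.card) else 0)
      = ((U.filter q).card.choose s : ℝ) * (p ^ s * (1 - p) ^ ((U.filter q).card - s)) := by
  have hU : (U.filter q).card + (U.filter (fun x => ¬ q x)).card = U.card :=
    Finset.card_filter_add_card_filter_not (s := U) q
  have h1 : ∑ H ∈ U.powerset,
      (if (H.filter q).card = s then p ^ H.card * (1 - p) ^ (U.card - H.card) else 0)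
      = ∑ X ∈ (U.filter q).powerset ×ˢ (U.filter (fun x => ¬ q x)).powerset,
        (if X.1.card = s then p ^ X.1.card * (1 - p) ^ ((U.filter q).card - X.1.card) else 0) *
        (p ^ X.2.card * (1 - p) ^ ((U.filter (fun x => ¬ q x)).card - X.2.card)) := by
    refine Finset.sum_nbij' (fun H => (H.filter q, H.filter (fun x => ¬ q x)))
      (fun X => X.1 ∪ X.2) ?_ ?_ ?_ ?_ ?_
    · intro H hH
      simp only [Finset.mem_powerset, Finset.mem_product] at *
      exact ⟨Finset.filter_subset_filter _ hH, Finset.filter_subset_filter _ hH⟩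
    · intro X hX
      simp only [Finset.mem_powerset, Finset.mem_product] at *
      exact Finset.union_subset (hX.1.trans (Finset.filter_subset _ _))
        (hX.2.trans (Finset.filter_subset _ _))
    · intro H hH
      exact Finset.filter_union_filter_not_eq q H
    · rintro ⟨X, Y⟩ hX
      simp only [Finset.mem_powerset, Finset.mem_product, Finset.subset_iff, Finset.mem_filter] at hX
      ext x
      · simp only [Finset.mem_filter, Finset.mem_union]
        have := hX.1 (x := x); have := hX.2 (x := x); tauto
      · simp only [Finset.mem_filter, Finset.mem_union]
        have := hX.1 (x := x); have := hX.2 (x := x); tauto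
    · intro H hH
      rw [Finset.mem_powerset] at hH
      have e : (H.filter q).card + (H.filter (fun x => ¬ q x)).card = H.card :=
        Finset.card_filter_add_card_filter_not (s := H) q
      have l1 : (H.filter q).card ≤ (U.filter q).card :=
        Finset.card_le_card (Finset.filter_subset_filter _ hH)
      have l2 : (H.filter (fun x => ¬ q x)).card ≤ (U.filter (fun x => ¬ q x)).card :=
        Finset.card_le_card (Finset.filter_subset_filter _ hH)
      dsimp only
      split_ifs with hs
      · rw [show U.card - H.card = ((U.filter q).card - (H.filter q).card) +
          ((U.filter (fun x => ¬ q x)).card - (H.filter (fun x => ¬ q x)).card) by omega,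
          ← e, pow_add, pow_add]
        ring
      · simp
  rw [h1, Finset.sum_product]
  simp_rw [← Finset.mul_sum]
  rw [← Finset.sum_mul, Finset.sum_pow_mul_eq_add_pow]
  rw [show p + (1 - p) = 1 by ring, one_pow, mul_one, ← Finset.sum_filter]
  have h2 : (U.filter q).powerset.filter (fun H => H.card = s) = Finset.powersetCard s (U.filter q) := by
    ext H; simp [Finset.mem_powersetCard]
  rw [h2]
  rw [Finset.sum_congr rfl (g := fun _ => p ^ s * (1 - p) ^ ((U.filter q).card - s))]
  · rw [Finset.sum_const, Finset.card_powersetCard, nsmul_eq_mul]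
  · intro H hH
    rw [(Finset.mem_powersetCard.1 hH).2]

lemma card_edges_containing (n k j : ℕ) (hjk : j ≤ k) (J : Finset (Fin n)) (hJ : J.card = j) :
    ((kSets n k).filter (fun e => J ⊆ e)).card = (n - j).choose (k - j) := by
  have h : (Finset.powersetCard (k - j) (Finset.univ \ J)).card = (n - j).choose (k - j) := by
    rw [Finset.card_powersetCard, Finset.card_sdiff_of_subset (Finset.subset_univ _), hJ,
      Finset.card_univ, Fintype.card_fin]
  rw [← h]
  refine Finset.card_nbij' (fun e => e \ J) (fun e => e ∪ J) ?_ ?_ ?_ ?_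
  · intro e he
    simp only [kSets, Finset.coe_filter, Finset.mem_powersetCard, Set.mem_ofPred_eq, Finset.mem_coe] at *
    refine ⟨Finset.sdiff_subset_sdiff (Finset.subset_univ _) le_rfl, ?_⟩
    rw [Finset.card_sdiff_of_subset he.2, hJ, he.1.2]
  · intro e he
    simp only [kSets, Finset.coe_filter, Finset.mem_powersetCard, Set.mem_ofPred_eq, Finset.mem_coe] at *
    have hd : Disjoint e J := by
      have := he.1
      rw [Finset.subset_sdiff] at this
      exact this.2
    refine ⟨⟨Finset.subset_univ _, ?_⟩, Finset.subset_union_right⟩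
    rw [Finset.card_union_of_disjoint hd, hJ, he.2]; omega
  · intro e he
    simp only [kSets, Finset.coe_filter, Finset.mem_powersetCard, Set.mem_ofPred_eq] at he
    exact Finset.sdiff_union_of_subset he.2
  · intro e he
    simp only [Finset.mem_powersetCard, Finset.mem_coe] at he
    have hd : Disjoint e J := by
      have := he.1
      rw [Finset.subset_sdiff] at this
      exact this.2
    exact Finset.union_sdiff_cancel_right hd

lemma binomProb_lower (n k j s : ℕ) (hjk : j ≤ k) (p : ℝ) (h0 : 0 ≤ p) (h1 : p ≤ 1) :
    1 - (n.choose j : ℝ) * (((n - j).choose (k - j)).choose s *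
      (p ^ s * (1 - p) ^ ((n - j).choose (k - j) - s))) ≤
      binomProb n k p (fun H => numDegSets n j s H = 0) := by
  have tot : ∑ H ∈ (kSets n k).powerset, p ^ H.card * (1 - p) ^ ((kSets n k).card - H.card) = 1 := by
    rw [Finset.sum_pow_mul_eq_add_pow]; simp
  have key : ∑ J ∈ Finset.powersetCard j (Finset.univ : Finset (Fin n)),
      ∑ H ∈ (kSets n k).powerset, (if (H.filter (fun e => J ⊆ e)).card = s then
        p ^ H.card * (1 - p) ^ ((kSets n k).card - H.card) else 0)
      = (n.choose j : ℝ) * (((n - j).choose (k - j)).choose s *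
      (p ^ s * (1 - p) ^ ((n - j).choose (k - j) - s))) := by
    rw [Finset.sum_congr rfl (g := fun _ => (((n - j).choose (k - j)).choose s : ℝ) *
      (p ^ s * (1 - p) ^ ((n - j).choose (k - j) - s)))]
    · rw [Finset.sum_const, Finset.card_powersetCard, nsmul_eq_mul, Finset.card_univ,
        Fintype.card_fin]
    · intro J hJ
      rw [sum_deg_weight, card_edges_containing n k j hjk J (Finset.mem_powersetCard.1 hJ).2]
  rw [← key, Finset.sum_comm, sub_le_iff_le_add, binomProb, ← Finset.sum_add_distrib]
  refine tot.symm.le.trans ?_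
  refine Finset.sum_le_sum fun H hH => ?_
  have hw : 0 ≤ p ^ H.card * (1 - p) ^ ((kSets n k).card - H.card) :=
    mul_nonneg (pow_nonneg h0 _) (pow_nonneg (by linarith) _)
  have hnn : ∀ J ∈ Finset.powersetCard j (Finset.univ : Finset (Fin n)),
      0 ≤ (if (H.filter (fun e => J ⊆ e)).card = s then
        p ^ H.card * (1 - p) ^ ((kSets n k).card - H.card) else 0) := by
    intro J _; split_ifs
    · exact hw
    · exact le_rfl
  split_ifs with hD
  · have := Finset.sum_nonneg hnn
    linarith
  · rw [zero_add]
    obtain ⟨J, hJ⟩ := Finset.card_pos.1 (Nat.pos_of_ne_zero hD)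
    rw [Finset.mem_filter] at hJ
    have := Finset.single_le_sum hnn hJ.1
    rw [if_pos (show (H.filter (fun e => J ⊆ e)).card = s from hJ.2)] at this
    exact this

lemma binomProb_upper (n k : ℕ) (Q : Finset (Finset (Fin n)) → Prop)
    (p : ℝ) (h0 : 0 ≤ p) (h1 : p ≤ 1) : binomProb n k p Q ≤ 1 := by
  have tot : ∑ H ∈ (kSets n k).powerset, p ^ H.card * (1 - p) ^ ((kSets n k).card - H.card) = 1 := by
    rw [Finset.sum_pow_mul_eq_add_pow]; simp
  rw [← tot, binomProb]
  refine Finset.sum_le_sum fun H hH => ?_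
  have hw : 0 ≤ p ^ H.card * (1 - p) ^ ((kSets n k).card - H.card) :=
    mul_nonneg (pow_nonneg h0 _) (pow_nonneg (by linarith) _)
  split_ifs
  · exact le_rfl
  · exact hw

lemma choose_diff (m : ℕ) (n j : ℕ) :
    n.choose (m + 1) ≤ (n - j).choose (m + 1) + j * n.choose m := by
  induction j with
  | zero => simp
  | succ j ih =>
    refine ih.trans ?_
    rcases Nat.eq_zero_or_pos (n - j) with h | h
    · have e : n - (j + 1) = 0 := by omega
      rw [h, e]; nlinarith [Nat.zero_le (n.choose m)]
    · obtain ⟨a, ha⟩ : ∃ a, n - j = a + 1 := ⟨n - j - 1, by omega⟩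
      have e : n - (j + 1) = a := by omega
      rw [ha, e, Nat.choose_succ_succ]
      have : a.choose m ≤ n.choose m := Nat.choose_le_choose m (by omega)
      nlinarith

/-- The core deterministic estimate. -/
lemma expect_bound (n j m s : ℕ) (hn : 2 * (m + 1) ≤ n) (hn3 : 1 < Real.log n) (hj : 1 ≤ j)
    (p c lam K : ℝ)
    (hlam : lam = (j : ℝ) * Real.log n + (s : ℝ) * Real.log (Real.log n) + c)
    (hp : p = lam / (n.choose (m + 1) : ℝ)) (h0 : 0 ≤ lam) (hK : lam ≤ K * Real.log n)
    (hsmall : K * Real.log n * ((j + s) * (2 * (m + 1))) ≤ n) :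
    0 ≤ p ∧ p ≤ 1 ∧ (n.choose j : ℝ) * (((n - j).choose (m + 1)).choose s *
      (p ^ s * (1 - p) ^ ((n - j).choose (m + 1) - s))) ≤ K ^ s * Real.exp 1 * Real.exp (-c) := by
  set L := Real.log n with hL
  have hnpos : (0:ℝ) < n := by
    have : 0 < n := by omega
    exact_mod_cast this
  have hM : (0:ℝ) < n.choose (m + 1) := by
    exact_mod_cast Nat.choose_pos (by omega)
  have hp0 : 0 ≤ p := by rw [hp]; positivity
  have hA1 : (1:ℝ) ≤ n.choose m := by
    exact_mod_cast Nat.choose_pos (by omega : m ≤ n)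
  have hpM : p * n.choose (m + 1) = lam := by rw [hp]; field_simp
  -- p * C(n,m) * n ≤ lam * 2 (m+1)
  have hrat : (n.choose m : ℝ) * n ≤ 2 * (m + 1) * n.choose (m + 1) := by
    have h := Nat.choose_succ_right_eq n m
    have h2 : n ≤ 2 * (n - m) := by omega
    have : n.choose m * n ≤ 2 * (m + 1) * n.choose (m + 1) := by
      calc n.choose m * n ≤ n.choose m * (2 * (n - m)) := Nat.mul_le_mul_left _ h2
        _ = 2 * (n.choose m * (n - m)) := by ring
        _ = _ := by rw [← h]; ring
    exact_mod_cast this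
  have hpA : p * n.choose m * (j + s) ≤ 1 := by
    have h3 : p * n.choose m * n ≤ 2 * (m + 1) * lam := by
      calc p * n.choose m * n = p * (n.choose m * n) := by ring
        _ ≤ p * (2 * (m + 1) * n.choose (m + 1)) := by gcongr
        _ = 2 * (m + 1) * lam := by rw [← hpM]; ring
    have h4 : p * n.choose m * (j + s) * n ≤ 1 * n := by
      calc p * n.choose m * (j + s) * n = (p * n.choose m * n) * (j + s) := by ring
        _ ≤ (2 * (m + 1) * lam) * (j + s) := by gcongr
        _ ≤ (2 * (m + 1) * (K * L)) * (j + s) := by gcongr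
        _ = K * L * ((j + s) * (2 * (m + 1))) := by ring
        _ ≤ 1 * n := by rw [one_mul]; exact hsmall
    exact le_of_mul_le_mul_right h4 hnpos
  have hj1 : (1:ℝ) ≤ j := by exact_mod_cast hj
  have hs0 : (0:ℝ) ≤ s := by positivity
  have hp1 : p ≤ 1 := by
    refine le_trans ?_ hpA
    calc p = p * 1 * 1 := by ring
      _ ≤ p * n.choose m * (j + s) := by gcongr; linarith
  refine ⟨hp0, hp1, ?_⟩
  set N := (n - j).choose (m + 1) with hN
  have hNM : (N : ℝ) ≤ n.choose (m + 1) := by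
    exact_mod_cast Nat.choose_le_choose (m + 1) (by omega)
  have hNp : (N : ℝ) * p ≤ K * L := by
    calc (N : ℝ) * p ≤ n.choose (m + 1) * p := by gcongr
      _ = lam := by rw [← hpM]; ring
      _ ≤ _ := hK
  have hdiff : (n.choose (m + 1) : ℝ) ≤ N + j * n.choose m := by
    exact_mod_cast choose_diff m n j
  have hexp : (1 - p) ^ (N - s) ≤ Real.exp (1 - lam) := by
    have h5 : (1 - p) ^ (N - s) ≤ (Real.exp (-p)) ^ (N - s) := by
      refine pow_le_pow_left₀ (by linarith) ?_ _
      · have := Real.add_one_le_exp (-p); linarith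
    refine h5.trans ?_
    rw [← Real.exp_nat_mul, Real.exp_le_exp]
    have h6 : (N : ℝ) ≤ ((N - s : ℕ) : ℝ) + s := by
      have : N ≤ (N - s) + s := by omega
      exact_mod_cast this
    have h7 : lam ≤ p * (((N - s : ℕ) : ℝ) + s + j * n.choose m) := by
      rw [← hpM]; gcongr; linarith
    have h8 : p * s ≤ p * n.choose m * s := by
      nlinarith [mul_nonneg hp0 hs0]
    nlinarith
  have hcj : (n.choose j : ℝ) ≤ (n : ℝ) ^ j := by exact_mod_cast Nat.choose_le_pow n j
  have hcs : ((N.choose s : ℕ) : ℝ) ≤ (N : ℝ) ^ s := by exact_mod_cast Nat.choose_le_pow N s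
  have hq : 0 ≤ (1 - p) ^ (N - s) := pow_nonneg (by linarith) _
  have hLpos : 0 < L := by linarith
  have e1 : Real.exp (1 - lam) = Real.exp 1 * Real.exp (-c) * ((n:ℝ) ^ j)⁻¹ * (L ^ s)⁻¹ := by
    rw [show 1 - lam = 1 + -c + -(j * L) + -(s * Real.log L) by rw [hlam]; ring]
    rw [Real.exp_add, Real.exp_add, Real.exp_add, Real.exp_neg (j * L), Real.exp_neg (s * Real.log L),
      Real.exp_nat_mul, Real.exp_nat_mul, Real.exp_log hLpos, hL, Real.exp_log hnpos]
  calc (n.choose j : ℝ) * (N.choose s * (p ^ s * (1 - p) ^ (N - s)))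
      ≤ (n : ℝ) ^ j * ((N : ℝ) ^ s * (p ^ s * Real.exp (1 - lam))) := by gcongr
    _ = (n : ℝ) ^ j * ((N * p) ^ s * Real.exp (1 - lam)) := by rw [mul_pow]; ring
    _ ≤ (n : ℝ) ^ j * ((K * L) ^ s * Real.exp (1 - lam)) := by gcongr
    _ = K ^ s * Real.exp 1 * Real.exp (-c) := by
      rw [e1, mul_pow]
      field_simp

/-- **Theorem 2(i).** For `k ≥ 3`, `1 ≤ j ≤ k-1`, a fixed integer `s ≥ 0`, and
`p = (j log n + s log log n + c_n)/C(n,k-j)` with `c_n = o(log n)` and `c_n → ∞`,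
with high probability `D_s = 0` in `H^k(n,p)`. -/
theorem no_degree_s_sets (k j s : ℕ) (hk : 3 ≤ k) (hj : 1 ≤ j) (hjk : j ≤ k - 1)
    (p c : ℕ → ℝ)
    (hc : c =o[atTop] fun n : ℕ => Real.log n)
    (hcinf : Tendsto c atTop atTop)
    (hp : ∀ n : ℕ, p n =
      ((j : ℝ) * Real.log n + (s : ℝ) * Real.log (Real.log n) + c n) /
        (n.choose (k - j) : ℝ)) :
    Tendsto (fun n : ℕ => binomProb n k (p n) (fun H => numDegSets n j s H = 0)) atTop
      (nhds 1) := by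
  obtain ⟨m, hm⟩ : ∃ m, k - j = m + 1 := ⟨k - j - 1, by omega⟩
  have hlogtop : Tendsto (fun n : ℕ => Real.log n) atTop atTop :=
    Real.tendsto_log_atTop.comp tendsto_natCast_atTop_atTop
  have hlogo : (fun n : ℕ => Real.log n) =o[atTop] (fun n : ℕ => (n : ℝ)) :=
    Real.isLittleO_log_id_atTop.comp_tendsto tendsto_natCast_atTop_atTop
  set K : ℝ := j + s + 1 with hK
  have hKpos : 0 < K := by positivity
  set R : ℝ := K * ((j + s) * (2 * (m + 1))) with hR
  have hRpos : 0 < R := by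
    have : (1:ℝ) ≤ j := by exact_mod_cast hj
    positivity
  have hmain : ∀ᶠ n : ℕ in atTop, 0 ≤ p n ∧ p n ≤ 1 ∧
      (n.choose j : ℝ) * (((n - j).choose (m + 1)).choose s *
      ((p n) ^ s * (1 - p n) ^ ((n - j).choose (m + 1) - s))) ≤
        K ^ s * Real.exp 1 * Real.exp (-(c n)) := by
    filter_upwards [eventually_ge_atTop (2 * (m + 1)), hlogtop.eventually_gt_atTop 1,
      hcinf.eventually_ge_atTop 0, hc.def (zero_lt_one), hlogo.def (inv_pos.2 hRpos)]
      with n h1 h2 h3 h4 h5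
    have hLL0 : 0 ≤ Real.log (Real.log n) := Real.log_nonneg h2.le
    have hLL1 : Real.log (Real.log n) ≤ Real.log n := Real.log_le_self (by linarith)
    rw [one_mul, Real.norm_of_nonneg h3, Real.norm_of_nonneg (by linarith)] at h4
    rw [Real.norm_of_nonneg (by linarith), Real.norm_of_nonneg (by positivity)] at h5
    have hs0 : (0:ℝ) ≤ s := by positivity
    refine expect_bound n j m s h1 h2 hj (p n) (c n) _ K rfl (by rw [hp n, hm]) ?_ ?_ ?_
    · positivity
    · have := mul_le_mul_of_nonneg_left hLL1 hs0
      rw [hK]; linarith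
    · rw [inv_mul_eq_div, le_div_iff₀ hRpos] at h5
      calc _ = Real.log n * R := by rw [hR]; ring
        _ ≤ n := h5
  have hlim : Tendsto (fun n : ℕ => 1 - K ^ s * Real.exp 1 * Real.exp (-(c n))) atTop (nhds 1) := by
    have h := (Real.tendsto_exp_neg_atTop_nhds_zero.comp hcinf).const_mul (K ^ s * Real.exp 1)
    have h' := h.const_sub 1
    simpa using h'
  refine tendsto_of_tendsto_of_tendsto_of_le_of_le' hlim tendsto_const_nhds ?_ ?_
  · filter_upwards [hmain] with n hn
    have := binomProb_lower n k j s (by omega) (p n) hn.1 hn.2.1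
    rw [hm] at this
    linarith [hn.2.2]
  · filter_upwards [hmain] with n hn
    exact binomProb_upper n k _ (p n) hn.1 hn.2.1

end
end
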